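/- Let K be an algebraically closed field, let n >= 1, and let z in FPF_n(I_n). With respect to the reverse lexicographic term order on R_n, one has J^ss_z = init(I^ss_z) = init(I(X^ss_z)). -/

import Mathlib

namespace Paper

/-!
We model a permutation of the positive integers `{1, 2, 3, ...}` as an `Equiv.Perm ℕ`
that fixes `0`; all notions below refer only to positive inputs.
-/

/-- The rank `r_w(i,j) = #{a ∈ [i] : w(a) ∈ [j]}` of the `i × j` partial
permutation matrix of `w`, where `[k] = {1, ..., k}`. -/
def rnk (w : Equiv.Perm ℕ) (i j : ℕ) : ℕ :=
  ((Finset.Icc 1 i).filter fun a => w a ∈ Finset.Icc 1 j).card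

/-- Right descent set `Des_R(w) = {i ≥ 1 : w(i) > w(i+1)}`. -/
def DesR (w : Equiv.Perm ℕ) : Set ℕ := {i | 1 ≤ i ∧ w (i + 1) < w i}

/-- Left descent set `Des_L(w) = Des_R(w⁻¹)`. -/
def DesL (w : Equiv.Perm ℕ) : Set ℕ := DesR w⁻¹

/-- `S_∞`: permutations of the positive integers fixing all but finitely many points. -/
def SInfty : Set (Equiv.Perm ℕ) :=
  {w | w 0 = 0 ∧ Set.Finite {i : ℕ | w i ≠ i}}

/-- `S^{m,n}_∞ = {w ∈ S_∞ : Des_R(w) ⊆ [m], Des_L(w) ⊆ [n]}`. -/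
def SmnInfty (m n : ℕ) : Set (Equiv.Perm ℕ) :=
  {w | w ∈ SInfty ∧ DesR w ⊆ Set.Icc 1 m ∧ DesL w ⊆ Set.Icc 1 n}

/-- The Rothe diagram `D(w) = {(i,j) : 0 < j < w(i), 0 < i < w⁻¹(j)}`. -/
def Rothe (w : Equiv.Perm ℕ) : Set (ℕ × ℕ) :=
  {p | 0 < p.2 ∧ p.2 < w p.1 ∧ 0 < p.1 ∧ p.1 < w⁻¹ p.2}

/-- The function `1_FPF`, sending `i ↦ i - (-1)^i` on positive integers (it fixes `0`). -/
def oneFPF : ℕ → ℕ := fun i => if i % 2 = 1 then i + 1 else i - 1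

/-- `I^FPF_∞`: fixed-point-free involutions of the positive integers agreeing with
`1_FPF` at all sufficiently large inputs. -/
def IFPFInfty : Set (Equiv.Perm ℕ) :=
  {z | z 0 = 0 ∧ (∀ i, 1 ≤ i → z i ≠ i) ∧ z * z = 1 ∧ ∃ N, ∀ i, N ≤ i → z i = oneFPF i}

/-- The skew-symmetric Rothe diagram `D^ss(z) = {(i,j) : 0 < j < z(i), j < i < z(j)}`. -/
def Dss (z : Equiv.Perm ℕ) : Set (ℕ × ℕ) :=
  {p | 0 < p.2 ∧ p.2 < z p.1 ∧ p.2 < p.1 ∧ p.1 < z p.2}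

/-- `FPF_n(I_n) = {z ∈ I^FPF_∞ : D^ss(z) ⊆ [n] × [n]}`. -/
def FPFIn (n : ℕ) : Set (Equiv.Perm ℕ) :=
  {z | z ∈ IFPFInfty ∧ Dss z ⊆ Set.Icc 1 n ×ˢ Set.Icc 1 n}

/-- `ℓ_fpf(z) = |D^ss(z)|`. -/
noncomputable def ellFpf (z : Equiv.Perm ℕ) : ℕ := (Dss z).ncard

/-- Bruhat order on `I^FPF_∞`: reflexive-transitive closure of `z < (i,j) z (i,j)`
whenever `i < j` and `ℓ_fpf` goes up by exactly one. -/
def fpfBruhatLe (z y : Equiv.Perm ℕ) : Prop :=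
  Relation.ReflTransGen
    (fun a b => ∃ i j : ℕ, 1 ≤ i ∧ i < j ∧
      b = Equiv.swap i j * a * Equiv.swap i j ∧ ellFpf b = ellFpf a + 1) z y

/-- `i` is a visible descent of `z` if `i ≥ 1` and `z(i+1) < min(i, z(i))`. -/
def visibleDescent (z : Equiv.Perm ℕ) (i : ℕ) : Prop :=
  1 ≤ i ∧ z (i + 1) < min i (z i)

/-- `Ψ(z, p) = {(p,r) z (p,r) : r > p, ℓ_fpf((p,r) z (p,r)) = ℓ_fpf(z) + 1}`. -/
def PsiSet (z : Equiv.Perm ℕ) (p : ℕ) : Set (Equiv.Perm ℕ) :=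
  {y | ∃ r : ℕ, p < r ∧ y = Equiv.swap p r * z * Equiv.swap p r ∧ ellFpf y = ellFpf z + 1}

/-- The dominant component `dom(z) = {(i,j) : i, j ≥ 1, r_z(i,j) = 0}`. -/
def domSet (z : Equiv.Perm ℕ) : Set (ℕ × ℕ) :=
  {p | 1 ≤ p.1 ∧ 1 ≤ p.2 ∧ rnk z p.1 p.2 = 0}

/-- `(p, q)` is an outer corner of `dom(z)`. -/
def IsOuterCorner (z : Equiv.Perm ℕ) (p q : ℕ) : Prop :=
  1 ≤ p ∧ 1 ≤ q ∧ (p, q) ∉ domSet z ∧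
    (p = 1 ∨ (p - 1, q) ∈ domSet z) ∧ (q = 1 ∨ (p, q - 1) ∈ domSet z)

/-- `I_n`: involutions in `S_∞` fixing every `i > n`. -/
def InvolIn (n : ℕ) : Set (Equiv.Perm ℕ) :=
  {w | w 0 = 0 ∧ w * w = 1 ∧ ∀ i, n < i → w i = i}

/-- The fixed points of `z` lying in `[n]`. -/
def fixedPtsIn (n : ℕ) (z : Equiv.Perm ℕ) : Finset ℕ :=
  (Finset.Icc 1 n).filter fun i => z i = i

/-- The function swapping `m + 2t - 1` and `m + 2t` for every `t ≥ 1`, fixing all other points. -/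
def tailSwapFun (m : ℕ) : ℕ → ℕ := fun i =>
  if i ≤ m then i else if (i - m) % 2 = 1 then i + 1 else i - 1

theorem tailSwapFun_involutive (m : ℕ) : Function.Involutive (tailSwapFun m) := by
  intro i
  unfold tailSwapFun
  split_ifs <;> omega

/-- The involution swapping `m + 2t - 1` and `m + 2t` for every `t ≥ 1`. -/
def tailSwap (m : ℕ) : Equiv.Perm ℕ :=
  Function.Involutive.toPerm _ (tailSwapFun_involutive m)

/-- The fixed-point-free standardization `FPF_n(z) = z ⋅ (i_1,n+1)⋯(i_k,n+k) ⋅ c`,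
where `i_1 < ⋯ < i_k` are the fixed points of `z` in `[n]` and `c` swaps
`n+k+2t-1, n+k+2t` for all `t ≥ 1`. -/
noncomputable def fpfStd (n : ℕ) (z : Equiv.Perm ℕ) : Equiv.Perm ℕ :=
  z *
    (List.ofFn fun t : Fin (fixedPtsIn n z).card =>
      Equiv.swap ((fixedPtsIn n z).orderEmbOfFin rfl t) (n + (t : ℕ) + 1)).prod *
    tailSwap (n + (fixedPtsIn n z).card)

/-- `Mat^ss_n(K)`: skew-symmetric `n × n` matrices (transpose is the negative, zero diagonal).
Row/column index `a : Fin n` corresponds to the (1-indexed) row/column `a + 1`. -/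
def MatSS (K : Type*) [CommRing K] (n : ℕ) : Set (Matrix (Fin n) (Fin n) K) :=
  {A | A.transpose = -A ∧ ∀ i, A i i = 0}

/-- The skew-symmetric matrix Schubert variety
`X^ss_z = {A ∈ Mat^ss_n : rank A_{[i][j]} ≤ r_z(i,j) for all i, j ∈ [n]}`. -/
noncomputable def Xss (K : Type*) [Field K] (n : ℕ) (z : Equiv.Perm ℕ) :
    Set (Matrix (Fin n) (Fin n) K) :=
  {A | A ∈ MatSS K n ∧ ∀ (i j : ℕ) (hi : i ≤ n) (hj : j ≤ n), 1 ≤ i → 1 ≤ j →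
    (A.submatrix (Fin.castLE hi) (Fin.castLE hj)).rank ≤ rnk z i j}

/-- `#{(i,j) : i > j, j < z(i), i < z(j)}` for a permutation of `Fin N`
(the `0`-indexed version of `ℓ_fpf`). -/
def ellFpfFin {N : ℕ} (z : Equiv.Perm (Fin N)) : ℕ :=
  (Finset.univ.filter fun p : Fin N × Fin N => p.2 < p.1 ∧ p.2 < z p.1 ∧ p.1 < z p.2).card

/-- The Pfaffian of an `N × N` matrix:
`pf(A) = ∑_{z fpf involution of [N]} (-1)^{ℓ_fpf(z)} ∏_{z(i) < i} A_{z(i), i}`.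
(The sum is empty, hence `0`, when `N` is odd.) -/
noncomputable def Pfaffian {R : Type*} [CommRing R] {N : ℕ} (A : Matrix (Fin N) (Fin N) R) : R :=
  ∑ z ∈ Finset.univ.filter (fun z : Equiv.Perm (Fin N) => (∀ i, z i ≠ i) ∧ ∀ i, z (z i) = i),
    (-1 : R) ^ ellFpfFin z * ∏ i ∈ Finset.univ.filter (fun i : Fin N => z i < i), A (z i) i

/-- Index set for the variables `u_{ij}`, `n ≥ i > j ≥ 1`, of the coordinate ring
`R_n = K[Mat^ss_n]`; the variable `⟨(a, b), _⟩` is `u_{a+1, b+1}`. -/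
abbrev SSVar (n : ℕ) : Type := {p : Fin n × Fin n // p.2 < p.1}

/-- The generic skew-symmetric matrix `U^ss` over `R_n`. -/
noncomputable def Uss (K : Type*) [CommRing K] (n : ℕ) :
    Matrix (Fin n) (Fin n) (MvPolynomial (SSVar n) K) :=
  Matrix.of fun i j =>
    if h : j < i then MvPolynomial.X ⟨(i, j), h⟩
    else if h' : i < j then -MvPolynomial.X ⟨(j, i), h'⟩
    else 0

/-- The ideal of polynomials vanishing on a set `X`, where a point `A` is evaluated
via `ev A : σ → K`. -/
noncomputable def vanishingIdeal {K : Type*} [CommRing K] {σ M : Type*}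
    (X : Set M) (ev : M → σ → K) : Ideal (MvPolynomial σ K) where
  carrier := {f | ∀ A ∈ X, MvPolynomial.eval (ev A) f = 0}
  zero_mem' := by simp
  add_mem' := by
    intro f g hf hg
    simp only [Set.mem_setOf_eq] at *
    intro A hA
    rw [map_add, hf A hA, hg A hA, add_zero]
  smul_mem' := by
    intro c f hf
    simp only [Set.mem_setOf_eq] at *
    intro A hA
    rw [smul_eq_mul, map_mul, hf A hA, mul_zero]

/-- `I(X^ss_z) ⊆ R_n`, where `u_{ij}` is evaluated at `A` as `A_{ij}`. -/
noncomputable def IXss (K : Type*) [Field K] (n : ℕ) (z : Equiv.Perm ℕ) :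
    Ideal (MvPolynomial (SSVar n) K) :=
  vanishingIdeal (Xss K n z) fun A v => A v.1.1 v.1.2

/-- `pf(U^ss_{RR})` for a finite row/column set `R` (listed in increasing order). -/
noncomputable def pfUss (K : Type*) [CommRing K] {n : ℕ} (R : Finset (Fin n)) :
    MvPolynomial (SSVar n) K :=
  Pfaffian ((Uss K n).submatrix (fun s => R.orderEmbOfFin rfl s) fun t => R.orderEmbOfFin rfl t)

/-- The ideal `I^ss_z`, generated by the Pfaffians `pf(U^ss_{RR})` over all nonempty
even-size `R ⊆ [n]` such that `R ⊆ [i]` and `|R ∩ [j]| > r_z(i,j)` for some `i ≥ j`. -/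
noncomputable def IssIdeal (K : Type*) [Field K] (n : ℕ) (z : Equiv.Perm ℕ) :
    Ideal (MvPolynomial (SSVar n) K) :=
  Ideal.span {f : MvPolynomial (SSVar n) K | ∃ R : Finset (Fin n),
    R.Nonempty ∧ Even R.card ∧
    (∃ i j : ℕ, 1 ≤ j ∧ j ≤ i ∧ i ≤ n ∧ (∀ a ∈ R, (a : ℕ) + 1 ≤ i) ∧
      rnk z i j < (R.filter fun a : Fin n => (a : ℕ) + 1 ≤ j).card) ∧
    f = pfUss K R}

/-- The square-free monomial `u^ss_{AB}`: zero if `A ⊙ B` meets the diagonal, and otherwise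
the product of the variables `u_{ij}` over the pairs `i > j` with `(i,j)` or `(j,i)` in
`A ⊙ B = {(a_0, b_r), (a_1, b_{r-1}), ..., (a_r, b_0)}`. -/
noncomputable def ussMon (K : Type*) [CommRing K] {n : ℕ} (A B : Finset (Fin n)) :
    MvPolynomial (SSVar n) K :=
  if h : A.card = B.card then
    if ∃ t : Fin A.card, (A.orderEmbOfFin rfl t : Fin n) = B.orderEmbOfFin h.symm t.rev then 0
    else
      ∏ v ∈ Finset.univ.filter (fun v : SSVar n => ∃ t : Fin A.card,
          (A.orderEmbOfFin rfl t = v.1.1 ∧ B.orderEmbOfFin h.symm t.rev = v.1.2) ∨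
          (A.orderEmbOfFin rfl t = v.1.2 ∧ B.orderEmbOfFin h.symm t.rev = v.1.1)),
        MvPolynomial.X v
  else 0

/-- The monomial ideal `J^ss_r` of a symmetric rank table `r`, generated by the monomials
`u^ss_{AB}` with `A ⊆ [i]`, `B ⊆ [j]`, `|A| = |B| = r(i,j) + 1` for some `n ≥ i ≥ j ≥ 1`. -/
noncomputable def JssIdealOfTable (K : Type*) [CommRing K] (n : ℕ) (r : ℕ → ℕ → ℕ) :
    Ideal (MvPolynomial (SSVar n) K) :=
  Ideal.span {g : MvPolynomial (SSVar n) K | ∃ (i j : ℕ) (A B : Finset (Fin n)),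
    1 ≤ j ∧ j ≤ i ∧ i ≤ n ∧
    (∀ a ∈ A, (a : ℕ) + 1 ≤ i) ∧ (∀ b ∈ B, (b : ℕ) + 1 ≤ j) ∧
    A.card = r i j + 1 ∧ B.card = r i j + 1 ∧ g = ussMon K A B}

/-- `J^ss_z = J^ss_{r_z}`. -/
noncomputable def JssIdeal (K : Type*) [CommRing K] (n : ℕ) (z : Equiv.Perm ℕ) :
    Ideal (MvPolynomial (SSVar n) K) :=
  JssIdealOfTable K n (rnk z)

/-- Total degree of a monomial (exponent vector). -/
def totalDeg {σ : Type*} (m : σ →₀ ℕ) : ℕ := m.sum fun _ e => e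

/-- The lexicographic order on the variables `u_{ij}` by the pair `(i, j)`. -/
def varLT {n : ℕ} (v w : SSVar n) : Prop :=
  v.1.1 < w.1.1 ∨ (v.1.1 = w.1.1 ∧ v.1.2 < w.1.2)

/-- The (graded) reverse lexicographic term order on monomials of `R_n`:
`m₁ < m₂` iff `deg m₁ < deg m₂`, or the degrees agree and the lexicographically largest
variable with different exponents has strictly larger exponent in `m₁`. -/
def revlexLT {n : ℕ} (m₁ m₂ : SSVar n →₀ ℕ) : Prop :=
  totalDeg m₁ < totalDeg m₂ ∨
    (totalDeg m₁ = totalDeg m₂ ∧ ∃ v, m₂ v < m₁ v ∧ ∀ w, varLT v w → m₁ w = m₂ w)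

/-- The initial ideal of `I` with respect to a strict term order `lt`: the ideal
generated by the leading monomials `init(f)` of the nonzero `f ∈ I`. -/
noncomputable def initIdeal {K : Type*} [CommRing K] {σ : Type*}
    (lt : (σ →₀ ℕ) → (σ →₀ ℕ) → Prop) (I : Ideal (MvPolynomial σ K)) :
    Ideal (MvPolynomial σ K) :=
  Ideal.span {g : MvPolynomial σ K | ∃ f ∈ I, f ≠ 0 ∧ ∃ m : σ →₀ ℕ, m ∈ f.support ∧
    (∀ m' ∈ f.support, m' ≠ m → lt m' m) ∧ g = MvPolynomial.monomial m (1 : K)}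

/-- A term order on the monomials of a polynomial ring: a linear order in which `1` is
the unique minimum and multiplication by a fixed monomial preserves order. -/
structure TermOrder (σ : Type*) where
  le : (σ →₀ ℕ) → (σ →₀ ℕ) → Prop
  trans : ∀ a b c, le a b → le b c → le a c
  antisymm : ∀ a b, le a b → le b a → a = b
  total : ∀ a b, le a b ∨ le b a
  zero_le : ∀ a, le 0 a
  add_le_add_right : ∀ a b c, le a b → le (a + c) (b + c)

/-- The initial ideal of `I` with respect to a term order `τ`. -/
noncomputable def initIdealLe {K : Type*} [CommRing K] {σ : Type*}
    (τ : TermOrder σ) (I : Ideal (MvPolynomial σ K)) : Ideal (MvPolynomial σ K) :=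
  Ideal.span {g : MvPolynomial σ K | ∃ f ∈ I, f ≠ 0 ∧ ∃ m : σ →₀ ℕ, m ∈ f.support ∧
    (∀ m' ∈ f.support, τ.le m' m) ∧ g = MvPolynomial.monomial m (1 : K)}

/-- An ideal is homogeneous (w.r.t. total degree) iff it contains all homogeneous
components of its elements. -/
def IsHomogIdeal {K : Type*} [CommSemiring K] {σ : Type*}
    (I : Ideal (MvPolynomial σ K)) : Prop :=
  ∀ f ∈ I, ∀ d : ℕ, MvPolynomial.homogeneousComponent d f ∈ I

/-- The reading order on boxes: rows top to bottom, each row right to left. -/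
def pdRel (p q : ℕ × ℕ) : Prop := p.1 < q.1 ∨ (p.1 = q.1 ∧ q.2 ≤ p.2)

instance : DecidableRel pdRel := fun p q => by unfold pdRel; infer_instance

instance : IsTrans (ℕ × ℕ) pdRel :=
  ⟨fun a b c hab hbc => by unfold pdRel at *; omega⟩

instance : IsAntisymm (ℕ × ℕ) pdRel :=
  ⟨fun a b hab hba => by
    unfold pdRel at hab hba
    exact Prod.ext_iff.mpr ⟨by omega, by omega⟩⟩

instance : IsTotal (ℕ × ℕ) pdRel :=
  ⟨fun a b => by unfold pdRel; omega⟩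

/-- The pipe dream reading word of a finite set `D` of boxes: the letters `i + j - 1`
over `(i, j) ∈ D`, in the order making `(i, -j)` increase lexicographically. -/
def pdWord (D : Finset (ℕ × ℕ)) : List ℕ :=
  (D.sort pdRel).map fun p => p.1 + p.2 - 1

/-- The product `s_{i_1} s_{i_2} ⋯ s_{i_l}` of simple transpositions. -/
def wordProd (l : List ℕ) : Equiv.Perm ℕ :=
  (l.map fun i => Equiv.swap i (i + 1)).prod

/-- `l` is a reduced word for `w`: a minimal-length word of positive letters whose
product of simple transpositions is `w`. -/
def IsReducedWordOf (w : Equiv.Perm ℕ) (l : List ℕ) : Prop :=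
  (∀ a ∈ l, 1 ≤ a) ∧ wordProd l = w ∧
    ∀ l' : List ℕ, (∀ a ∈ l', 1 ≤ a) → wordProd l' = w → l.length ≤ l'.length

/-- The set `RP(w)` of reduced pipe dreams for `w`. -/
def RP (w : Equiv.Perm ℕ) : Set (Finset (ℕ × ℕ)) :=
  {D | (∀ p ∈ D, 1 ≤ p.1 ∧ 1 ≤ p.2) ∧ IsReducedWordOf w (pdWord D)}

/-- `I^FPF_m`: involutions in `S_∞` that are fixed-point-free on `[m]` and fix
all `i > m`. -/
def IFPFm (m : ℕ) : Set (Equiv.Perm ℕ) :=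
  {y | y 0 = 0 ∧ y * y = 1 ∧ (∀ i, 1 ≤ i → i ≤ m → y i ≠ i) ∧ ∀ i, m < i → y i = i}

/-- `z = FPF_m(y)`: `z` agrees with `y` on `[m]` and swaps `m + 2k - 1, m + 2k`
for all `k ≥ 1`. -/
def IsFPFStdOf (m : ℕ) (y z : Equiv.Perm ℕ) : Prop :=
  (∀ i, i ≤ m → z i = y i) ∧
    ∀ k : ℕ, z (m + 2 * k + 1) = m + 2 * k + 2 ∧ z (m + 2 * k + 2) = m + 2 * k + 1

/-- The set `FP(z)` of fpf-involution pipe dreams for `z ∈ I^FPF_∞`. -/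
def FP (z : Equiv.Perm ℕ) : Set (Finset (ℕ × ℕ)) :=
  {E | ∃ (m : ℕ) (y : Equiv.Perm ℕ) (D : Finset (ℕ × ℕ)), Even m ∧ y ∈ IFPFm m ∧
    IsFPFStdOf m y z ∧ D ∈ RP y ∧ D.image Prod.swap = D ∧
    E = D.filter fun p => p.2 < p.1}

/-- The minor `det(U_{AB})` of the generic `m × n` matrix `U`, with rows `A` and
columns `B` listed in increasing order. -/
noncomputable def genMinor (K : Type*) [CommRing K] {m n : ℕ}
    (A : Finset (Fin m)) (B : Finset (Fin n)) (h : A.card = B.card) :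
    MvPolynomial (Fin m × Fin n) K :=
  (Matrix.of fun s t : Fin A.card =>
    (MvPolynomial.X (A.orderEmbOfFin rfl s, B.orderEmbOfFin h.symm t) :
      MvPolynomial (Fin m × Fin n) K)).det

/-- The antidiagonal monomial `u_{AB} = ∏_{(a,b) ∈ A ⊙ B} u_{ab}`. -/
noncomputable def genMon (K : Type*) [CommRing K] {m n : ℕ}
    (A : Finset (Fin m)) (B : Finset (Fin n)) (h : A.card = B.card) :
    MvPolynomial (Fin m × Fin n) K :=
  ∏ t : Fin A.card, MvPolynomial.X (A.orderEmbOfFin rfl t, B.orderEmbOfFin h.symm t.rev)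

/-- The exponent vector of the antidiagonal monomial `u_{AB}`. -/
noncomputable def antidiagExp {m n : ℕ} (A : Finset (Fin m)) (B : Finset (Fin n))
    (h : A.card = B.card) : (Fin m × Fin n) →₀ ℕ :=
  ∑ t : Fin A.card, Finsupp.single (A.orderEmbOfFin rfl t, B.orderEmbOfFin h.symm t.rev) 1

/-- The ideal `I_w`, generated by the minors `det(U_{AB})` with `A ⊆ [i]`, `B ⊆ [j]`,
`|A| = |B| = r_w(i,j) + 1` for some `(i,j) ∈ [m] × [n]`. -/
noncomputable def IwIdeal (K : Type*) [Field K] (m n : ℕ) (w : Equiv.Perm ℕ) :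
    Ideal (MvPolynomial (Fin m × Fin n) K) :=
  Ideal.span {g : MvPolynomial (Fin m × Fin n) K |
    ∃ (i j : ℕ) (A : Finset (Fin m)) (B : Finset (Fin n)) (h : A.card = B.card),
      1 ≤ i ∧ i ≤ m ∧ 1 ≤ j ∧ j ≤ n ∧ (∀ a ∈ A, (a : ℕ) + 1 ≤ i) ∧
      (∀ b ∈ B, (b : ℕ) + 1 ≤ j) ∧ A.card = rnk w i j + 1 ∧ g = genMinor K A B h}

/-- The monomial ideal `J_w`, generated by the monomials `u_{AB}` with `A ⊆ [i]`,
`B ⊆ [j]`, `|A| = |B| = r_w(i,j) + 1` for some `(i,j) ∈ [m] × [n]`. -/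
noncomputable def JwIdeal (K : Type*) [Field K] (m n : ℕ) (w : Equiv.Perm ℕ) :
    Ideal (MvPolynomial (Fin m × Fin n) K) :=
  Ideal.span {g : MvPolynomial (Fin m × Fin n) K |
    ∃ (i j : ℕ) (A : Finset (Fin m)) (B : Finset (Fin n)) (h : A.card = B.card),
      1 ≤ i ∧ i ≤ m ∧ 1 ≤ j ∧ j ≤ n ∧ (∀ a ∈ A, (a : ℕ) + 1 ≤ i) ∧
      (∀ b ∈ B, (b : ℕ) + 1 ≤ j) ∧ A.card = rnk w i j + 1 ∧ g = genMon K A B h}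

/-- The matrix Schubert variety
`X_w = {A ∈ Mat_{m×n} : rank A_{[i][j]} ≤ r_w(i,j) for all (i,j) ∈ [m] × [n]}`. -/
noncomputable def Xw (K : Type*) [Field K] (m n : ℕ) (w : Equiv.Perm ℕ) :
    Set (Matrix (Fin m) (Fin n) K) :=
  {A | ∀ (i j : ℕ) (hi : i ≤ m) (hj : j ≤ n), 1 ≤ i → 1 ≤ j →
    (A.submatrix (Fin.castLE hi) (Fin.castLE hj)).rank ≤ rnk w i j}

/-- `I(X_w)`: the ideal of polynomials vanishing on `X_w`. -/
noncomputable def IXw (K : Type*) [Field K] (m n : ℕ) (w : Equiv.Perm ℕ) :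
    Ideal (MvPolynomial (Fin m × Fin n) K) :=
  vanishingIdeal (Xw K m n w) fun A v => A v.1 v.2

/-- The variable `u_{pq}` (with `1 ≤ q < p ≤ n`) of `R_n`. -/
def ssvar {n : ℕ} (p q : ℕ) (hp : p ≤ n) (hq : 1 ≤ q) (hqp : q < p) : SSVar n :=
  ⟨(⟨p - 1, by omega⟩, ⟨q - 1, by omega⟩), Fin.mk_lt_mk.mpr (by omega)⟩

/-- Index set for the variables `u_{ij}`, `i > j ≥ 1`, over all positive integers. -/
abbrev PVar : Type := {p : ℕ × ℕ // 1 ≤ p.2 ∧ p.2 < p.1}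

/-- The generic skew-symmetric array `U^ss` over the positive integers:
`u_{xy}` if `x > y`, `-u_{yx}` if `x < y`, `0` if `x = y`. -/
noncomputable def UssP (K : Type*) [CommRing K] (x y : ℕ) : MvPolynomial PVar K :=
  if h : 1 ≤ y ∧ y < x then MvPolynomial.X ⟨(x, y), h⟩
  else if h' : 1 ≤ x ∧ x < y then -MvPolynomial.X ⟨(y, x), h'⟩
  else 0

/-- `pf(U^ss_{RR})` for a finite set `R` of positive integers. -/
noncomputable def pfUssP (K : Type*) [CommRing K] (R : Finset ℕ) : MvPolynomial PVar K :=
  Pfaffian (Matrix.of fun s t : Fin R.card =>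
    UssP K (R.orderEmbOfFin rfl s) (R.orderEmbOfFin rfl t))

/-- `g_{AB}`: the Pfaffian of the `(|B|+|A|) × (|B|+|A|)` skew-symmetric matrix whose
rows and columns are labeled by `B` (increasing) followed by `A` (increasing), with
entry `U^ss_{xy}` at a position labeled `(x, y)`, except that the entry is `0` when
both labels come from the `A`-block. -/
noncomputable def gAB (K : Type*) [CommRing K] (A B : Finset ℕ) : MvPolynomial PVar K :=
  Pfaffian ((Matrix.of fun p q : Fin B.card ⊕ Fin A.card =>
      match p, q with
      | Sum.inl s, Sum.inl t => UssP K (B.orderEmbOfFin rfl s) (B.orderEmbOfFin rfl t)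
      | Sum.inl s, Sum.inr t => UssP K (B.orderEmbOfFin rfl s) (A.orderEmbOfFin rfl t)
      | Sum.inr s, Sum.inl t => UssP K (A.orderEmbOfFin rfl s) (B.orderEmbOfFin rfl t)
      | Sum.inr _, Sum.inr _ => (0 : MvPolynomial PVar K)).submatrix
    finSumFinEquiv.symm finSumFinEquiv.symm)

/-- The exponent of the sign `⟨T, S⟩ = (-1)^{|S||T| + C(|S|,2) + ∑ of the (1-indexed)
positions in the increasing enumeration of `T` occupied by elements of `S`}`. -/
def setSgnExp (T S : Finset ℕ) : ℕ :=
  S.card * T.card + Nat.choose S.card 2 +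
    ∑ t : Fin T.card, if T.orderEmbOfFin rfl t ∈ S then (t : ℕ) + 1 else 0

/-!
Call a monomial standard for `z` if the antichains of its set of boxes, symmetrized in the diagonal,
obey the rank conditions of `z`; the monomials of `J^ss_z` are exactly the nonstandard ones.

Each nonstandard monomial is a multiple of the leading monomial of a Pfaffian of the matrix obtained
from `U^ss` by repeating rows and columns in two blocks `A`, `B` and putting zeros in the block
`A × A`. Such a Pfaffian lies in `I^ss_z`, hence in `I(X^ss_z)`.

Conversely, no nonzero `f` vanishing on the matrices `g D gᵀ` of `X^ss_z`, with `g` lower triangular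
and `D` supported on the graph of `z`, has a standard leading monomial. Modulo `I^ss_z` one may take
all monomials of `f` standard. Let `u` be the variable at a corner `(p, z p)` of the region where
the rank function of `z` vanishes. The part `f₀` of `f` not divisible by `u` vanishes on the
matrices attached to a conjugate `(p r) z (p r)`, which are limits of those attached to `z` and have
`u = 0`, and `r` can be chosen so that the leading monomial of `f₀` remains standard. So `f₀ = 0` by
induction on the sum of the ranks, and `u`, which is generically nonzero, can be cancelled from `f`.
-/

/-! ### Largest antichains below a point -/

section Antichains

variable {α : Type*}

section PartialOrder

variable [PartialOrder α]

open Classical in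
/-- The size of a largest antichain of `D` contained in the lower set `Iic x`. -/
noncomputable def antichainWidth (D : Finset α) (x : α) : ℕ :=
  (D.powerset.filter fun C : Finset α =>
    IsAntichain (· ≤ ·) (C : Set α) ∧ ∀ c ∈ C, c ≤ x).sup Finset.card

theorem card_le_antichainWidth {D C : Finset α} {x : α} (hCD : C ⊆ D)
    (hC : IsAntichain (· ≤ ·) (C : Set α)) (hx : ∀ c ∈ C, c ≤ x) :
    C.card ≤ antichainWidth D x := by
  classical
  exact Finset.le_sup (f := Finset.card)
    (Finset.mem_filter.2 ⟨Finset.mem_powerset.2 hCD, hC, hx⟩)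

theorem exists_card_eq_antichainWidth (D : Finset α) (x : α) :
    ∃ C ⊆ D, IsAntichain (· ≤ ·) (C : Set α) ∧ (∀ c ∈ C, c ≤ x) ∧
      C.card = antichainWidth D x := by
  classical
  obtain ⟨C, hC, hcard⟩ := Finset.exists_mem_eq_sup
    (D.powerset.filter fun C : Finset α => IsAntichain (· ≤ ·) (C : Set α) ∧ ∀ c ∈ C, c ≤ x)
    ⟨∅, by simp⟩ Finset.card
  obtain ⟨hCD, hanti, hx⟩ := Finset.mem_filter.1 hC
  exact ⟨C, Finset.mem_powerset.1 hCD, hanti, hx, by rw [antichainWidth, hcard]⟩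

theorem antichainWidth_mono {D D' : Finset α} (hD : D ⊆ D') (x : α) :
    antichainWidth D x ≤ antichainWidth D' x := by
  obtain ⟨C, hCD, hC, hx, hcard⟩ := exists_card_eq_antichainWidth D x
  exact hcard ▸ card_le_antichainWidth (hCD.trans hD) hC hx

open Classical in
theorem exists_antichains_of_antichains {C C' : Finset α} (hC : IsAntichain (· ≤ ·) (C : Set α))
    (hC' : IsAntichain (· ≤ ·) (C' : Set α)) :
    ∃ E ⊆ C ∪ C', ∃ F ⊆ C ∪ C', IsAntichain (· ≤ ·) (E : Set α) ∧
      IsAntichain (· ≤ ·) (F : Set α) ∧ C.card + C'.card ≤ E.card + F.card ∧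
      ∀ x ∈ F, (∃ c ∈ C, x ≤ c) ∧ ∃ c ∈ C', x ≤ c := by
  set E := {x ∈ C ∪ C' | ∀ y ∈ C ∪ C', x ≤ y → x = y} with hE
  set F := {x ∈ C ∪ C' | (∃ c ∈ C, x ≤ c) ∧ ∃ c ∈ C', x ≤ c}
  have hEanti : IsAntichain (· ≤ ·) (E : Set α) := fun x hx y hy hne hle =>
    hne ((Finset.mem_filter.1 hx).2 y (Finset.mem_filter.1 hy).1 hle)
  have hFanti : IsAntichain (· ≤ ·) (F : Set α) := by
    intro x hx y hy hne hle
    obtain ⟨hxCC', -, -⟩ := Finset.mem_filter.1 hx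
    obtain ⟨-, ⟨c, hc, hyc⟩, c', hc', hyc'⟩ := Finset.mem_filter.1 hy
    rcases Finset.mem_union.1 hxCC' with hxC | hxC'
    · obtain rfl := hC.eq hxC hc (hle.trans hyc)
      exact hne (hle.antisymm hyc)
    · obtain rfl := hC'.eq hxC' hc' (hle.trans hyc')
      exact hne (hle.antisymm hyc')
  have hunion : C ∪ C' ⊆ E ∪ F := by
    intro x hx
    refine Finset.mem_union.2 (or_iff_not_imp_left.2 fun hxE => Finset.mem_filter.2 ⟨hx, ?_⟩)
    obtain ⟨y, hy, hle, hne⟩ : ∃ y ∈ C ∪ C', x ≤ y ∧ x ≠ y := by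
      simpa [hE, hx, -Finset.mem_union] using hxE
    rcases Finset.mem_union.1 hx with hxC | hxC' <;> rcases Finset.mem_union.1 hy with hyC | hyC'
    · exact absurd hle (hC hxC hyC hne)
    · exact ⟨⟨x, hxC, le_rfl⟩, y, hyC', hle⟩
    · exact ⟨⟨y, hyC, hle⟩, x, hxC', le_rfl⟩
    · exact absurd hle (hC' hxC' hyC' hne)
  have hinter : C ∩ C' ⊆ E ∩ F := by
    intro x hx
    obtain ⟨hxC, hxC'⟩ := Finset.mem_inter.1 hx
    have hxCC' := Finset.mem_union_left C' hxC
    refine Finset.mem_inter.2 ⟨Finset.mem_filter.2 ⟨hxCC', fun y hy hle => ?_⟩,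
      Finset.mem_filter.2 ⟨hxCC', ⟨x, hxC, le_rfl⟩, x, hxC', le_rfl⟩⟩
    exact (Finset.mem_union.1 hy).elim (hC.eq hxC · hle) (hC'.eq hxC' · hle)
  refine ⟨E, Finset.filter_subset _ _, F, Finset.filter_subset _ _, hEanti, hFanti, ?_,
    fun x hx => (Finset.mem_filter.1 hx).2⟩
  rw [← Finset.card_union_add_card_inter C, ← Finset.card_union_add_card_inter E]
  exact add_le_add (Finset.card_le_card hunion) (Finset.card_le_card hinter)

end PartialOrder

theorem antichainWidth_add_le_sup_add_inf [Lattice α] (D : Finset α) (x y : α) :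
    antichainWidth D x + antichainWidth D y ≤
      antichainWidth D (x ⊔ y) + antichainWidth D (x ⊓ y) := by
  classical
  obtain ⟨C, hCD, hC, hx, hcard⟩ := exists_card_eq_antichainWidth D x
  obtain ⟨C', hCD', hC', hy, hcard'⟩ := exists_card_eq_antichainWidth D y
  obtain ⟨E, hE, F, hF, hEanti, hFanti, hle, hbelow⟩ := exists_antichains_of_antichains hC hC'
  have hD := Finset.union_subset hCD hCD'
  have hEcard := card_le_antichainWidth (hE.trans hD) hEanti fun e he =>
    (Finset.mem_union.1 (hE he)).elim (fun h => (hx e h).trans le_sup_left)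
      fun h => (hy e h).trans le_sup_right
  have hFcard := card_le_antichainWidth (x := x ⊓ y) (hF.trans hD) hFanti fun f hf => by
    obtain ⟨⟨c, hc, hfc⟩, c', hc', hfc'⟩ := hbelow f hf
    exact le_inf (hfc.trans (hx c hc)) (hfc'.trans (hy c' hc'))
  omega

theorem isAntichain_injOn_fst {α β : Type*} [PartialOrder α] [LinearOrder β] {C : Set (α × β)}
    (hC : IsAntichain (· ≤ ·) C) : Set.InjOn Prod.fst C := by
  intro c hc d hd hcd
  rcases le_total c.2 d.2 with h | h
  · exact hC.eq hc hd ⟨hcd.le, h⟩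
  · exact hC.eq' hc hd ⟨hcd.ge, h⟩

theorem isAntichain_injOn_snd {α β : Type*} [LinearOrder α] [PartialOrder β] {C : Set (α × β)}
    (hC : IsAntichain (· ≤ ·) C) : Set.InjOn Prod.snd C := by
  intro c hc d hd hcd
  rcases le_total c.1 d.1 with h | h
  · exact hC.eq hc hd ⟨h, hcd.le⟩
  · exact hC.eq' hc hd ⟨h, hcd.ge⟩

theorem isAntichain_image_swap {α β : Type*} [PartialOrder α] [PartialOrder β] [DecidableEq α]
    [DecidableEq β] {C : Finset (α × β)} (hC : IsAntichain (· ≤ ·) (C : Set (α × β))) :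
    IsAntichain (· ≤ ·) (C.image Prod.swap : Set (β × α)) := by
  simpa using hC.image_iso (OrderIso.prodComm : α × β ≃o β × α)

section Product

variable [LinearOrder α]

theorem antichainWidth_swap {D : Finset (α × α)} (hD : ∀ c ∈ D, c.swap ∈ D) (x : α × α) :
    antichainWidth D x.swap = antichainWidth D x := by
  suffices hle : ∀ y, antichainWidth D y ≤ antichainWidth D y.swap from
    le_antisymm (by simpa using hle x.swap) (hle x)
  intro y
  obtain ⟨C, hCD, hC, hy, hcard⟩ := exists_card_eq_antichainWidth D y
  rw [← hcard, ← Finset.card_image_of_injective C Prod.swap_injective]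
  refine card_le_antichainWidth ?_ (isAntichain_image_swap hC) ?_
  · exact Finset.image_subset_iff.2 fun c hc => hD c (hCD hc)
  · exact Finset.forall_mem_image.2 fun c hc => Prod.swap_le_swap.2 (hy c hc)

theorem isAntichain_union_image_swap {U : Finset (α × α)}
    (hU : IsAntichain (· ≤ ·) (U : Set (α × α))) (hlt : ∀ c ∈ U, c.1 < c.2) :
    IsAntichain (· ≤ ·) (↑(U ∪ U.image Prod.swap) : Set (α × α)) := by
  have hcross : ∀ c ∈ U, ∀ d ∈ U, ¬ (c.1 ≤ d.2 ∧ c.2 ≤ d.1) := by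
    rintro c hc d hd ⟨_, h21⟩
    have hcd := hU.eq hc hd ⟨((hlt c hc).le.trans h21), h21.trans (hlt d hd).le⟩
    exact (hlt c hc).not_ge (hcd ▸ h21)
  rw [Finset.coe_union, isAntichain_union]
  refine ⟨hU, isAntichain_image_swap hU, fun c hc d hd _ => ?_⟩
  obtain ⟨e, he, rfl⟩ := Finset.mem_image.1 hd
  exact ⟨fun hle => hcross c hc e he hle, fun hle => hcross e he c hc hle.symm⟩

theorem two_mul_card_le_antichainWidth {D U : Finset (α × α)} (hD : ∀ c ∈ D, c.swap ∈ D) {i : α}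
    (hUD : U ⊆ D) (hU : IsAntichain (· ≤ ·) (U : Set (α × α))) (hi : ∀ c ∈ U, c ≤ (i, i))
    (hlt : ∀ c ∈ U, c.1 < c.2) : 2 * U.card ≤ antichainWidth D (i, i) := by
  have hdisj : Disjoint U (U.image Prod.swap) := by
    refine Finset.disjoint_left.2 fun c hc hc' => ?_
    obtain ⟨d, hd, rfl⟩ := Finset.mem_image.1 hc'
    exact (hlt d hd).not_gt (hlt _ hc)
  rw [two_mul]
  nth_rw 2 [← Finset.card_image_of_injective U Prod.swap_injective]
  rw [← Finset.card_union_of_disjoint hdisj]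
  refine card_le_antichainWidth ?_ (isAntichain_union_image_swap hU hlt) ?_
  · exact Finset.union_subset hUD (Finset.image_subset_iff.2 fun c hc => hD c (hUD hc))
  · exact Finset.forall_mem_union.2 ⟨hi, Finset.forall_mem_image.2 fun c hc => (hi c hc).symm⟩

/- Reflecting the part of a largest antichain on either side of the diagonal shows that both
parts have at most half of its size. -/
theorem even_antichainWidth {D : Finset (α × α)} (hD : ∀ c ∈ D, c.swap ∈ D)
    (hdiag : ∀ c ∈ D, c.1 ≠ c.2) (i : α) : Even (antichainWidth D (i, i)) := by
  obtain ⟨C, hCD, hC, hi, hcard⟩ := exists_card_eq_antichainWidth D (i, i)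
  set U := C.filter fun c => c.1 < c.2
  set V := C.filter fun c => ¬ c.1 < c.2
  have hVC : V ⊆ C := Finset.filter_subset _ _
  have hU : 2 * U.card ≤ antichainWidth D (i, i) :=
    two_mul_card_le_antichainWidth hD ((Finset.filter_subset _ _).trans hCD)
      (hC.subset (Finset.filter_subset _ _)) (fun c hc => hi c (Finset.mem_filter.1 hc).1)
      fun c hc => (Finset.mem_filter.1 hc).2
  have hV : 2 * V.card ≤ antichainWidth D (i, i) := by
    rw [← Finset.card_image_of_injective V Prod.swap_injective]
    refine two_mul_card_le_antichainWidth hD ?_ (isAntichain_image_swap (hC.subset hVC)) ?_ ?_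
    · exact Finset.image_subset_iff.2 fun c hc => hD c (hCD (hVC hc))
    · exact Finset.forall_mem_image.2 fun c hc => (hi c (hVC hc)).symm
    · exact Finset.forall_mem_image.2 fun c hc =>
        (not_lt.1 (Finset.mem_filter.1 hc).2).lt_of_ne (hdiag c (hCD (hVC hc))).symm
  have hUV : U.card + V.card = C.card := Finset.card_filter_add_card_filter_not _
  exact ⟨U.card, by omega⟩

end Product

theorem antichainWidth_le_add_fst (D : Finset (ℕ × ℕ)) (i i' j : ℕ) :
    antichainWidth D (i', j) ≤ antichainWidth D (i, j) + (i' - i) := by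
  obtain ⟨C, hCD, hC, hx, hcard⟩ := exists_card_eq_antichainWidth D (i', j)
  have hsmall : (C.filter fun c => c.1 ≤ i).card ≤ antichainWidth D (i, j) :=
    card_le_antichainWidth ((Finset.filter_subset _ _).trans hCD)
      (hC.subset (Finset.filter_subset _ _)) fun c hc =>
        ⟨(Finset.mem_filter.1 hc).2, (hx c (Finset.mem_filter.1 hc).1).2⟩
  have hlarge : (C.filter fun c => ¬ c.1 ≤ i).card ≤ i' - i := by
    rw [← Nat.card_Ioc]
    refine Finset.card_le_card_of_injOn Prod.fst (fun c hc => ?_)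
      ((isAntichain_injOn_fst hC).mono (Finset.filter_subset _ _))
    obtain ⟨hcC, hci⟩ := Finset.mem_filter.1 hc
    exact Finset.mem_coe.2 (Finset.mem_Ioc.2 ⟨not_le.1 hci, (hx c hcC).1⟩)
  have hsplit := Finset.card_filter_add_card_filter_not (s := C) fun c => c.1 ≤ i
  omega

end Antichains

/-! ### Rank functions of fixed-point-free involutions -/

/-- `z` is a fixed-point-free involution of the positive integers, extended by `z 0 = 0`. -/
structure IsFPFInvolution (z : Equiv.Perm ℕ) : Prop where
  map_zero : z 0 = 0
  ne_self : ∀ i, 1 ≤ i → z i ≠ i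
  apply_apply : ∀ i, z (z i) = i

theorem isFPFInvolution_of_mem_FPFIn {n : ℕ} {z : Equiv.Perm ℕ} (hz : z ∈ FPFIn n) :
    IsFPFInvolution z :=
  ⟨hz.1.1, hz.1.2.1, fun i => by rw [← Equiv.Perm.mul_apply, hz.1.2.2.1, Equiv.Perm.one_apply]⟩

theorem rnk_eq_add_card_Ioc (w : Equiv.Perm ℕ) {i i' : ℕ} (h : i ≤ i') (j : ℕ) :
    rnk w i' j = rnk w i j + ((Finset.Ioc i i').filter fun a => w a ∈ Finset.Icc 1 j).card := by
  have hunion : Finset.Icc 1 i' = Finset.Icc 1 i ∪ Finset.Ioc i i' := by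
    ext a; simp only [Finset.mem_union, Finset.mem_Icc, Finset.mem_Ioc]; omega
  rw [rnk, rnk, hunion, Finset.filter_union, Finset.card_union_of_disjoint]
  refine Finset.disjoint_filter_filter (Finset.disjoint_left.2 fun a => ?_)
  simp only [Finset.mem_Icc, Finset.mem_Ioc]
  omega

theorem rnk_eq_add_sub (w : Equiv.Perm ℕ) {i i' j : ℕ} (h : i ≤ i')
    (hw : ∀ a, i < a → a ≤ i' → w a ∈ Finset.Icc 1 j) : rnk w i' j = rnk w i j + (i' - i) := by
  rw [rnk_eq_add_card_Ioc w h, Finset.filter_true_of_mem fun a ha => ?_, Nat.card_Ioc]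
  exact hw a (Finset.mem_Ioc.1 ha).1 (Finset.mem_Ioc.1 ha).2

theorem rnk_add_rnk_eq (w : Equiv.Perm ℕ) {i i' j j' : ℕ} (hi : i ≤ i') (hj : j ≤ j')
    (hw : ∀ a, i < a → a ≤ i' → w a ∉ Finset.Ioc j j') :
    rnk w i' j' + rnk w i j = rnk w i j' + rnk w i' j := by
  have hfilter : (Finset.Ioc i i').filter (fun a => w a ∈ Finset.Icc 1 j') =
      (Finset.Ioc i i').filter (fun a => w a ∈ Finset.Icc 1 j) := by
    refine Finset.filter_congr fun a ha => ?_
    have := hw a (Finset.mem_Ioc.1 ha).1 (Finset.mem_Ioc.1 ha).2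
    simp only [Finset.mem_Icc, Finset.mem_Ioc] at this ⊢
    omega
  rw [rnk_eq_add_card_Ioc w hi j', rnk_eq_add_card_Ioc w hi j, hfilter]
  ring

theorem rnk_mono (w : Equiv.Perm ℕ) {i i' j j' : ℕ} (hi : i ≤ i') (hj : j ≤ j') :
    rnk w i j ≤ rnk w i' j' := by
  refine Finset.card_le_card fun a => ?_
  simp only [Finset.mem_filter, Finset.mem_Icc]
  omega

theorem rnk_eq_sum (w : Equiv.Perm ℕ) {N i j : ℕ} (h : i ≤ N) :
    rnk w i j = ∑ a ∈ Finset.Icc 1 N, if a ≤ i ∧ 1 ≤ w a ∧ w a ≤ j then 1 else 0 := by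
  rw [rnk, ← Finset.card_filter]
  congr 1
  ext a
  simp only [Finset.mem_filter, Finset.mem_Icc]
  omega

section Involution

variable {z : Equiv.Perm ℕ}

theorem IsFPFInvolution.one_le_apply (hz : IsFPFInvolution z) {i : ℕ} (hi : 1 ≤ i) :
    1 ≤ z i := by
  rw [Nat.one_le_iff_ne_zero] at hi ⊢
  rwa [← hz.map_zero, z.injective.ne_iff]

theorem rnk_comm (hz : IsFPFInvolution z) (i j : ℕ) : rnk z i j = rnk z j i := by
  refine Finset.card_nbij' z z ?_ ?_ (fun a _ => hz.apply_apply a) fun a _ => hz.apply_apply a <;>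
  · intro a
    simp only [Finset.coe_filter, Finset.mem_Icc, Set.mem_ofPred_eq, hz.apply_apply]
    tauto

theorem even_rnk_self (hz : IsFPFInvolution z) (i : ℕ) : Even (rnk z i i) := by
  rw [rnk]
  set S := (Finset.Icc 1 i).filter fun a => z a ∈ Finset.Icc 1 i with hS
  have hcard : (S.filter fun a => a < z a).card = (S.filter fun a => ¬ a < z a).card := by
    refine Finset.card_nbij' z z ?_ ?_ (fun a _ => hz.apply_apply a) fun a _ => hz.apply_apply a
    all_goals
      intro a
      simp only [hS, Finset.coe_filter, Finset.mem_filter, Finset.mem_Icc, Set.mem_ofPred_eq,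
        hz.apply_apply]
      have := hz.ne_self a
      omega
  exact ⟨_, by rw [← Finset.card_filter_add_card_filter_not (s := S) fun a => a < z a, ← hcard]⟩

/-! ### Conjugation by a transposition -/

/-- The conjugate `(p r) z (p r)`. -/
def conjSwap (z : Equiv.Perm ℕ) (p r : ℕ) : Equiv.Perm ℕ :=
  Equiv.swap p r * z * Equiv.swap p r

theorem conjSwap_apply (z : Equiv.Perm ℕ) (p r a : ℕ) :
    conjSwap z p r a = Equiv.swap p r (z (Equiv.swap p r a)) := rfl

/-- Conjugating the fixed-point-free involution `z` by `(p r)` replaces the pairs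
`{p, z p}`, `{r, z r}`, where `z p < p < r` and `z p < z r`, by the pairs `{p, z r}`, `{r, z p}`;
this increases `z` in Bruhat order. -/
structure IsRaisingSwap (z : Equiv.Perm ℕ) (p r : ℕ) : Prop where
  isFPF : IsFPFInvolution z
  apply_lt : z p < p
  lt : p < r
  apply_lt_apply : z p < z r

namespace IsRaisingSwap

variable {p r : ℕ}

theorem one_le_apply (h : IsRaisingSwap z p r) : 1 ≤ z p :=
  h.isFPF.one_le_apply (Nat.one_le_of_lt h.apply_lt)

theorem apply_ne_left (h : IsRaisingSwap z p r) : z r ≠ p := fun hr => by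
  have hzp : z p = r := by rw [← hr, h.isFPF.apply_apply]
  exact (h.apply_lt.trans h.lt).ne hzp

theorem apply_ne_right (h : IsRaisingSwap z p r) : z r ≠ r :=
  h.isFPF.ne_self r (by have := h.lt; omega)

theorem conjSwap_left (h : IsRaisingSwap z p r) : conjSwap z p r p = z r := by
  rw [conjSwap_apply, Equiv.swap_apply_left,
    Equiv.swap_apply_of_ne_of_ne h.apply_ne_left h.apply_ne_right]

theorem conjSwap_right (h : IsRaisingSwap z p r) : conjSwap z p r r = z p := by
  rw [conjSwap_apply, Equiv.swap_apply_right,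
    Equiv.swap_apply_of_ne_of_ne h.apply_lt.ne (h.apply_lt.trans h.lt).ne]

theorem conjSwap_apply_left (h : IsRaisingSwap z p r) : conjSwap z p r (z p) = r := by
  rw [conjSwap_apply, Equiv.swap_apply_of_ne_of_ne h.apply_lt.ne (h.apply_lt.trans h.lt).ne,
    h.isFPF.apply_apply, Equiv.swap_apply_left]

theorem conjSwap_apply_right (h : IsRaisingSwap z p r) : conjSwap z p r (z r) = p := by
  rw [conjSwap_apply, Equiv.swap_apply_of_ne_of_ne h.apply_ne_left h.apply_ne_right,
    h.isFPF.apply_apply, Equiv.swap_apply_right]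

theorem conjSwap_of_ne (h : IsRaisingSwap z p r) {a : ℕ} (hp : a ≠ p) (hzp : a ≠ z p)
    (hr : a ≠ r) (hzr : a ≠ z r) :
    conjSwap z p r a = z a := by
  rw [conjSwap_apply, Equiv.swap_apply_of_ne_of_ne hp hr, Equiv.swap_apply_of_ne_of_ne]
  · exact fun ha => hzp (by rw [← ha, h.isFPF.apply_apply])
  · exact fun ha => hzr (by rw [← ha, h.isFPF.apply_apply])

theorem isFPF_conjSwap (h : IsRaisingSwap z p r) : IsFPFInvolution (conjSwap z p r) := by
  have hp := h.apply_lt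
  have hr := h.lt
  have hswap0 : Equiv.swap p r 0 = 0 := Equiv.swap_apply_of_ne_of_ne (by omega) (by omega)
  refine ⟨by rw [conjSwap_apply, hswap0, h.isFPF.map_zero, hswap0], fun i hi hfix => ?_,
    fun i => by simp [conjSwap_apply, h.isFPF.apply_apply]⟩
  refine h.isFPF.ne_self (Equiv.swap p r i) ?_ ((Equiv.swap p r).injective ?_)
  · rw [Nat.one_le_iff_ne_zero] at hi ⊢
    rwa [← hswap0, (Equiv.swap p r).injective.ne_iff]
  · rwa [← conjSwap_apply, Equiv.swap_apply_self]

theorem sum_eq_sum_sdiff (h : IsRaisingSwap z p r) {M : Type*} [AddCommMonoid M] (F : ℕ → M)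
    {S : Finset ℕ} (hS : {p, z p, r, z r} ⊆ S) :
    ∑ a ∈ S, F a = ∑ a ∈ S \ {p, z p, r, z r}, F a + (F p + F (z p) + F r + F (z r)) := by
  have h1 := h.apply_lt
  have h2 := h.lt
  have h4 := h.apply_ne_left
  have h5 := h.apply_ne_right
  rw [← Finset.sum_sdiff hS, Finset.sum_insert (by simp; omega), Finset.sum_insert (by simp; omega),
    Finset.sum_pair h5.symm]
  simp only [add_assoc]

theorem rnk_eq_conjSwap_add (h : IsRaisingSwap z p r) (i j : ℕ) :
    rnk z i j = rnk (conjSwap z p r) i j +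
      (if (p ≤ i ∧ i < r) ∧ (z p ≤ j ∧ j < z r) then 1 else 0) +
      (if (z p ≤ i ∧ i < z r) ∧ (p ≤ j ∧ j < r) then 1 else 0) := by
  have h1 := h.one_le_apply
  have h2 := h.apply_lt
  have h3 := h.lt
  have h4 := h.apply_lt_apply
  have hsub : {p, z p, r, z r} ⊆ Finset.Icc 1 (i + p + r + z r) := by
    intro a; simp only [Finset.mem_insert, Finset.mem_singleton, Finset.mem_Icc]; omega
  have hrest : ∀ a ∈ Finset.Icc 1 (i + p + r + z r) \ {p, z p, r, z r},
      (if a ≤ i ∧ 1 ≤ z a ∧ z a ≤ j then 1 else 0) =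
        if a ≤ i ∧ 1 ≤ conjSwap z p r a ∧ conjSwap z p r a ≤ j then 1 else 0 := by
    intro a ha
    simp only [Finset.mem_sdiff, Finset.mem_insert, Finset.mem_singleton, not_or] at ha
    rw [h.conjSwap_of_ne ha.2.1 ha.2.2.1 ha.2.2.2.1 ha.2.2.2.2]
  rw [rnk_eq_sum z (show i ≤ i + p + r + z r by omega),
    rnk_eq_sum (conjSwap z p r) (show i ≤ i + p + r + z r by omega),
    h.sum_eq_sum_sdiff _ hsub, h.sum_eq_sum_sdiff _ hsub, Finset.sum_congr rfl hrest,
    h.conjSwap_left, h.conjSwap_right, h.conjSwap_apply_left, h.conjSwap_apply_right,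
    h.isFPF.apply_apply, h.isFPF.apply_apply]
  have hpr : (if p ≤ i ∧ 1 ≤ z p ∧ z p ≤ j then 1 else 0) +
      (if r ≤ i ∧ 1 ≤ z r ∧ z r ≤ j then 1 else 0) =
      (if p ≤ i ∧ 1 ≤ z r ∧ z r ≤ j then 1 else 0) +
      (if r ≤ i ∧ 1 ≤ z p ∧ z p ≤ j then 1 else 0) +
      (if (p ≤ i ∧ i < r) ∧ (z p ≤ j ∧ j < z r) then 1 else 0) := by
    split_ifs <;> omega
  have hzpr : (if z p ≤ i ∧ 1 ≤ p ∧ p ≤ j then 1 else 0) +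
      (if z r ≤ i ∧ 1 ≤ r ∧ r ≤ j then 1 else 0) =
      (if z p ≤ i ∧ 1 ≤ r ∧ r ≤ j then 1 else 0) +
      (if z r ≤ i ∧ 1 ≤ p ∧ p ≤ j then 1 else 0) +
      (if (z p ≤ i ∧ i < z r) ∧ (p ≤ j ∧ j < r) then 1 else 0) := by
    split_ifs <;> omega
  omega

end IsRaisingSwap
end Involution

section Involution

variable {z : Equiv.Perm ℕ}

/-! ### Standard sets of boxes and corners -/

/-- The antichains of `D` obey the rank conditions of `z`. For the support `D` of a monomial this
is the condition that the monomial does not belong to the antidiagonal ideal. -/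
def IsStandard (z : Equiv.Perm ℕ) (D : Finset (ℕ × ℕ)) : Prop :=
  ∀ i j, antichainWidth D (i, j) ≤ rnk z i j

/-- `(p, z p)` lies strictly below the diagonal and is an outer corner of the region where the
rank function of `z` vanishes. -/
structure IsCorner (z : Equiv.Perm ℕ) (p : ℕ) : Prop where
  isFPF : IsFPFInvolution z
  apply_lt : z p < p
  rnk_eq_one : rnk z p (z p) = 1

theorem exists_isCorner (hz : IsFPFInvolution z) {n : ℕ} (h : ∃ a, 1 ≤ a ∧ a ≤ n ∧ z a ≤ n) :
    ∃ p ≤ n, IsCorner z p := by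
  classical
  have hexists : ∃ p, 1 ≤ p ∧ z p < p ∧ p ≤ n := by
    obtain ⟨a, ha, han, hzan⟩ := h
    rcases lt_or_gt_of_ne (hz.ne_self a ha) with hlt | hgt
    · exact ⟨a, ha, hlt, han⟩
    · exact ⟨z a, hz.one_le_apply ha, by rwa [hz.apply_apply], hzan⟩
  obtain ⟨hp, hzp, hpn⟩ := Nat.find_spec hexists
  have hmin := fun m => Nat.find_min hexists (m := m)
  set p := Nat.find hexists
  refine ⟨p, hpn, hz, hzp, Finset.card_eq_one.2 ⟨p, ?_⟩⟩
  ext a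
  simp only [Finset.mem_filter, Finset.mem_Icc, Finset.mem_singleton]
  refine ⟨fun ⟨⟨ha, hap⟩, hza, hzap⟩ => ?_, ?_⟩
  · by_contra hne
    have hza' : ¬ z a < a := fun hlt => hmin a (by omega) ⟨ha, hlt, by omega⟩
    have := hz.ne_self a ha
    exact hmin (z a) (by omega) ⟨hza, by rw [hz.apply_apply]; omega, by omega⟩
  · rintro rfl
    exact ⟨⟨hp, le_rfl⟩, hz.one_le_apply hp, le_rfl⟩

section Blocked

variable {D : Finset (ℕ × ℕ)} {p q : ℕ}

/-- Every pair `(r, z r)` strictly to the south-east of `(p, q)` is obstructed by a box of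
`[p, r) × [q, z r)` at which the rank condition of `z` is tight for `D`. -/
def IsBlocked (z : Equiv.Perm ℕ) (D : Finset (ℕ × ℕ)) (p q : ℕ) : Prop :=
  ∀ r, p < r → q < z r → ∃ i j, p ≤ i ∧ i < r ∧ q ≤ j ∧ j < z r ∧
    antichainWidth D (i, j) = rnk z i j

theorem exists_gt_and_lt_apply (hz : IsFPFInvolution z) (p q : ℕ) : ∃ r, p < r ∧ q < z r := by
  by_contra! hsmall
  have hcard : ((Finset.Icc (p + 1) (p + q + 1)).image z).card ≤ (Finset.Icc 1 q).card := by
    refine Finset.card_le_card (Finset.image_subset_iff.2 fun a ha => ?_)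
    rw [Finset.mem_Icc] at ha ⊢
    exact ⟨hz.one_le_apply (by omega), hsmall a (by omega)⟩
  rw [Finset.card_image_of_injective _ z.injective, Nat.card_Icc, Nat.card_Icc] at hcard
  omega

theorem exists_tight_of_isBlocked (hz : IsFPFInvolution z) (hD : IsStandard z D)
    (hblocked : IsBlocked z D p q) : ∃ j, q ≤ j ∧ antichainWidth D (p, j) = rnk z p j := by
  classical
  have hexists : ∃ i, p ≤ i ∧ ∃ j, q ≤ j ∧ antichainWidth D (i, j) = rnk z i j := by
    obtain ⟨r, hpr, hqr⟩ := exists_gt_and_lt_apply hz p q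
    obtain ⟨i, j, hpi, -, hqj, -, htight⟩ := hblocked r hpr hqr
    exact ⟨i, hpi, j, hqj, htight⟩
  obtain ⟨hpi, j, hqj, htight⟩ := Nat.find_spec hexists
  have hmin := fun m => Nat.find_min hexists (m := m)
  set i := Nat.find hexists
  refine ⟨j, hqj, ?_⟩
  have hrnk := rnk_eq_add_sub z (j := j) hpi fun r hpr hri => by
    refine Finset.mem_Icc.2 ⟨hz.one_le_apply (by omega), ?_⟩
    by_contra! hgt
    obtain ⟨i', j', hpi', hi'r, hqj', -, htight'⟩ := hblocked r hpr (by omega)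
    exact hmin i' (by omega) ⟨hpi', j', hqj', htight'⟩
  have hwidth := antichainWidth_le_add_fst D p i j
  have := hD p j
  omega

theorem exists_tight_lt_of_isBlocked (hD : IsStandard z D) (hblocked : IsBlocked z D p q) {j₁ : ℕ}
    (htight₁ : antichainWidth D (p, j₁) = rnk z p j₁)
    (hexists : ∃ i, p ≤ i ∧ ∃ j, q ≤ j ∧ j < j₁ ∧ antichainWidth D (i, j) = rnk z i j) :
    ∃ j, q ≤ j ∧ j < j₁ ∧ antichainWidth D (p, j) = rnk z p j := by
  classical
  obtain ⟨hpi, j, hqj, hjj₁, htight⟩ := Nat.find_spec hexists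
  have hmin := fun m => Nat.find_min hexists (m := m)
  set i := Nat.find hexists
  have hrnk := rnk_add_rnk_eq z hpi hjj₁.le fun r hpr hri hr => by
    rw [Finset.mem_Ioc] at hr
    obtain ⟨i', j', hpi', hi'r, hqj', hj'r, htight'⟩ := hblocked r hpr (by omega)
    exact hmin i' (by omega) ⟨hpi', j', hqj', by omega, htight'⟩
  have hwidth := antichainWidth_add_le_sup_add_inf D (p, j₁) (i, j)
  simp only [Prod.mk_sup_mk, Prod.mk_inf_mk, sup_of_le_right hpi, sup_of_le_left hjj₁.le,
    inf_of_le_left hpi, inf_of_le_right hjj₁.le] at hwidth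
  have := hD i j₁
  have := hD p j
  exact ⟨j, hqj, hjj₁, by omega⟩

/- Otherwise take the leftmost tight box `(p, j)`: all values of `z` on `(z p, j]` are at most `p`,
so the rank exceeds the width by `rnk z p (z p) = 1` at `(p, j)`. -/
theorem IsCorner.not_isBlocked (h : IsCorner z p) (hDsymm : ∀ c ∈ D, c.swap ∈ D)
    (hD : IsStandard z D) (hzero : antichainWidth D (p, z p) = 0) :
    ¬ IsBlocked z D p (z p) := by
  classical
  intro hblocked
  have hexists := exists_tight_of_isBlocked h.isFPF hD hblocked
  obtain ⟨hqj, htight⟩ := Nat.find_spec hexists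
  have hmin := fun m => Nat.find_min hexists (m := m)
  set j := Nat.find hexists
  have hrnk := rnk_eq_add_sub z (j := p) hqj fun c hqc hcj => by
    refine Finset.mem_Icc.2 ⟨h.isFPF.one_le_apply (by omega), ?_⟩
    by_contra! hgt
    obtain ⟨i, j', hpi, -, hqj', hj'c, htight'⟩ := hblocked (z c) hgt
      (by rwa [h.isFPF.apply_apply])
    rw [h.isFPF.apply_apply] at hj'c
    obtain ⟨j'', hqj'', hj''j, htight''⟩ := exists_tight_lt_of_isBlocked hD hblocked htight
      ⟨i, hpi, j', hqj', by omega, htight'⟩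
    exact hmin j'' hj''j ⟨hqj'', htight''⟩
  have hwidth := antichainWidth_le_add_fst D (z p) j p
  rw [← Prod.swap_prod_mk (a := p) (b := j), ← Prod.swap_prod_mk (a := p) (b := z p),
    antichainWidth_swap hDsymm, antichainWidth_swap hDsymm, hzero] at hwidth
  rw [rnk_comm h.isFPF, rnk_comm h.isFPF (z p), h.rnk_eq_one] at hrnk
  omega

end Blocked

/-! ### Raising an involution while keeping a set of boxes standard -/

section Raising

variable {D : Finset (ℕ × ℕ)} {p r : ℕ}

theorem add_two_le_rnk_self (hz : IsFPFInvolution z) (hDsymm : ∀ c ∈ D, c.swap ∈ D)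
    (hDdiag : ∀ c ∈ D, c.1 ≠ c.2) {i : ℕ} (hlt : antichainWidth D (i, i) < rnk z i i) :
    antichainWidth D (i, i) + 2 ≤ rnk z i i := by
  obtain ⟨a, ha⟩ := even_antichainWidth hDsymm hDdiag i
  obtain ⟨b, hb⟩ := even_rnk_self hz i
  omega

theorem add_two_le_rnk (hz : IsFPFInvolution z) (hDsymm : ∀ c ∈ D, c.swap ∈ D) {i j : ℕ}
    (hij : i ≤ j) (hfree : ∀ a, i < a → a ≤ j → z a ∉ Finset.Ioc i j)
    (hi : antichainWidth D (i, i) + 2 ≤ rnk z i i) (hj : antichainWidth D (j, j) + 2 ≤ rnk z j j) :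
    antichainWidth D (i, j) + 2 ≤ rnk z i j := by
  have hrnk := rnk_add_rnk_eq z hij hij hfree
  have hwidth := antichainWidth_add_le_sup_add_inf D (i, j) (j, i)
  simp only [Prod.mk_sup_mk, Prod.mk_inf_mk, sup_of_le_right hij, sup_of_le_left hij,
    inf_of_le_left hij, inf_of_le_right hij] at hwidth
  rw [← Prod.swap_prod_mk (a := i) (b := j), antichainWidth_swap hDsymm] at hwidth
  rw [rnk_comm hz j i] at hrnk
  omega

/- The rank drops by two only where both rectangles `[p, r) × [z p, z r)` and its transpose
overlap; there the parity of the ranks on the diagonal doubles the slack. -/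
theorem IsRaisingSwap.isStandard_conjSwap (h : IsRaisingSwap z p r)
    (hDsymm : ∀ c ∈ D, c.swap ∈ D) (hDdiag : ∀ c ∈ D, c.1 ≠ c.2) (hD : IsStandard z D)
    (hslack : ∀ i j, p ≤ i → i < r → z p ≤ j → j < z r → antichainWidth D (i, j) < rnk z i j)
    (hfree : ∀ a, p < a → a < r → z p < z a → ¬ z a < z r) :
    IsStandard (conjSwap z p r) D := by
  have hcomm : ∀ i j, antichainWidth D (i, j) = antichainWidth D (j, i) := fun i j =>
    (antichainWidth_swap hDsymm (i, j)).symm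
  have hp := h.apply_lt
  have hdiag : ∀ i, p ≤ i → i < r → i < z r → antichainWidth D (i, i) + 2 ≤ rnk z i i :=
    fun i hpi hir hizr => add_two_le_rnk_self h.isFPF hDsymm hDdiag
      (hslack i i hpi hir (by omega) hizr)
  have hoff : ∀ i j, i ≤ j → p ≤ i → j < r → j < z r → antichainWidth D (i, j) + 2 ≤ rnk z i j := by
    intro i j hij hpi hjr hjzr
    refine add_two_le_rnk h.isFPF hDsymm hij (fun a hia haj ha => ?_)
      (hdiag i hpi (by omega) (by omega)) (hdiag j (by omega) hjr hjzr)
    rw [Finset.mem_Ioc] at ha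
    exact hfree a (by omega) (by omega) (by omega) (by omega)
  intro i j
  have hrnk := h.rnk_eq_conjSwap_add i j
  have hle := hD i j
  have hij := hslack i j
  have hji := hslack j i
  have hoffij := hoff i j
  have hoffji := hoff j i
  rw [hcomm j i, rnk_comm h.isFPF j i] at hji hoffji
  split_ifs at hrnk <;> omega

theorem IsCorner.exists_isRaisingSwap (h : IsCorner z p) (hDsymm : ∀ c ∈ D, c.swap ∈ D)
    (hDdiag : ∀ c ∈ D, c.1 ≠ c.2) (hD : IsStandard z D) (hzero : antichainWidth D (p, z p) = 0) :
    ∃ r, IsRaisingSwap z p r ∧ IsStandard (conjSwap z p r) D := by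
  classical
  have hexists : ∃ m r, m = r + z r ∧ p < r ∧ z p < z r ∧
      ∀ i j, p ≤ i → i < r → z p ≤ j → j < z r → antichainWidth D (i, j) < rnk z i j := by
    have hblocked := h.not_isBlocked hDsymm hD hzero
    simp only [IsBlocked] at hblocked
    push Not at hblocked
    obtain ⟨r, hpr, hqr, hr⟩ := hblocked
    exact ⟨_, r, rfl, hpr, hqr, fun i j hpi hir hqj hjr =>
      (hD i j).lt_of_ne (hr i j hpi hir hqj hjr)⟩
  obtain ⟨r, hm, hpr, hqr, hslack⟩ := Nat.find_spec hexists
  have hmin := fun m => Nat.find_min hexists (m := m)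
  have hraise : IsRaisingSwap z p r := ⟨h.isFPF, h.apply_lt, hpr, hqr⟩
  refine ⟨r, hraise, hraise.isStandard_conjSwap hDsymm hDdiag hD hslack ?_⟩
  intro a hpa har hqa haz
  exact hmin (a + z a) (by omega) ⟨a, rfl, hpa, hqa, fun i j hpi hia hqj hja =>
    hslack i j hpi (by omega) hqj (by omega)⟩

end Raising
end Involution

/-! ### Pfaffians by recursive expansion -/

section PfaffianOn

variable {ι : Type*} [LinearOrder ι] {R : Type*} [CommRing R]

/-- The sign `(-1)^{#{a ∈ V : a < x}}` picked up when `x` is moved to the front of `V`. -/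
def eraseSign (R : Type*) [CommRing R] (V : Finset ι) (x : ι) : R :=
  (-1) ^ (V.filter (· < x)).card

/-- The sign picked up when `x` and then `y` are moved to the front of `V`: the coefficient of
`M x y` in the expansion of a Pfaffian along row `x`. -/
def pairSign (R : Type*) [CommRing R] (V : Finset ι) (x y : ι) : R :=
  eraseSign R V x * eraseSign R (V.erase x) y

theorem eraseSign_eq_ite_mul_erase {V : Finset ι} {a : ι} (ha : a ∈ V) (b : ι) :
    eraseSign R V b = (if a < b then -1 else 1) * eraseSign R (V.erase a) b := by
  unfold eraseSign
  rw [Finset.filter_erase]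
  split_ifs with h
  · rw [← Finset.card_erase_add_one (Finset.mem_filter.2 ⟨ha, h⟩), pow_succ']
  · rw [Finset.erase_eq_of_notMem (by simp [h]), one_mul]

theorem pairSign_swap {V : Finset ι} {a b : ι} (ha : a ∈ V) (hb : b ∈ V.erase a) :
    pairSign R V a b = -pairSign R V b a := by
  obtain ⟨hba, hbV⟩ := Finset.mem_erase.1 hb
  rw [pairSign, pairSign, eraseSign_eq_ite_mul_erase ha b, eraseSign_eq_ite_mul_erase hbV a]
  rcases lt_or_gt_of_ne hba with h | h <;> rw [if_pos h, if_neg h.not_gt] <;> ring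

theorem pairSign_mul_swap_middle {V : Finset ι} {a b c : ι} (d : ι) (hb : b ∈ V.erase a)
    (hc : c ∈ (V.erase a).erase b) :
    pairSign R V a b * pairSign R ((V.erase a).erase b) c d =
      -(pairSign R V a c * pairSign R ((V.erase a).erase c) b d) := by
  have hbc := pairSign_swap (R := R) hb hc
  simp only [pairSign] at hbc ⊢
  rw [Finset.erase_right_comm (a := c) (b := b)]
  linear_combination eraseSign R V a * eraseSign R (((V.erase a).erase b).erase c) d * hbc

theorem pairSign_mul_comm {V : Finset ι} {a b c d : ι} (ha : a ∈ V) (hb : b ∈ V.erase a)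
    (hc : c ∈ (V.erase a).erase b) (hd : d ∈ ((V.erase a).erase b).erase c) :
    pairSign R V a b * pairSign R ((V.erase a).erase b) c d =
      pairSign R V c d * pairSign R ((V.erase c).erase d) a b := by
  simp only [Finset.mem_erase] at hb hc hd
  have h₁ := pairSign_mul_swap_middle (R := R) (V := V) (a := a) (b := b) (c := c) d
    (by simp [hb]) (by simp [hc])
  have h₂ := pairSign_swap (R := R) (V := V) (a := a) (b := c) ha (by simp [hc])
  have h₃ := pairSign_swap (R := R) (V := (V.erase a).erase c) (a := b) (b := d)
    (by simp [hb, hc.1.symm]) (by simp [hd])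
  have h₄ := pairSign_mul_swap_middle (R := R) (V := V) (a := c) (b := a) (c := d) b
    (by simp [ha, hc.2.1.symm]) (by simp [hd])
  rw [Finset.erase_right_comm (a := c)] at h₄
  rw [h₁, h₂, h₃]
  linear_combination -h₄

theorem pairSign_mul_swap_snd {V : Finset ι} {a b c d : ι} (hb : b ∈ V.erase a)
    (hc : c ∈ (V.erase a).erase b) (hd : d ∈ ((V.erase a).erase b).erase c) :
    pairSign R V a b * pairSign R ((V.erase a).erase b) c d =
      -(pairSign R V a d * pairSign R ((V.erase a).erase d) c b) := by
  simp only [Finset.mem_erase] at hb hc hd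
  have h₁ := pairSign_mul_swap_middle (R := R) (V := V) (a := a) (b := b) (c := c) d
    (by simp [hb]) (by simp [hc])
  have h₂ := pairSign_swap (R := R) (V := (V.erase a).erase c) (a := b) (b := d)
    (by simp [hb, hc.1.symm]) (by simp [hd])
  have h₃ := pairSign_mul_swap_middle (R := R) (V := V) (a := a) (b := c) (c := d) b
    (by simp [hc]) (by simp [hd])
  rw [h₁, h₂]
  linear_combination h₃

theorem pairSign_eq_neg_pow_card_between {V : Finset ι} {x y : ι} (hy : y ∈ V) (hyx : y < x) :
    pairSign R V x y = -(-1) ^ (V.filter fun i => y < i ∧ i < x).card := by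
  have hbelow_x : V.filter (· < x) =
      insert y (V.filter (· < y) ∪ V.filter fun i => y < i ∧ i < x) := by
    ext a; grind
  have hbelow_y : (V.erase x).filter (· < y) = V.filter (· < y) := by
    ext a; grind
  have hdisj : Disjoint (V.filter (· < y)) (V.filter fun i => y < i ∧ i < x) := by
    rw [Finset.disjoint_left]; grind
  have hsq : ((-1 : R) ^ (V.filter (· < y)).card) * (-1) ^ (V.filter (· < y)).card = 1 := by
    rw [← mul_pow]; simp
  rw [pairSign, eraseSign, eraseSign, hbelow_x, hbelow_y, Finset.card_insert_of_notMem (by simp),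
    Finset.card_union_of_disjoint hdisj, pow_succ, pow_add]
  linear_combination (-(-1) ^ (V.filter fun i => y < i ∧ i < x).card : R) * hsq

theorem eraseSign_image {κ : Type*} [LinearOrder κ] {e : ι → κ} {V : Finset ι}
    (he : StrictMonoOn e V) {x : ι} (hx : x ∈ V) :
    eraseSign R (V.image e) (e x) = eraseSign R V x := by
  unfold eraseSign
  rw [Finset.filter_image, Finset.filter_congr fun a ha => he.lt_iff_lt ha hx,
    Finset.card_image_of_injOn (he.injOn.mono (Finset.coe_subset.2 (Finset.filter_subset _ _)))]

/-- The Pfaffian of the submatrix of `M` with rows and columns `V`, defined by expansion along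
the row of the largest element. -/
def pfaffianOn (M : ι → ι → R) (V : Finset ι) : R :=
  if h : V.Nonempty then
    ∑ y ∈ (V.erase (V.max' h)).attach,
      pairSign R V (V.max' h) y * M (V.max' h) y * pfaffianOn M ((V.erase (V.max' h)).erase y)
  else 1
termination_by V.card
decreasing_by
  exact (Finset.card_erase_lt_of_mem y.2).trans (Finset.card_erase_lt_of_mem (V.max'_mem h))

@[simp]
theorem pfaffianOn_empty (M : ι → ι → R) : pfaffianOn M ∅ = 1 := by
  rw [pfaffianOn, dif_neg Finset.not_nonempty_empty]

theorem pfaffianOn_expand_max (M : ι → ι → R) {V : Finset ι} {x : ι} (hx : x ∈ V)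
    (hmax : ∀ y ∈ V, y ≤ x) :
    pfaffianOn M V =
      ∑ y ∈ V.erase x, pairSign R V x y * M x y * pfaffianOn M ((V.erase x).erase y) := by
  have h : V.Nonempty := ⟨x, hx⟩
  have hmx : V.max' h = x := le_antisymm (hmax _ (V.max'_mem h)) (V.le_max' x hx)
  rw [pfaffianOn, dif_pos h, hmx]
  exact Finset.sum_attach (V.erase x) fun y =>
    pairSign R V x y * M x y * pfaffianOn M ((V.erase x).erase y)

@[elab_as_elim]
theorem induction_on_erase_max {P : Finset ι → Prop} (V : Finset ι) (empty : P ∅)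
    (erase_erase : ∀ (V : Finset ι) (x : ι), x ∈ V → (∀ y ∈ V, y ≤ x) →
      (∀ y ∈ V.erase x, P ((V.erase x).erase y)) → P V) : P V := by
  induction V using Finset.strongInduction with
  | H V ih =>
    rcases V.eq_empty_or_nonempty with rfl | hV
    · exact empty
    · exact erase_erase V _ (V.max'_mem hV) V.le_max' fun y _ =>
        ih _ ((Finset.erase_subset _ _).trans_ssubset (Finset.erase_ssubset (V.max'_mem hV)))

theorem pfaffianOn_congr {M M' : ι → ι → R} {V : Finset ι}
    (h : ∀ a ∈ V, ∀ b ∈ V, M a b = M' a b) : pfaffianOn M V = pfaffianOn M' V := by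
  induction V using induction_on_erase_max with
  | empty => simp
  | erase_erase V x hx hmax ih =>
    rw [pfaffianOn_expand_max M hx hmax, pfaffianOn_expand_max M' hx hmax]
    refine Finset.sum_congr rfl fun y hy => ?_
    have hsub : (V.erase x).erase y ⊆ V := (Finset.erase_subset _ _).trans (Finset.erase_subset _ _)
    rw [h x hx y (Finset.mem_of_mem_erase hy),
      ih y hy fun a ha b hb => h a (hsub ha) b (hsub hb)]

theorem pfaffianOn_eq_zero_of_odd (M : ι → ι → R) {V : Finset ι} (h : Odd V.card) :
    pfaffianOn M V = 0 := by
  induction V using induction_on_erase_max with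
  | empty => simp at h
  | erase_erase V x hx hmax ih =>
    rw [pfaffianOn_expand_max M hx hmax]
    refine Finset.sum_eq_zero fun y hy => ?_
    have hcard : ((V.erase x).erase y).card + 1 + 1 = V.card := by
      rw [Finset.card_erase_add_one hy, Finset.card_erase_add_one hx]
    rw [ih y hy (by rw [← hcard] at h; simpa [Nat.odd_add_one] using h), mul_zero]

theorem map_pfaffianOn {S : Type*} [CommRing S] (φ : R →+* S) (M : ι → ι → R) (V : Finset ι) :
    φ (pfaffianOn M V) = pfaffianOn (fun a b => φ (M a b)) V := by
  induction V using induction_on_erase_max with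
  | empty => simp
  | erase_erase V x hx hmax ih =>
    rw [pfaffianOn_expand_max _ hx hmax, pfaffianOn_expand_max _ hx hmax, map_sum]
    refine Finset.sum_congr rfl fun y hy => ?_
    rw [map_mul, map_mul, ih y hy]
    simp [pairSign, eraseSign]

theorem erase_image_of_injOn {α β : Type*} [DecidableEq α] [DecidableEq β] {e : α → β}
    {V : Finset α} (he : Set.InjOn e V) {a : α} (ha : a ∈ V) :
    (V.image e).erase (e a) = (V.erase a).image e := by
  simpa [← Finset.sdiff_singleton_eq_erase] using
    (Finset.image_sdiff_of_injOn he (Finset.singleton_subset_iff.2 ha)).symm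

theorem pfaffianOn_image {κ : Type*} [LinearOrder κ] {e : ι → κ} (M : κ → κ → R) {V : Finset ι}
    (he : StrictMonoOn e V) :
    pfaffianOn M (V.image e) = pfaffianOn (fun a b => M (e a) (e b)) V := by
  induction V using induction_on_erase_max with
  | empty => simp
  | erase_erase V x hx hmax ih =>
    have he₁ : StrictMonoOn e (V.erase x) := he.mono (Finset.erase_subset _ _)
    have hmax' : ∀ y ∈ V.image e, y ≤ e x :=
      Finset.forall_mem_image.2 fun y hy => he.monotoneOn hy hx (hmax y hy)
    rw [pfaffianOn_expand_max _ hx hmax,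
      pfaffianOn_expand_max M (Finset.mem_image_of_mem e hx) hmax',
      erase_image_of_injOn he.injOn hx, Finset.sum_image he₁.injOn]
    refine Finset.sum_congr rfl fun y hy => ?_
    rw [erase_image_of_injOn he₁.injOn hy, ih y hy (he₁.mono (Finset.erase_subset _ _)), pairSign,
      erase_image_of_injOn he.injOn hx, eraseSign_image he hx, eraseSign_image he₁ hy, pairSign]

/-- Alternating bilinear arrays: skew-symmetric with zero diagonal, in any characteristic. -/
structure IsAlternating (M : ι → ι → R) : Prop where
  swap : ∀ a b, M a b = -M b a
  diag : ∀ a, M a a = 0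

namespace IsAlternating

variable {M : ι → ι → R}

theorem pfaffianOn_expand (hM : IsAlternating M) {V : Finset ι} {x : ι} (hx : x ∈ V) :
    pfaffianOn M V =
      ∑ y ∈ V.erase x, pairSign R V x y * M x y * pfaffianOn M ((V.erase x).erase y) := by
  induction V using induction_on_erase_max with
  | empty => simp at hx
  | erase_erase V m hm hmax ih =>
  rcases eq_or_ne m x with rfl | hmx
  · exact pfaffianOn_expand_max M hm hmax
  have hxm : x ∈ V.erase m := Finset.mem_erase.2 ⟨hmx.symm, hx⟩
  have hmx' : m ∈ V.erase x := Finset.mem_erase.2 ⟨hmx, hm⟩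
  rw [pfaffianOn_expand_max M hm hmax, ← Finset.add_sum_erase _ _ hxm,
    ← Finset.add_sum_erase _ _ hmx']
  congr 1
  · rw [hM.swap x m, pairSign_swap hm hxm, Finset.erase_right_comm]; ring
  have expand_x : ∀ y ∈ (V.erase m).erase x,
      pairSign R V m y * M m y * pfaffianOn M ((V.erase m).erase y) =
        ∑ w ∈ ((V.erase m).erase y).erase x,
          pairSign R V m y * pairSign R ((V.erase m).erase y) x w *
            (M m y * M x w * pfaffianOn M ((((V.erase m).erase y).erase x).erase w)) := by
    intro y hy
    rw [Finset.mem_erase] at hy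
    rw [ih y hy.2 (Finset.mem_erase.2 ⟨hy.1.symm, hxm⟩), Finset.mul_sum]
    exact Finset.sum_congr rfl fun w _ => by ring
  have expand_m : ∀ w ∈ (V.erase x).erase m,
      pairSign R V x w * M x w * pfaffianOn M ((V.erase x).erase w) =
        ∑ y ∈ ((V.erase x).erase w).erase m,
          pairSign R V x w * pairSign R ((V.erase x).erase w) m y *
            (M m y * M x w * pfaffianOn M ((((V.erase x).erase w).erase m).erase y)) := by
    intro w hw
    rw [Finset.mem_erase] at hw
    rw [pfaffianOn_expand_max M (Finset.mem_erase.2 ⟨hw.1.symm, hmx'⟩)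
      fun y hy => hmax y (Finset.mem_of_mem_erase (Finset.mem_of_mem_erase hy)), Finset.mul_sum]
    exact Finset.sum_congr rfl fun y _ => by ring
  rw [Finset.sum_congr rfl expand_x, Finset.sum_congr rfl expand_m,
    Finset.sum_comm' (t' := (V.erase x).erase m) (s' := fun w => ((V.erase x).erase w).erase m)]
  · refine Finset.sum_congr rfl fun w hw => Finset.sum_congr rfl fun y hy => ?_
    simp only [Finset.mem_erase] at hw hy
    rw [pairSign_mul_comm hm (by simp [hy]) (by simp [hx, hy.2.2.1.symm, hmx.symm])
      (by simp [hw, hy.2.1.symm])]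
    congr 3
    grind
  · grind

theorem sum_mul_pfaffianOn_eq_zero_of_ne (hM : IsAlternating M) {V : Finset ι} {k l : ι}
    (hl : l ∈ V) (hkl : k ≠ l) :
    ∑ y ∈ V.erase k, pairSign R V k y * M l y * pfaffianOn M ((V.erase k).erase y) = 0 := by
  have hlk : l ∈ V.erase k := Finset.mem_erase.2 ⟨hkl.symm, hl⟩
  rw [← Finset.add_sum_erase _ _ hlk, hM.diag, mul_zero, zero_mul, zero_add]
  have expand_l : ∀ y ∈ (V.erase k).erase l,
      pairSign R V k y * M l y * pfaffianOn M ((V.erase k).erase y) =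
        ∑ w ∈ ((V.erase k).erase l).erase y,
          pairSign R V k y * pairSign R ((V.erase k).erase y) l w *
            (M l y * M l w * pfaffianOn M ((((V.erase k).erase y).erase l).erase w)) := by
    intro y hy
    rw [hM.pfaffianOn_expand (V := (V.erase k).erase y)
        (Finset.mem_erase.2 ⟨(Finset.ne_of_mem_erase hy).symm, hlk⟩), Finset.mul_sum,
      Finset.erase_right_comm]
    exact Finset.sum_congr rfl fun w _ => by ring
  rw [Finset.sum_congr rfl expand_l, ← Finset.sum_finset_product ((V.erase k).erase l).offDiag
    ((V.erase k).erase l) (fun y => ((V.erase k).erase l).erase y)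
    (f := fun p : ι × ι => pairSign R V k p.1 * pairSign R ((V.erase k).erase p.1) l p.2 *
      (M l p.1 * M l p.2 * pfaffianOn M ((((V.erase k).erase p.1).erase l).erase p.2)))
    (by grind)]
  refine Finset.sum_involution (fun p _ => p.swap) ?_ ?_ ?_ (by simp)
  · rintro ⟨y, w⟩ hp
    simp only [Finset.mem_offDiag, Finset.mem_erase] at hp
    obtain ⟨⟨hyl, hyk, hy⟩, ⟨hwl, hwk, hw⟩, hyw⟩ := hp
    have hset : (((V.erase k).erase w).erase l).erase y =
        (((V.erase k).erase y).erase l).erase w := by grind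
    simp only [Prod.fst_swap, Prod.snd_swap]
    rw [hset, pairSign_mul_swap_snd (by simp [hyk, hy]) (by simp [hl, hkl.symm, hyl.symm])
      (by simp [hwl, hwk, hw, hyw.symm])]
    ring
  · rintro ⟨y, w⟩ hp _ h
    exact (Finset.mem_offDiag.1 hp).2.2 (congrArg Prod.snd h)
  · grind

/-- A relation between the rows annihilates the Pfaffian: contract it with the expansions along
row `k`, all but one of which vanish. -/
theorem mul_pfaffianOn_eq_zero (hM : IsAlternating M) {V : Finset ι} (c : ι → R)
    (hc : ∀ y ∈ V, ∑ l ∈ V, c l * M l y = 0) {k : ι} (hk : k ∈ V) : c k * pfaffianOn M V = 0 := by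
  have hsum : ∑ l ∈ V, c l * ∑ y ∈ V.erase k,
      pairSign R V k y * M l y * pfaffianOn M ((V.erase k).erase y) = 0 := by
    simp_rw [Finset.mul_sum]
    rw [Finset.sum_comm]
    refine Finset.sum_eq_zero fun y hy => ?_
    calc _ = (∑ l ∈ V, c l * M l y) * (pairSign R V k y * pfaffianOn M ((V.erase k).erase y)) := by
          rw [Finset.sum_mul]; exact Finset.sum_congr rfl fun l _ => by ring
      _ = 0 := by rw [hc y (Finset.mem_of_mem_erase hy), zero_mul]
  rwa [← Finset.add_sum_erase _ _ hk, ← hM.pfaffianOn_expand hk, Finset.sum_eq_zero, add_zero]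
    at hsum
  intro l hl
  obtain ⟨hlk, hlV⟩ := Finset.mem_erase.1 hl
  rw [hM.sum_mul_pfaffianOn_eq_zero_of_ne hlV hlk.symm, mul_zero]

theorem pfaffianOn_eq_sub_of_eq_off_pair (hM : IsAlternating M) {M' : ι → ι → R}
    (hM' : IsAlternating M') {V : Finset ι} {a b : ι} (ha : a ∈ V) (hb : b ∈ V.erase a)
    (hzero : M' a b = 0) (heq : ∀ x y, (x, y) ≠ (a, b) → (x, y) ≠ (b, a) → M' x y = M x y) :
    pfaffianOn M' V =
      pfaffianOn M V - pairSign R V a b * M a b * pfaffianOn M ((V.erase a).erase b) := by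
  have hba : b ≠ a := Finset.ne_of_mem_erase hb
  rw [hM.pfaffianOn_expand ha, hM'.pfaffianOn_expand ha, ← Finset.add_sum_erase _ _ hb,
    ← Finset.add_sum_erase _ _ hb, hzero, mul_zero, zero_mul, zero_add, add_sub_cancel_left]
  refine Finset.sum_congr rfl fun y hy => ?_
  rw [heq a y (by simp [Finset.ne_of_mem_erase hy]) (by simp [hba.symm])]
  congr 1
  refine pfaffianOn_congr fun c hc d hd => ?_
  simp only [Finset.mem_erase] at hc hd
  exact heq c d (by simp [hc.2.1]) (by simp [hd.2.1])

end IsAlternating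

end PfaffianOn

section InvolutionExpansion

variable {α : Type*} [LinearOrder α] [Fintype α] {R : Type*} [CommRing R]

/-- The involutions whose set of non-fixed points is exactly `V`, i.e. the perfect matchings
of `V`. -/
def involutionsOn (V : Finset α) : Finset (Equiv.Perm α) :=
  Finset.univ.filter fun z => (∀ i, z (z i) = i) ∧ ∀ i, z i ≠ i ↔ i ∈ V

/-- The pairs counted by `ℓ_fpf`, restricted to non-fixed points `p.1` so that they make sense for
involutions with fixed points. -/
def crossingPairs (z : Equiv.Perm α) : Finset (α × α) :=
  Finset.univ.filter fun p => z p.1 ≠ p.1 ∧ p.2 < p.1 ∧ p.2 < z p.1 ∧ p.1 < z p.2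

/-- The term of the involution `z` in the Pfaffian of `A`. -/
def pfaffianTerm (A : α → α → R) (z : Equiv.Perm α) : R :=
  (-1) ^ (crossingPairs z).card * ∏ i ∈ Finset.univ.filter (fun i => z i < i), A (z i) i

theorem mem_involutionsOn {V : Finset α} {z : Equiv.Perm α} :
    z ∈ involutionsOn V ↔ (∀ i, z (z i) = i) ∧ ∀ i, z i ≠ i ↔ i ∈ V := by
  simp [involutionsOn]

theorem mem_crossingPairs {z : Equiv.Perm α} {p : α × α} :
    p ∈ crossingPairs z ↔ z p.1 ≠ p.1 ∧ p.2 < p.1 ∧ p.2 < z p.1 ∧ p.1 < z p.2 := by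
  simp [crossingPairs]

theorem involutionsOn_empty : involutionsOn (∅ : Finset α) = {1} := by
  ext z
  simp only [mem_involutionsOn, Finset.notMem_empty, iff_false, not_not, Finset.mem_singleton]
  exact ⟨fun h => Equiv.ext h.2, by rintro rfl; simp⟩

section MulSwap

variable {V : Finset α} {x y : α} {t : Equiv.Perm α}

theorem mul_swap_mem_involutionsOn (hx : x ∈ V) (hy : y ∈ V.erase x)
    (ht : t ∈ involutionsOn ((V.erase x).erase y)) : t * Equiv.swap x y ∈ involutionsOn V := by
  simp only [mem_involutionsOn, Equiv.Perm.mul_apply, Equiv.swap_apply_def] at ht ⊢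
  grind

theorem mul_swap_mem_involutionsOn_erase (ht : t ∈ involutionsOn V) (htx : t x = y) :
    t * Equiv.swap x y ∈ involutionsOn ((V.erase x).erase y) := by
  simp only [mem_involutionsOn, Equiv.Perm.mul_apply, Equiv.swap_apply_def] at ht ⊢
  grind

/-- Adding the arc `{y, x}` with `x` maximal creates one new pair for each `i` between `y` and `x`:
either `(i, y)`, or `(y, t i)` when the arc of `i` starts to the left of `y`. -/
theorem crossingPairs_mul_swap (hmax : ∀ a ∈ V, a ≤ x) (hyx : y < x)
    (ht : t ∈ involutionsOn ((V.erase x).erase y)) :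
    crossingPairs (t * Equiv.swap x y) = crossingPairs t ∪
      (V.filter fun i => y < i ∧ i < x).image fun i => if y < t i then (i, y) else (y, t i) := by
  simp only [mem_involutionsOn, Finset.mem_erase] at ht
  have hlt : ∀ a, t a ≠ a → a ∈ V ∧ t a ∈ V ∧ a < x ∧ t a < x := by grind
  ext ⟨i, j⟩
  simp only [Finset.mem_union, mem_crossingPairs, Finset.mem_image,
    Equiv.Perm.mul_apply, Equiv.swap_apply_def]
  constructor
  · rintro ⟨hi, hji, hjz, hiz⟩
    by_cases hj : j = y
    · exact .inr ⟨i, by grind⟩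
    by_cases hi : i = y
    · exact .inr ⟨t j, by grind⟩
    · exact .inl (by grind)
  · grind

theorem card_crossingPairs_mul_swap (hmax : ∀ a ∈ V, a ≤ x) (hyx : y < x)
    (ht : t ∈ involutionsOn ((V.erase x).erase y)) :
    (crossingPairs (t * Equiv.swap x y)).card =
      (crossingPairs t).card + (V.filter fun i => y < i ∧ i < x).card := by
  rw [crossingPairs_mul_swap hmax hyx ht, Finset.card_union_of_disjoint,
    Finset.card_image_of_injOn]
  · intro c hc d hd h
    have hinj : t c = t d → c = d := fun h => t.injective h
    simp only [Finset.coe_filter, Set.mem_ofPred_eq] at hc hd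
    grind
  · simp only [mem_involutionsOn] at ht
    simp only [Finset.disjoint_left, mem_crossingPairs]
    grind

theorem pfaffianTerm_mul_swap (A : α → α → R) (hmax : ∀ a ∈ V, a ≤ x) (hy : y ∈ V)
    (hyx : y < x) (ht : t ∈ involutionsOn ((V.erase x).erase y)) :
    pfaffianTerm A (t * Equiv.swap x y) = -pairSign R V x y * A y x * pfaffianTerm A t := by
  have hcard := card_crossingPairs_mul_swap hmax hyx ht
  simp only [mem_involutionsOn, Finset.mem_erase] at ht
  have htx : t x = x := by grind
  have hty : t y = y := by grind
  have hne : ∀ i, i ≠ x → i ≠ y → (t * Equiv.swap x y) i = t i := fun i hix hiy => by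
    rw [Equiv.Perm.mul_apply, Equiv.swap_apply_of_ne_of_ne hix hiy]
  have hdesc : (Finset.univ.filter fun i => (t * Equiv.swap x y) i < i) =
      insert x (Finset.univ.filter fun i => t i < i) := by
    ext i
    simp only [Finset.mem_filter, Finset.mem_univ, true_and, Finset.mem_insert]
    rcases eq_or_ne i x with rfl | hix
    · simp [hty, hyx]
    rcases eq_or_ne i y with rfl | hiy
    · simp [htx, hty, hix, hyx.le]
    · simp [hne i hix hiy, hix]
  have hprod : ∏ i ∈ Finset.univ.filter (fun i => t i < i), A ((t * Equiv.swap x y) i) i =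
      ∏ i ∈ Finset.univ.filter (fun i => t i < i), A (t i) i := by
    refine Finset.prod_congr rfl fun i hi => ?_
    rw [hne i] <;> rintro rfl <;> simp_all
  rw [pfaffianTerm, pfaffianTerm, hcard, hdesc, Finset.prod_insert (by simp [htx]), hprod,
    Equiv.Perm.mul_apply, Equiv.swap_apply_left, hty, pow_add,
    pairSign_eq_neg_pow_card_between hy hyx]
  ring

end MulSwap

theorem sum_pfaffianTerm (A : α → α → R) (hA : ∀ a b, A a b = -A b a) (V : Finset α) :
    ∑ z ∈ involutionsOn V, pfaffianTerm A z = pfaffianOn A V := by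
  induction V using induction_on_erase_max with
  | empty => simp [involutionsOn_empty, pfaffianTerm, crossingPairs]
  | erase_erase V x hx hmax ih =>
    have hmaps : ∀ s ∈ involutionsOn V, s x ∈ V.erase x := by
      simp only [mem_involutionsOn]; grind
    rw [pfaffianOn_expand_max A hx hmax, ← Finset.sum_fiberwise_of_maps_to hmaps]
    refine Finset.sum_congr rfl fun y hy => ?_
    obtain ⟨hyx, hyV⟩ := Finset.mem_erase.1 hy
    rw [← ih y hy, Finset.mul_sum]
    refine Finset.sum_bij' (fun s _ => s * Equiv.swap x y) (fun t _ => t * Equiv.swap x y)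
      (fun s hs => ?_) (fun t ht => ?_) (fun s _ => by simp [mul_assoc])
      (fun t _ => by simp [mul_assoc]) fun s hs => ?_
    · exact mul_swap_mem_involutionsOn_erase (Finset.mem_filter.1 hs).1 (Finset.mem_filter.1 hs).2
    · refine Finset.mem_filter.2 ⟨mul_swap_mem_involutionsOn hx hy ht, ?_⟩
      rw [mem_involutionsOn] at ht
      simpa using ht.2 y
    · rw [Finset.mem_filter] at hs
      have hterm := pfaffianTerm_mul_swap A hmax hyV ((hmax y hyV).lt_of_ne hyx)
        (mul_swap_mem_involutionsOn_erase hs.1 hs.2)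
      rw [mul_assoc, Equiv.swap_mul_self, mul_one] at hterm
      rw [hterm, hA x y]
      ring

end InvolutionExpansion

section MatrixPfaffian

variable {R : Type*} [CommRing R]

theorem Pfaffian_eq_pfaffianOn_univ {N : ℕ} (A : Matrix (Fin N) (Fin N) R)
    (hA : ∀ a b, A a b = -A b a) : Pfaffian A = pfaffianOn (fun a b => A a b) Finset.univ := by
  rw [← sum_pfaffianTerm _ hA, Pfaffian]
  refine Finset.sum_congr (by ext; simp [mem_involutionsOn, and_comm]) fun z hz => ?_
  rw [mem_involutionsOn] at hz
  have hne : ∀ i, z i ≠ i := fun i => (hz.2 i).2 (Finset.mem_univ i)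
  simp only [pfaffianTerm, ellFpfFin, crossingPairs, hne, ne_eq, not_false_eq_true, true_and]

theorem Pfaffian_submatrix_orderEmbOfFin {n : ℕ} (A : Matrix (Fin n) (Fin n) R)
    (hA : ∀ a b, A a b = -A b a) (T : Finset (Fin n)) :
    Pfaffian (A.submatrix (fun s => T.orderEmbOfFin rfl s) fun t => T.orderEmbOfFin rfl t) =
      pfaffianOn (fun a b => A a b) T := by
  have hmono : StrictMonoOn (T.orderEmbOfFin rfl) (Finset.univ : Finset (Fin T.card)) :=
    (T.orderEmbOfFin rfl).strictMono.strictMonoOn _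
  rw [Pfaffian_eq_pfaffianOn_univ (A.submatrix _ _) fun a b => hA _ _]
  conv_rhs => rw [← Finset.image_orderEmbOfFin_univ T rfl, pfaffianOn_image _ hmono]
  rfl

end MatrixPfaffian

/-! ### The reverse lexicographic monomial order -/

section Revlex

variable {n : ℕ}

open scoped MonomialOrder

theorem varLT_iff_toLex_lt {v w : SSVar n} : varLT v w ↔ toLex v.1 < toLex w.1 :=
  Prod.Lex.toLex_lt_toLex.symm

/-- An additive embedding which turns the reverse lexicographic order into a lexicographic one: the
degree comes first, then the negated exponents, those of the largest variables first. -/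
noncomputable def revlexKey (m : SSVar n →₀ ℕ) :
    ℕ ×ₗ Lex ({p : Fin n ×ₗ Fin n // (ofLex p).2 < (ofLex p).1}ᵒᵈ → ℤ) :=
  toLex (m.degree, toLex fun p => -(m ⟨ofLex p.ofDual.1, p.ofDual.2⟩ : ℤ))

theorem revlexKey_add (a b : SSVar n →₀ ℕ) : revlexKey (a + b) = revlexKey a + revlexKey b := by
  refine congrArg toLex (Prod.ext (map_add _ a b) (funext fun p => ?_))
  exact (congrArg Neg.neg (Nat.cast_add _ _)).trans (neg_add _ _)

theorem revlexKey_injective : Function.Injective (revlexKey (n := n)) := by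
  intro a b hab
  ext v
  have hexp := congrFun (congrArg Prod.snd hab) (OrderDual.toDual ⟨toLex v.1, v.2⟩)
  exact Nat.cast_injective (neg_injective (show -(a v : ℤ) = -(b v : ℤ) from hexp))

theorem revlexKey_lt_iff {a b : SSVar n →₀ ℕ} : revlexKey a < revlexKey b ↔ revlexLT a b := by
  refine Prod.Lex.toLex_lt_toLex.trans (or_congr Iff.rfl (and_congr Iff.rfl ?_))
  constructor
  · rintro ⟨p, hp, hlt⟩
    refine ⟨⟨ofLex p.ofDual.1, p.ofDual.2⟩, by simpa using hlt, fun w hw => ?_⟩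
    simpa using hp (OrderDual.toDual ⟨toLex w.1, w.2⟩) (varLT_iff_toLex_lt.1 hw)
  · rintro ⟨v, hlt, hv⟩
    refine ⟨OrderDual.toDual ⟨toLex v.1, v.2⟩, fun p hp => ?_, by simpa using hlt⟩
    simpa using hv ⟨ofLex p.ofDual.1, p.ofDual.2⟩ (varLT_iff_toLex_lt.2 hp)

theorem revlexKey_monotone : Monotone (revlexKey (n := n)) := by
  intro a b hab
  obtain ⟨c, rfl⟩ := exists_add_of_le hab
  rcases eq_or_ne c 0 with rfl | hc
  · rw [add_zero]
  · refine (revlexKey_lt_iff.2 (Or.inl ?_)).le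
    have hpos : 0 < c.degree := Nat.pos_of_ne_zero fun h => hc (c.degree_eq_zero_iff.1 h)
    have hadd : (a + c).degree = a.degree + c.degree := map_add _ a c
    exact (Nat.lt_add_of_pos_right hpos).trans_eq hadd.symm

/-- The exponent vectors of `R_n`, as a type synonym carrying the reverse lexicographic order. -/
def RevlexExponent (n : ℕ) : Type := SSVar n →₀ ℕ

noncomputable instance : AddCommMonoid (RevlexExponent n) :=
  inferInstanceAs (AddCommMonoid (SSVar n →₀ ℕ))

noncomputable instance : LinearOrder (RevlexExponent n) :=
  LinearOrder.lift' (revlexKey (n := n)) revlexKey_injective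

instance : IsOrderedAddMonoid (RevlexExponent n) :=
  Function.Injective.isOrderedAddMonoid (revlexKey (n := n)) revlexKey_add Iff.rfl

/-- The reverse lexicographic order `revlexLT`, as a monomial order of Mathlib. -/
noncomputable def revlex (n : ℕ) : MonomialOrder (SSVar n) where
  syn := RevlexExponent n
  toSyn := AddEquiv.refl _
  toSyn_monotone := revlexKey_monotone
  wellFoundedLT_syn :=
    (Monotone.wellQuasiOrderedLE_of_wellQuasiOrderedLE_of_surjective (α := SSVar n →₀ ℕ)
      (β := RevlexExponent n) (f := id) revlexKey_monotone
      Function.surjective_id).to_wellFoundedLT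

theorem revlex_lt_iff {a b : SSVar n →₀ ℕ} : a ≺[revlex n] b ↔ revlexLT a b :=
  revlexKey_lt_iff

theorem revlex_lt_of_varLT {a b : SSVar n →₀ ℕ} (hdeg : a.degree = b.degree) {v : SSVar n}
    (ha : a v ≠ 0) (hb : ∀ w, b w ≠ 0 → varLT w v) : a ≺[revlex n] b := by
  have hbv : b v = 0 := by
    by_contra h
    exact lt_irrefl _ (varLT_iff_toLex_lt.1 (hb v h))
  refine lt_of_le_of_ne (not_lt.1 fun hlt => ?_) fun hab => ha ?_
  · rcases revlex_lt_iff.1 hlt with hlt | ⟨-, w, hw, heq⟩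
    · exact hlt.ne hdeg.symm
    · exact ha ((heq v (hb w (Nat.ne_zero_of_lt hw))).symm.trans hbv)
  · rw [(revlex n).toSyn.injective hab, hbv]

end Revlex

section InitialIdeal

variable {K : Type*} [Field K]

open MvPolynomial in
open scoped MonomialOrder in
theorem exists_sub_mem_and_support_subset {σ : Type*} (μ : MonomialOrder σ)
    {I : Ideal (MvPolynomial σ K)} {S : Set (σ →₀ ℕ)} (hS : IsLowerSet S)
    (hI : ∀ m ∉ S, ∃ g ∈ I, g ≠ 0 ∧ μ.degree g = m) {f : MvPolynomial σ K} (hf : f ≠ 0)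
    (hfS : μ.degree f ∈ S) : ∃ r ≠ 0, f - r ∈ I ∧ (r.support : Set (σ →₀ ℕ)) ⊆ S := by
  classical
  set B : Set (MvPolynomial σ K) := {g | g ∈ I ∧ g ≠ 0 ∧ μ.degree g ∉ S}
  obtain ⟨q, r, hfr, hle, hr⟩ := μ.div_set (B := B)
    (fun b hb => (μ.leadingCoeff_ne_zero_iff.2 hb.2.1).isUnit) f
  rw [Finsupp.linearCombination_apply, Finsupp.sum] at hfr
  have hcoeff : ∀ b : B, coeff (μ.degree f) (q b • (b : MvPolynomial σ K)) = 0 := by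
    intro b
    by_contra hne
    rw [smul_eq_mul, mul_comm, ← ne_eq, ← mem_support_iff] at hne
    have hdeg : μ.degree f = μ.degree (b : MvPolynomial σ K) + μ.degree (q b) := by
      rw [← μ.degree_mul' (by rintro h; simp [h] at hne)]
      exact μ.toSyn.injective ((μ.le_degree hne).antisymm (hle b))
    exact b.2.2.2 (hS (hdeg ▸ le_self_add) hfS)
  refine ⟨r, ?_, ?_, fun m hm => ?_⟩
  · rintro rfl
    refine hf (μ.coeff_degree_eq_zero_iff.1 ?_)
    rw [congrArg (coeff (μ.degree f)) hfr, add_zero, coeff_sum]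
    exact Finset.sum_eq_zero fun b _ => hcoeff b
  · rw [sub_eq_of_eq_add hfr]
    exact I.sum_mem fun b _ => I.mul_mem_left _ b.2.1
  · by_contra hmS
    obtain ⟨g, hgI, hg0, rfl⟩ := hI m hmS
    exact hr _ hm g ⟨hgI, hg0, hmS⟩ le_rfl

theorem initIdeal_revlexLT_eq_span {n : ℕ} (I : Ideal (MvPolynomial (SSVar n) K)) :
    initIdeal revlexLT I = Ideal.span
      {g | ∃ f ∈ I, f ≠ 0 ∧ g = MvPolynomial.monomial ((revlex n).degree f) 1} := by
  refine congrArg Ideal.span (Set.ext fun g => exists_congr fun f => and_congr_right fun _ =>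
    and_congr_right fun hf => ?_)
  constructor
  · rintro ⟨m, hm, hmax, rfl⟩
    by_contra hne
    have hdeg : (revlex n).degree f ≠ m := fun h => hne (by rw [h])
    exact (revlex_lt_iff.2 (hmax _ ((revlex n).degree_mem_support hf) hdeg)).not_ge
      ((revlex n).le_degree hm)
  · rintro rfl
    exact ⟨_, (revlex n).degree_mem_support hf, fun m hm hne => revlex_lt_iff.1
      (((revlex n).le_degree hm).lt_of_ne ((revlex n).toSyn.injective.ne hne)), rfl⟩

end InitialIdeal

/-! ### Leading terms of Pfaffians of the generic matrix -/

section Boxes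

variable {n : ℕ}

/-- The position of the variable `u_{ij}` in the matrix, as a pair of indices starting from `1`. -/
def box (v : SSVar n) : ℕ × ℕ := (v.1.1 + 1, v.1.2 + 1)

theorem box_injective : Function.Injective (box (n := n)) := by
  intro v w h
  simp only [box, Prod.mk.injEq, Nat.add_right_cancel_iff] at h
  exact Subtype.ext (Prod.ext (Fin.ext h.1) (Fin.ext h.2))

theorem box_bounds (v : SSVar n) : 1 ≤ (box v).2 ∧ (box v).2 < (box v).1 ∧ (box v).1 ≤ n := by
  have := Fin.lt_def.1 v.2
  have := v.1.1.2
  simp only [box]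
  omega

theorem box_ssvar {p q : ℕ} (hp : p ≤ n) (hq : 1 ≤ q) (hqp : q < p) :
    box (ssvar p q hp hq hqp) = (p, q) :=
  Prod.ext (Nat.sub_add_cancel (by omega)) (Nat.sub_add_cancel hq)

theorem varLT_iff_toLex_box_lt {v w : SSVar n} : varLT v w ↔ toLex (box v) < toLex (box w) := by
  simp only [Prod.Lex.toLex_lt_toLex, box, varLT, Fin.lt_def, Fin.ext_iff, add_lt_add_iff_right,
    Nat.add_right_cancel_iff]

/-- The positions of the variables dividing the monomial with exponent vector `m`, together with
their mirror images in the diagonal. -/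
def boxes (m : SSVar n →₀ ℕ) : Finset (ℕ × ℕ) :=
  m.support.image box ∪ m.support.image fun v => (box v).swap

theorem mem_boxes {m : SSVar n →₀ ℕ} {c : ℕ × ℕ} :
    c ∈ boxes m ↔ ∃ v, m v ≠ 0 ∧ (box v = c ∨ (box v).swap = c) := by
  simp only [boxes, Finset.mem_union, Finset.mem_image, Finsupp.mem_support_iff, ← exists_or,
    ← and_or_left]

theorem box_mem_boxes {m : SSVar n →₀ ℕ} {v : SSVar n} : box v ∈ boxes m ↔ m v ≠ 0 := by
  refine ⟨fun h => ?_, fun h => mem_boxes.2 ⟨v, h, Or.inl rfl⟩⟩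
  obtain ⟨w, hw, hwv | hwv⟩ := mem_boxes.1 h
  · rwa [← box_injective hwv]
  · have := box_bounds v
    have := box_bounds w
    rw [← hwv] at *
    simp only [Prod.fst_swap, Prod.snd_swap] at *
    omega

theorem swap_mem_boxes {m : SSVar n →₀ ℕ} : ∀ c ∈ boxes m, c.swap ∈ boxes m := by
  intro c hc
  obtain ⟨v, hv, rfl | rfl⟩ := mem_boxes.1 hc
  · exact mem_boxes.2 ⟨v, hv, Or.inr rfl⟩
  · exact mem_boxes.2 ⟨v, hv, Or.inl rfl⟩

theorem fst_ne_snd_of_mem_boxes {m : SSVar n →₀ ℕ} : ∀ c ∈ boxes m, c.1 ≠ c.2 := by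
  intro c hc
  obtain ⟨v, -, rfl | rfl⟩ := mem_boxes.1 hc
  · exact (box_bounds v).2.1.ne'
  · exact (box_bounds v).2.1.ne

theorem fst_mem_Icc_of_mem_boxes {m : SSVar n →₀ ℕ} : ∀ c ∈ boxes m, c.1 ∈ Set.Icc 1 n := by
  intro c hc
  rw [Set.mem_Icc]
  obtain ⟨v, -, rfl | rfl⟩ := mem_boxes.1 hc <;> have := box_bounds v
  · omega
  · rw [Prod.fst_swap]; omega

end Boxes

section PfaffianDegree

open MvPolynomial

theorem pairSign_eq_C {ι σ R : Type*} [LinearOrder ι] [CommRing R] (V : Finset ι) (x y : ι) :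
    pairSign (MvPolynomial σ R) V x y = C (pairSign R V x y) := by
  simp [pairSign, eraseSign]

theorem pairSign_ne_zero {ι R : Type*} [LinearOrder ι] [CommRing R] [Nontrivial R]
    [NoZeroDivisors R] (V : Finset ι) (x y : ι) : pairSign R V x y ≠ 0 :=
  mul_ne_zero (pow_ne_zero _ (neg_ne_zero.2 one_ne_zero))
    (pow_ne_zero _ (neg_ne_zero.2 one_ne_zero))

theorem isHomogeneous_pfaffianOn {ι σ R : Type*} [LinearOrder ι] [CommRing R]
    {M : ι → ι → MvPolynomial σ R} (hM : ∀ a b, (M a b).IsHomogeneous 1) (V : Finset ι) :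
    (pfaffianOn M V).IsHomogeneous (V.card / 2) := by
  induction V using induction_on_erase_max with
  | empty => simpa using isHomogeneous_one σ R
  | erase_erase V x hx hmax ih =>
    rw [pfaffianOn_expand_max M hx hmax]
    refine IsHomogeneous.sum _ _ _ fun y hy => ?_
    have hcard : V.card / 2 = 0 + 1 + ((V.erase x).erase y).card / 2 := by
      have := Finset.card_erase_add_one hx
      have := Finset.card_erase_add_one hy
      omega
    rw [hcard, pairSign_eq_C]
    exact ((isHomogeneous_C _ _).mul (hM x y)).mul (ih y hy)

end PfaffianDegree

section TaggedMatrix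

open MvPolynomial

variable (K : Type*) [Field K] (n : ℕ)

/-- The entries of `U^ss`, indexed by natural numbers starting from `1`, and zero outside. -/
noncomputable def genericEntry (a b : ℕ) : MvPolynomial (SSVar n) K :=
  if h : (1 ≤ b ∧ b < a) ∧ a ≤ n then X (ssvar a b h.2 h.1.1 h.1.2)
  else if h : (1 ≤ a ∧ a < b) ∧ b ≤ n then -X (ssvar b a h.2 h.1.1 h.1.2)
  else 0

theorem isAlternating_genericEntry : IsAlternating (genericEntry K n) where
  swap a b := by unfold genericEntry; split_ifs <;> first | omega | simp
  diag a := by unfold genericEntry; split_ifs <;> first | omega | rfl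

/-- Rows and columns are labelled by codes: `2 * a + 1` is row `a` of the block `A`, and `2 * b` is
row `b` of the block `B`. The entries are those of `U^ss`, except that the block `A × A` is zero. -/
noncomputable def taggedEntry (v w : ℕ) : MvPolynomial (SSVar n) K :=
  if v % 2 = 1 ∧ w % 2 = 1 then 0 else genericEntry K n (v / 2) (w / 2)

variable {K n}

theorem taggedEntry_eq_zero_or_eq_X {x y : ℕ} (hyx : y ≤ x) :
    taggedEntry K n x y = 0 ∨ ¬ (x % 2 = 1 ∧ y % 2 = 1) ∧
      ∃ v : SSVar n, box v = (x / 2, y / 2) ∧ taggedEntry K n x y = X v := by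
  unfold taggedEntry genericEntry
  split_ifs with htag hlt hgt
  · exact Or.inl rfl
  · exact Or.inr ⟨htag, _, box_ssvar _ _ _, rfl⟩
  · omega
  · exact Or.inl rfl

theorem taggedEntry_eq_X {x y : ℕ} (htag : ¬ (x % 2 = 1 ∧ y % 2 = 1)) {v : SSVar n}
    (hv : box v = (x / 2, y / 2)) : taggedEntry K n x y = X v := by
  have hbounds := box_bounds v
  rw [hv] at hbounds
  rw [taggedEntry, if_neg htag, genericEntry, dif_pos (by omega)]
  exact congrArg X (box_injective (by rw [box_ssvar, hv]))

theorem isHomogeneous_taggedEntry (v w : ℕ) : (taggedEntry K n v w).IsHomogeneous 1 := by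
  unfold taggedEntry genericEntry
  split_ifs
  exacts [isHomogeneous_zero _ _ _, isHomogeneous_X _ _, (isHomogeneous_X _ _).neg,
    isHomogeneous_zero _ _ _]

end TaggedMatrix

section LeadingTerm

open MvPolynomial
open scoped MonomialOrder

variable {K : Type*} [Field K] {n : ℕ}

theorem degree_C_mul_X_mul_add {d : ℕ} {c : K} (hc : c ≠ 0) {v : SSVar n}
    {P Q : MvPolynomial (SSVar n) K} (hP0 : P ≠ 0) (hP : P.IsHomogeneous d)
    (hPv : ∀ u, (revlex n).degree P u ≠ 0 → varLT u v) (hQ : Q.IsHomogeneous (d + 1))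
    (hQv : ∀ m ∈ Q.support, ∃ w, m w ≠ 0 ∧ varLT v w) :
    C c * X v * P + Q ≠ 0 ∧
      (revlex n).degree (C c * X v * P + Q) = Finsupp.single v 1 + (revlex n).degree P := by
  have hcX : C c * X v ≠ (0 : MvPolynomial (SSVar n) K) :=
    mul_ne_zero (C_ne_zero.2 hc) (X_ne_zero v)
  set lead := Finsupp.single v 1 + (revlex n).degree P
  have hlead : (revlex n).degree (C c * X v * P) = lead := by
    rw [MonomialOrder.degree_mul hcX hP0, MonomialOrder.degree_mul (C_ne_zero.2 hc) (X_ne_zero v),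
      MonomialOrder.degree_C, zero_add, MonomialOrder.degree_X]
  have hlead_degree : lead.degree = d + 1 := by
    rw [map_add, Finsupp.degree_single, add_comm]
    exact congrArg (· + 1) (by_contra fun h => (revlex n).coeff_degree_ne_zero_iff.2 hP0
      (hP.coeff_eq_zero h))
  have hpos : 0 ≺[revlex n] lead :=
    revlex_lt_iff.2 (Or.inl ((Nat.succ_pos d).trans_eq hlead_degree.symm))
  have hQlt : (revlex n).degree Q ≺[revlex n] lead := by
    refine (MonomialOrder.degree_lt_iff hpos).2 fun m hm => ?_
    obtain ⟨w, hmw, hvw⟩ := hQv m hm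
    have hdeg : m.degree = lead.degree := by
      rw [hlead_degree]
      exact by_contra fun h => mem_support_iff.1 hm (hQ.coeff_eq_zero h)
    refine revlex_lt_of_varLT hdeg hmw fun u hu => ?_
    rcases eq_or_ne u v with rfl | huv
    · exact hvw
    · rw [Finsupp.add_apply, Finsupp.single_eq_of_ne huv, zero_add] at hu
      exact varLT_iff_toLex_lt.2
        ((varLT_iff_toLex_lt.1 (hPv u hu)).trans (varLT_iff_toLex_lt.1 hvw))
  have hsum : (revlex n).degree (C c * X v * P + Q) = lead := by
    rw [MonomialOrder.degree_add_of_lt (by rwa [hlead]), hlead]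
  refine ⟨fun h0 => ?_, hsum⟩
  rw [h0, MonomialOrder.degree_zero] at hsum
  simp [← hsum] at hlead_degree

/-- Expand along the largest row `x`: every other term contains a variable of that row to the right
of `v`, so it is smaller in the reverse lexicographic order. -/
theorem degree_pfaffianOn_insert_insert {V : Finset ℕ} {x y : ℕ}
    (hV : pfaffianOn (taggedEntry K n) V ≠ 0) (hx : ∀ w ∈ V, w < x) (hy : y ∉ V)
    (htag : ¬ (x % 2 = 1 ∧ y % 2 = 1)) {v : SSVar n} (hv : box v = (x / 2, y / 2))
    (hright : ∀ w ∈ V, w / 2 < x / 2 → ¬ (x % 2 = 1 ∧ w % 2 = 1) → y / 2 < w / 2)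
    (hlt : ∀ u, (revlex n).degree (pfaffianOn (taggedEntry K n) V) u ≠ 0 → varLT u v) :
    pfaffianOn (taggedEntry K n) (insert x (insert y V)) ≠ 0 ∧
      (revlex n).degree (pfaffianOn (taggedEntry K n) (insert x (insert y V))) =
        Finsupp.single v 1 + (revlex n).degree (pfaffianOn (taggedEntry K n) V) := by
  have hbounds := box_bounds v
  rw [hv] at hbounds
  have hyx : y < x := by omega
  have hxV : x ∉ insert y V := by grind
  rw [pfaffianOn_expand_max _ (Finset.mem_insert_self x (insert y V)) (by grind),
    Finset.erase_insert hxV, ← Finset.add_sum_erase _ _ (Finset.mem_insert_self y V),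
    Finset.erase_insert hy, taggedEntry_eq_X htag hv, pairSign_eq_C]
  refine degree_C_mul_X_mul_add (pairSign_ne_zero _ _ _) hV
    (isHomogeneous_pfaffianOn isHomogeneous_taggedEntry V) hlt
    (IsHomogeneous.sum _ _ _ fun w hw => ?_) fun m hm => ?_
  · have hcard : V.card / 2 + 1 = 0 + 1 + ((insert y V).erase w).card / 2 := by
      rw [Finset.card_erase_of_mem (Finset.mem_insert_of_mem hw), Finset.card_insert_of_notMem hy,
        Nat.add_sub_cancel]
      ring
    rw [hcard, pairSign_eq_C]
    exact ((isHomogeneous_C _ _).mul (isHomogeneous_taggedEntry x w)).mul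
      (isHomogeneous_pfaffianOn isHomogeneous_taggedEntry _)
  · obtain ⟨w, hw, hm⟩ := Finset.mem_biUnion.1 (support_sum hm)
    rw [mul_right_comm, mul_comm _ (taggedEntry K n x w), mem_support_iff] at hm
    rcases taggedEntry_eq_zero_or_eq_X (K := K) (n := n) (hx w hw).le with h0 | ⟨htagw, u, hu, hX⟩
    · rw [h0, zero_mul, coeff_zero] at hm
      exact absurd rfl hm
    · rw [hX, coeff_X_mul'] at hm
      refine ⟨u, Finsupp.mem_support_iff.1 (by_contra fun h => hm (if_neg h)), ?_⟩
      have hux := (box_bounds u).2.1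
      rw [hu] at hux
      rw [varLT_iff_toLex_box_lt, hv, hu, Prod.Lex.toLex_lt_toLex]
      exact Or.inr ⟨rfl, hright w hw hux htagw⟩

/-- The leading monomial of the tagged Pfaffian on `V` is a product of distinct variables, at
positions in `D` which precede `t` in the lexicographic order. -/
structure HasLeadingBoxesIn (K : Type*) [Field K] (n : ℕ) (D : Finset (ℕ × ℕ)) (t : ℕ ×ₗ ℕ)
    (V : Finset ℕ) : Prop where
  ne_zero : pfaffianOn (taggedEntry K n) V ≠ 0
  degree_le_one : ∀ v, (revlex n).degree (pfaffianOn (taggedEntry K n) V) v ≤ 1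
  box_mem : ∀ v, (revlex n).degree (pfaffianOn (taggedEntry K n) V) v ≠ 0 → box v ∈ D
  box_lt : ∀ v, (revlex n).degree (pfaffianOn (taggedEntry K n) V) v ≠ 0 → toLex (box v) < t

variable {D : Finset (ℕ × ℕ)} {t t' : ℕ ×ₗ ℕ} {V : Finset ℕ}

theorem hasLeadingBoxesIn_empty : HasLeadingBoxesIn K n D t ∅ := by
  constructor <;> simp [MonomialOrder.degree_one]

theorem HasLeadingBoxesIn.mono (h : HasLeadingBoxesIn K n D t V) (ht : t ≤ t') :
    HasLeadingBoxesIn K n D t' V :=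
  { h with box_lt := fun v hv => (h.box_lt v hv).trans_le ht }

theorem HasLeadingBoxesIn.insert_insert (h : HasLeadingBoxesIn K n D t V) {x y p q : ℕ}
    (hp : x / 2 = p) (hq : y / 2 = q) (hx : ∀ w ∈ V, w < x) (hy : y ∉ V)
    (htag : ¬ (x % 2 = 1 ∧ y % 2 = 1)) (hq1 : 1 ≤ q) (hqp : q < p) (hpn : p ≤ n)
    (hright : ∀ w ∈ V, w / 2 < p → ¬ (x % 2 = 1 ∧ w % 2 = 1) → q < w / 2) (hD : (p, q) ∈ D)
    (ht : t ≤ toLex (p, q)) (ht' : toLex (p, q) < t') :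
    HasLeadingBoxesIn K n D t' (insert x (insert y V)) := by
  subst hp hq
  set v := ssvar (x / 2) (y / 2) hpn hq1 hqp
  have hv : box v = (x / 2, y / 2) := box_ssvar _ _ _
  have hlt : ∀ u, (revlex n).degree (pfaffianOn (taggedEntry K n) V) u ≠ 0 → varLT u v :=
    fun u hu => varLT_iff_toLex_box_lt.2 (hv ▸ (h.box_lt u hu).trans_le ht)
  have hv0 : (revlex n).degree (pfaffianOn (taggedEntry K n) V) v = 0 :=
    by_contra fun hne => lt_irrefl _ (varLT_iff_toLex_lt.1 (hlt v hne))
  obtain ⟨hne, hdeg⟩ := degree_pfaffianOn_insert_insert h.ne_zero hx hy htag hv hright hlt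
  refine ⟨hne, fun u => ?_, fun u => ?_, fun u => ?_⟩ <;>
    rw [hdeg, Finsupp.add_apply] <;> rcases eq_or_ne u v with rfl | huv
  · rw [hv0, Finsupp.single_eq_same]
  · rw [Finsupp.single_eq_of_ne huv, zero_add]
    exact h.degree_le_one u
  · exact fun _ => hv ▸ hD
  · rw [Finsupp.single_eq_of_ne huv, zero_add]
    exact h.box_mem u
  · exact fun _ => hv ▸ ht'
  · rw [Finsupp.single_eq_of_ne huv, zero_add]
    exact fun hu => ((h.box_lt u hu).trans_le ht).trans ht'

end LeadingTerm

section LeadingChain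

variable {K : Type*} [Field K] {n : ℕ} {D C : Finset (ℕ × ℕ)} {V : Finset ℕ}
  {aLo bLo i j k a b : ℕ}

/-- A set of codes whose leading boxes lie in `D`, with labels in `[aLo, i)` in the block `A`,
labels in `[bLo, j)` in the block `B`, and at least `k` labels in the block `B`. -/
structure IsLeadingWindow (K : Type*) [Field K] (n : ℕ) (D : Finset (ℕ × ℕ)) (aLo i bLo j k : ℕ)
    (V : Finset ℕ) : Prop where
  leading : HasLeadingBoxesIn K n D (toLex (i, 0)) V
  mem_A : ∀ v ∈ V, v % 2 = 1 → aLo ≤ v / 2 ∧ v / 2 < i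
  mem_B : ∀ v ∈ V, v % 2 = 0 → bLo ≤ v / 2 ∧ v / 2 < j
  le_card_B : k ≤ (V.filter fun v => v % 2 = 0).card

theorem isLeadingWindow_empty : IsLeadingWindow K n D aLo i bLo j 0 ∅ where
  leading := hasLeadingBoxesIn_empty
  mem_A := by simp
  mem_B := by simp
  le_card_B := Nat.zero_le _

theorem toLex_mk_zero_le (i q : ℕ) : toLex (i, 0) ≤ toLex (i, q) :=
  Prod.Lex.toLex_mono ⟨le_rfl, Nat.zero_le q⟩

theorem toLex_mk_lt_succ_zero (i q : ℕ) : toLex (i, q) < toLex (i + 1, 0) :=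
  Prod.Lex.toLex_lt_toLex.2 (Or.inl i.lt_succ_self)

theorem IsLeadingWindow.succ {j' : ℕ} (h : IsLeadingWindow K n D aLo i bLo j' k V) (hj : j' ≤ j) :
    IsLeadingWindow K n D aLo (i + 1) bLo j k V where
  leading := h.leading.mono (toLex_mk_lt_succ_zero i 0).le
  mem_A v hv hodd := (h.mem_A v hv hodd).imp_right Nat.lt_succ_of_lt
  mem_B v hv heven := (h.mem_B v hv heven).imp_right fun hlt => hlt.trans_le hj
  le_card_B := h.le_card_B

theorem card_even_insert_insert {x y : ℕ} (hx : x ∉ V) (hxy : x ≠ y) (hy : y ∉ V) :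
    ((insert x (insert y V)).filter fun v => v % 2 = 0).card =
      (V.filter fun v => v % 2 = 0).card + (if x % 2 = 0 then 1 else 0) +
        (if y % 2 = 0 then 1 else 0) := by
  rw [Finset.filter_insert, Finset.filter_insert]
  split_ifs <;> simp [Finset.card_insert_of_notMem, hx, hy, hxy]

theorem IsLeadingWindow.insert_row {j' : ℕ} (h : IsLeadingWindow K n D aLo i (b + 1) j' k V)
    (hj' : j' ≤ i) (hj'j : j' ≤ j) (hb : 1 ≤ b) (hbi : b < i) (hi : i ≤ n) (hD : (i, b) ∈ D)
    (ha : aLo ≤ i) (hbLo : bLo ≤ b) (hbj : b < j) :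
    IsLeadingWindow K n D aLo (i + 1) bLo j (k + 1)
      (insert (2 * i + 1) (insert (2 * b) V)) := by
  have hA := h.mem_A
  have hB := h.mem_B
  have hx : ∀ w ∈ V, w < 2 * i + 1 := by grind
  have hy : 2 * b ∉ V := by grind
  refine ⟨h.leading.insert_insert (p := i) (q := b) (by omega) (by omega) hx hy (by omega) hb hbi hi
    (by grind) hD (toLex_mk_zero_le i b) (toLex_mk_lt_succ_zero i b), by grind, by grind, ?_⟩
  have := h.le_card_B
  rw [card_even_insert_insert (by grind) (by omega) hy]
  grind

theorem IsLeadingWindow.insert_col (h : IsLeadingWindow K n D (a + 1) i bLo i k V)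
    (hab : a < bLo) (ha : 1 ≤ a) (hai : a < i) (hi : i ≤ n) (hD : (i, a) ∈ D) (haLo : aLo ≤ a)
    (hbi : bLo ≤ i) :
    IsLeadingWindow K n D aLo (i + 1) bLo (i + 1) (k + 1)
      (insert (2 * i) (insert (2 * a + 1) V)) := by
  have hA := h.mem_A
  have hB := h.mem_B
  have hx : ∀ w ∈ V, w < 2 * i := by grind
  have hy : 2 * a + 1 ∉ V := by grind
  refine ⟨h.leading.insert_insert (p := i) (q := a) (by omega) (by omega) hx hy (by omega) ha hai hi
    (by grind) hD (toLex_mk_zero_le i a) (toLex_mk_lt_succ_zero i a), by grind, by grind, ?_⟩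
  have := h.le_card_B
  rw [card_even_insert_insert (by grind) (by omega) hy]
  grind

/-- The mirror boxes `(i, a)` and `(a, i)` are carried by one variable, which contributes the two
columns `a` and `i` of `B`. -/
theorem IsLeadingWindow.insert_pair (h : IsLeadingWindow K n D (a + 1) i (a + 1) i k V)
    (ha : 1 ≤ a) (hai : a < i) (hi : i ≤ n) (hD : (i, a) ∈ D) (haLo : aLo ≤ a) (hbLo : bLo ≤ a) :
    IsLeadingWindow K n D aLo (i + 1) bLo (i + 1) (k + 2)
      (insert (2 * i) (insert (2 * a) V)) := by
  have hA := h.mem_A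
  have hB := h.mem_B
  have hx : ∀ w ∈ V, w < 2 * i := by grind
  have hy : 2 * a ∉ V := by grind
  refine ⟨h.leading.insert_insert (p := i) (q := a) (by omega) (by omega) hx hy (by omega) ha hai hi
    (by grind) hD (toLex_mk_zero_le i a) (toLex_mk_lt_succ_zero i a), by grind, by grind, ?_⟩
  have := h.le_card_B
  rw [card_even_insert_insert (by grind) (by omega) hy]
  grind

theorem IsLeadingWindow.insert_col_row (h : IsLeadingWindow K n D (a + 1) i (b + 1) i k V)
    (hab : a < b) (ha : 1 ≤ a) (hbi : b < i) (hi : i ≤ n) (hDa : (i, a) ∈ D) (hDb : (i, b) ∈ D)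
    (haLo : aLo ≤ a) (hbLo : bLo ≤ b) :
    IsLeadingWindow K n D aLo (i + 1) bLo (i + 1) (k + 2)
      (insert (2 * i + 1) (insert (2 * b) (insert (2 * i) (insert (2 * a + 1) V)))) := by
  have hA := h.mem_A
  have hB := h.mem_B
  have hx : ∀ w ∈ V, w < 2 * i := by grind
  have hy : 2 * a + 1 ∉ V := by grind
  have hcol : HasLeadingBoxesIn K n D (toLex (i, b)) (insert (2 * i) (insert (2 * a + 1) V)) :=
    h.leading.insert_insert (p := i) (q := a) (by omega) (by omega) hx hy (by omega) ha
      (hab.trans hbi) hi (by grind) hDa (toLex_mk_zero_le i a)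
      (Prod.Lex.toLex_lt_toLex.2 (Or.inr ⟨rfl, hab⟩))
  refine ⟨hcol.insert_insert (p := i) (q := b) (by omega) (by omega) (by grind) (by grind)
    (by omega) (by omega) hbi hi (by grind) hDb le_rfl (toLex_mk_lt_succ_zero i b), by grind,
    by grind, ?_⟩
  have := h.le_card_B
  rw [card_even_insert_insert (by grind) (by omega) (by grind),
    card_even_insert_insert (by grind) (by omega) hy]
  grind

/-- An antichain in `D`, inside the rectangle `[aLo, i) × [bLo, j)`. -/
structure IsAntichainIn (D : Finset (ℕ × ℕ)) (aLo i bLo j : ℕ) (C : Finset (ℕ × ℕ)) : Prop where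
  subset : C ⊆ D
  isAntichain : IsAntichain (· ≤ ·) (C : Set (ℕ × ℕ))
  mem_rect : ∀ c ∈ C, (aLo ≤ c.1 ∧ c.1 < i) ∧ bLo ≤ c.2 ∧ c.2 < j

theorem IsAntichainIn.eq_of_le (h : IsAntichainIn D aLo i bLo j C) {x y x' y' : ℕ}
    (hc : (x, y) ∈ C) (hc' : (x', y') ∈ C) (hx : x ≤ x') (hy : y ≤ y') : x = x' ∧ y = y' :=
  Prod.mk.inj (h.isAntichain.eq hc hc' ⟨hx, hy⟩)

/-- `D` is a symmetric set of off-diagonal positions of an `n × n` matrix. -/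
structure IsSkewRegion (n : ℕ) (D : Finset (ℕ × ℕ)) : Prop where
  swap_mem : ∀ c ∈ D, c.swap ∈ D
  fst_ne_snd : ∀ c ∈ D, c.1 ≠ c.2
  fst_mem_Icc : ∀ c ∈ D, c.1 ∈ Set.Icc 1 n

theorem IsSkewRegion.of_mem (hD : IsSkewRegion n D) {a b : ℕ} (h : (a, b) ∈ D) :
    a ≠ b ∧ (1 ≤ a ∧ a ≤ n) ∧ 1 ≤ b ∧ b ≤ n :=
  ⟨hD.fst_ne_snd _ h, hD.fst_mem_Icc _ h, hD.fst_mem_Icc _ (hD.swap_mem _ h)⟩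

theorem IsAntichainIn.image_swap (h : IsAntichainIn D aLo (i + 1) bLo j C) (hD : IsSkewRegion n D)
    (hlo : aLo ≤ bLo) (hj : j ≤ i + 1) (ha : (a, i) ∈ C) (hba : bLo ≤ a) :
    IsAntichainIn D aLo (i + 1) bLo j (C.image Prod.swap) where
  subset := Finset.image_subset_iff.2 fun c hc => hD.swap_mem c (h.subset hc)
  isAntichain := isAntichain_image_swap h.isAntichain
  mem_rect := by
    refine Finset.forall_mem_image.2 fun ⟨x, y⟩ hc => ?_
    have := h.mem_rect _ hc
    have := h.mem_rect _ ha
    have hax : a ≤ x := by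
      by_contra hlt
      have := h.eq_of_le hc ha (by omega) (by omega)
      omega
    simp only [Prod.fst_swap, Prod.snd_swap] at *
    omega

theorem IsAntichainIn.of_subset {C' : Finset (ℕ × ℕ)} {aLo' i' bLo' j' : ℕ}
    (h : IsAntichainIn D aLo i bLo j C) (hC' : C' ⊆ C)
    (hrect : ∀ x y, (x, y) ∈ C' → (aLo' ≤ x ∧ x < i') ∧ bLo' ≤ y ∧ y < j') :
    IsAntichainIn D aLo' i' bLo' j' C' where
  subset := hC'.trans h.subset
  isAntichain := h.isAntichain.subset (Finset.coe_subset.2 hC')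
  mem_rect c hc := hrect c.1 c.2 hc

/-- Every antichain of `D` in a rectangle `[aLo, i) × [bLo, j)` with `aLo ≤ bLo` and `j ≤ i` is
accounted for by a leading window. -/
def HasLeadingWindows (K : Type*) [Field K] (n : ℕ) (D : Finset (ℕ × ℕ)) (i : ℕ) : Prop :=
  ∀ j ≤ i, ∀ aLo bLo, aLo ≤ bLo → ∀ C, IsAntichainIn D aLo i bLo j C →
    ∃ V, IsLeadingWindow K n D aLo i bLo j C.card V

namespace HasLeadingWindows

theorem exists_of_row_mem (ih : HasLeadingWindows K n D i) (hD : IsSkewRegion n D)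
    (hC : IsAntichainIn D aLo (i + 1) bLo j C) (hj : j ≤ i + 1) (hlo : aLo ≤ bLo)
    (hb : (i, b) ∈ C) (hcol : ∀ a, (a, i) ∉ C) :
    ∃ V, IsLeadingWindow K n D aLo (i + 1) bLo j C.card V := by
  have hrect := hC.mem_rect _ hb
  have hbD := hD.of_mem (hC.subset hb)
  obtain ⟨V, hV⟩ := ih (min j i) (min_le_right _ _) aLo (b + 1) (by omega) (C.erase (i, b))
    (hC.of_subset (Finset.erase_subset _ _) fun x y hc => by
      have := hC.mem_rect _ (Finset.mem_of_mem_erase hc)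
      have := hC.eq_of_le (Finset.mem_of_mem_erase hc) hb
      have := hC.eq_of_le hb (Finset.mem_of_mem_erase hc)
      grind)
  rw [← Finset.card_erase_add_one hb]
  exact ⟨_, hV.insert_row (by omega) (by omega) (by omega) (by omega) (by omega) (hC.subset hb)
    (by omega) (by omega) (by omega)⟩

theorem exists_of_col_mem (ih : HasLeadingWindows K n D i) (hD : IsSkewRegion n D)
    (hC : IsAntichainIn D aLo (i + 1) bLo j C) (hj : j ≤ i + 1) (ha : (a, i) ∈ C)
    (hrow : ∀ b, (i, b) ∉ C) (hab : a < bLo) :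
    ∃ V, IsLeadingWindow K n D aLo (i + 1) bLo j C.card V := by
  have hrect := hC.mem_rect _ ha
  have haD := hD.of_mem (hC.subset ha)
  obtain rfl : j = i + 1 := by omega
  obtain ⟨V, hV⟩ := ih i le_rfl (a + 1) bLo (by omega) (C.erase (a, i))
    (hC.of_subset (Finset.erase_subset _ _) fun x y hc => by
      have := hC.mem_rect _ (Finset.mem_of_mem_erase hc)
      have := hC.eq_of_le (Finset.mem_of_mem_erase hc) ha
      have := hC.eq_of_le ha (Finset.mem_of_mem_erase hc)
      grind)
  rw [← Finset.card_erase_add_one ha]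
  exact ⟨_, hV.insert_col (by omega) (by omega) (by omega) (by omega)
    (hD.swap_mem _ (hC.subset ha)) (by omega) (by omega)⟩

theorem exists_of_row_mem_col_mem (ih : HasLeadingWindows K n D i) (hD : IsSkewRegion n D)
    (hC : IsAntichainIn D aLo (i + 1) bLo j C) (hj : j ≤ i + 1) (hb : (i, b) ∈ C)
    (ha : (a, i) ∈ C) (hab : a ≤ b) :
    ∃ V, IsLeadingWindow K n D aLo (i + 1) bLo j C.card V := by
  have hrecta := hC.mem_rect _ ha
  have hrectb := hC.mem_rect _ hb
  have haD := hD.of_mem (hC.subset ha)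
  have hbD := hD.of_mem (hC.subset hb)
  obtain rfl : j = i + 1 := by omega
  have ha' : (a, i) ∈ C.erase (i, b) := by grind
  obtain ⟨V, hV⟩ := ih i le_rfl (a + 1) (b + 1) (by omega) ((C.erase (i, b)).erase (a, i))
    (hC.of_subset ((Finset.erase_subset _ _).trans (Finset.erase_subset _ _)) fun x y hc => by
      have hcC := Finset.mem_of_mem_erase (Finset.mem_of_mem_erase hc)
      have := hC.mem_rect _ hcC
      have := hC.eq_of_le hcC ha
      have := hC.eq_of_le ha hcC
      have := hC.eq_of_le hcC hb
      have := hC.eq_of_le hb hcC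
      grind)
  rw [← Finset.card_erase_add_one hb, ← Finset.card_erase_add_one ha']
  rcases hab.eq_or_lt with rfl | hab
  · exact ⟨_, hV.insert_pair (by omega) (by omega) (by omega) (hC.subset hb) (by omega) (by omega)⟩
  · exact ⟨_, hV.insert_col_row hab (by omega) (by omega) (by omega)
      (hD.swap_mem _ (hC.subset ha)) (hC.subset hb) (by omega) (by omega)⟩

/-- When the box in row `i` lies to the left of the mirror image of the one in column `i`, the
roles of rows and columns are exchanged; this is possible because `D` is symmetric. -/
theorem succ (ih : HasLeadingWindows K n D i) (hD : IsSkewRegion n D) :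
    HasLeadingWindows K n D (i + 1) := by
  intro j hj aLo bLo hlo C hC
  have hcard : (C.image Prod.swap).card = C.card :=
    Finset.card_image_of_injective _ Prod.swap_injective
  have hswap : ∀ {x y}, (x, y) ∈ C.image Prod.swap ↔ (y, x) ∈ C := by simp
  by_cases hrow : ∃ b, (i, b) ∈ C <;> by_cases hcol : ∃ a, (a, i) ∈ C
  · obtain ⟨b, hb⟩ := hrow
    obtain ⟨a, ha⟩ := hcol
    rcases le_total a b with hab | hab
    · exact ih.exists_of_row_mem_col_mem hD hC hj hb ha hab
    · have hba : bLo ≤ a := (hC.mem_rect _ hb).2.1.trans hab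
      rw [← hcard]
      exact ih.exists_of_row_mem_col_mem hD (hC.image_swap hD hlo hj ha hba) hj (hswap.2 ha)
        (hswap.2 hb) hab
  · obtain ⟨b, hb⟩ := hrow
    exact ih.exists_of_row_mem hD hC hj hlo hb (not_exists.1 hcol)
  · obtain ⟨a, ha⟩ := hcol
    rcases lt_or_ge a bLo with hab | hba
    · exact ih.exists_of_col_mem hD hC hj ha (not_exists.1 hrow) hab
    · rw [← hcard]
      exact ih.exists_of_row_mem hD (hC.image_swap hD hlo hj ha hba) hj hlo (hswap.2 ha)
        fun x hx => hrow ⟨x, hswap.1 hx⟩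
  · obtain ⟨V, hV⟩ := ih (min j i) (min_le_right _ _) aLo bLo hlo C
      (hC.of_subset subset_rfl fun x y hc => by
        have := hC.mem_rect _ hc
        grind)
    exact ⟨V, hV.succ (min_le_left _ _)⟩

end HasLeadingWindows

theorem hasLeadingWindows (hD : IsSkewRegion n D) (i : ℕ) : HasLeadingWindows K n D i := by
  induction i with
  | zero =>
    intro j _ aLo bLo _ C hC
    obtain rfl : C = ∅ := Finset.eq_empty_of_forall_notMem fun c hc =>
      Nat.not_lt_zero _ (hC.mem_rect c hc).1.2
    exact ⟨∅, isLeadingWindow_empty⟩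
  | succ i ih => exact ih.succ hD

end LeadingChain

/-! ### Nonstandard monomials are leading monomials of `I^ss_z` -/

section Membership

open MvPolynomial

variable {K : Type*} [Field K] {n : ℕ} {z : Equiv.Perm ℕ} {i j : ℕ} {V : Finset ℕ}

theorem genericEntry_succ_succ (a b : Fin n) :
    genericEntry K n (a + 1) (b + 1) = Uss K n a b := by
  have ha := a.2
  have hb := b.2
  unfold genericEntry Uss
  simp only [Matrix.of_apply, Fin.lt_def]
  split_ifs <;> first | omega | rfl

theorem Uss_eq_neg_swap (a b : Fin n) : Uss K n a b = -Uss K n b a := by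
  simp only [← genericEntry_succ_succ]
  exact (isAlternating_genericEntry K n).swap _ _

theorem pfUss_eq_pfaffianOn (R : Finset (Fin n)) :
    pfUss K R = pfaffianOn (genericEntry K n) (R.image fun a : Fin n => (a : ℕ) + 1) := by
  have hmono : StrictMono fun a : Fin n => (a : ℕ) + 1 := fun a b hab => Nat.succ_lt_succ hab
  rw [pfaffianOn_image _ (hmono.strictMonoOn _)]
  simp only [genericEntry_succ_succ]
  exact Pfaffian_submatrix_orderEmbOfFin _ Uss_eq_neg_swap R

theorem exists_image_succ_eq {R : Finset ℕ} (hR : ∀ a ∈ R, 1 ≤ a ∧ a ≤ n) :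
    ∃ S : Finset (Fin n), S.image (fun a : Fin n => (a : ℕ) + 1) = R := by
  refine ⟨Finset.univ.filter fun a : Fin n => (a : ℕ) + 1 ∈ R, ?_⟩
  ext x
  simp only [Finset.mem_image, Finset.mem_filter, Finset.mem_univ, true_and]
  refine ⟨fun ⟨_, ha, hax⟩ => hax ▸ ha, fun hx => ?_⟩
  obtain ⟨hx1, hxn⟩ := hR x hx
  have hsub : x - 1 + 1 = x := Nat.sub_add_cancel hx1
  exact ⟨⟨x - 1, by omega⟩, by rwa [hsub], hsub⟩

theorem pfaffianOn_genericEntry_mem (hj : 1 ≤ j) (hji : j ≤ i) (hi : i ≤ n) {R : Finset ℕ}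
    (hR : ∀ a ∈ R, 1 ≤ a ∧ a ≤ i) (hcard : rnk z i j < (R.filter (· ≤ j)).card) :
    pfaffianOn (genericEntry K n) R ∈ IssIdeal K n z := by
  rcases Nat.even_or_odd R.card with heven | hodd
  · obtain ⟨S, rfl⟩ := exists_image_succ_eq (n := n) fun a ha =>
      ⟨(hR a ha).1, (hR a ha).2.trans hi⟩
    have hinj : Function.Injective fun a : Fin n => (a : ℕ) + 1 := fun a b h =>
      Fin.ext (Nat.succ_injective h)
    rw [Finset.filter_image, Finset.card_image_of_injective _ hinj] at hcard
    rw [Finset.card_image_of_injective _ hinj] at heven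
    have hS : S.Nonempty :=
      (Finset.card_pos.1 ((Nat.zero_le _).trans_lt hcard)).mono (Finset.filter_subset _ _)
    refine Ideal.subset_span ⟨S, hS, heven, ⟨i, j, hj, hji, hi, fun a ha => ?_, hcard⟩,
      (pfUss_eq_pfaffianOn S).symm⟩
    exact (hR _ (Finset.mem_image_of_mem _ ha)).2
  · rw [pfaffianOn_eq_zero_of_odd _ hodd]
    exact zero_mem _

/-- A set of codes with labels in `[i]`, whose labels in the block `B` lie in `[j]` and are more
than `r_z(i, j)` in number. -/
structure ExceedsRank (n : ℕ) (z : Equiv.Perm ℕ) (i j : ℕ) (V : Finset ℕ) : Prop where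
  one_le : 1 ≤ j
  le : j ≤ i
  le_size : i ≤ n
  label_mem : ∀ v ∈ V, 1 ≤ v / 2 ∧ v / 2 ≤ i
  label_le_of_even : ∀ v ∈ V, v % 2 = 0 → v / 2 ≤ j
  rnk_lt : rnk z i j < (V.filter fun v => v % 2 = 0).card

theorem ExceedsRank.erase_of_odd (h : ExceedsRank n z i j V) {a : ℕ} (ha : a % 2 = 1) :
    ExceedsRank n z i j (V.erase a) :=
  { h with
    label_mem := fun v hv => h.label_mem v (Finset.mem_of_mem_erase hv)
    label_le_of_even := fun v hv => h.label_le_of_even v (Finset.mem_of_mem_erase hv)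
    rnk_lt := by
      rw [Finset.filter_erase, Finset.erase_eq_of_notMem (by simp [ha])]
      exact h.rnk_lt }

theorem ExceedsRank.pfaffianOn_untagged_mem_of_injOn (h : ExceedsRank n z i j V)
    (hinj : Set.InjOn (· / 2) (V : Set ℕ)) :
    pfaffianOn (fun v w => genericEntry K n (v / 2) (w / 2)) V ∈ IssIdeal K n z := by
  have hmono : StrictMonoOn (· / 2) (V : Set ℕ) := fun a ha b hb hab =>
    (Nat.div_le_div_right hab.le).lt_of_ne fun heq => hab.ne (hinj ha hb heq)
  rw [← pfaffianOn_image (genericEntry K n) hmono]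
  refine pfaffianOn_genericEntry_mem h.one_le h.le h.le_size (Finset.forall_mem_image.2 h.label_mem)
    (h.rnk_lt.trans_le ?_)
  rw [← Finset.card_image_of_injOn (hinj.mono (Finset.coe_subset.2 (Finset.filter_subset _ _)))]
  refine Finset.card_le_card (Finset.image_subset_iff.2 fun v hv => ?_)
  obtain ⟨hvV, heven⟩ := Finset.mem_filter.1 hv
  exact Finset.mem_filter.2 ⟨Finset.mem_image_of_mem _ hvV, h.label_le_of_even v hvV heven⟩

/-- If two codes carry the same label, then two rows agree and the Pfaffian is zero. -/
theorem ExceedsRank.pfaffianOn_untagged_mem (h : ExceedsRank n z i j V) :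
    pfaffianOn (fun v w => genericEntry K n (v / 2) (w / 2)) V ∈ IssIdeal K n z := by
  by_cases hinj : Set.InjOn (· / 2) (V : Set ℕ)
  · exact h.pfaffianOn_untagged_mem_of_injOn hinj
  · simp only [Set.InjOn, Finset.mem_coe] at hinj
    push Not at hinj
    obtain ⟨v, hv, w, hw, hlabel, hvw⟩ := hinj
    have halt : IsAlternating fun v w => genericEntry K n (v / 2) (w / 2) :=
      ⟨fun _ _ => (isAlternating_genericEntry K n).swap _ _,
        fun _ => (isAlternating_genericEntry K n).diag _⟩
    have hzero := halt.mul_pfaffianOn_eq_zero (V := V)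
      (fun l => (if l = v then 1 else 0) - if l = w then 1 else 0)
      (by simp [sub_mul, Finset.sum_sub_distrib, hv, hw, hlabel]) hv
    simp only [if_true, if_neg hvw, sub_zero, one_mul] at hzero
    rw [hzero]
    exact zero_mem _

open Classical in
/-- The entries of `U^ss` between labels, with those at the pairs of codes in `Z` replaced by zero.
It interpolates between the untagged and the tagged matrix. -/
noncomputable def entryOff (K : Type*) [Field K] (n : ℕ) (Z : Finset (ℕ × ℕ)) (v w : ℕ) :
    MvPolynomial (SSVar n) K :=
  if (v, w) ∈ Z ∨ (w, v) ∈ Z then 0 else genericEntry K n (v / 2) (w / 2)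

theorem isAlternating_entryOff (Z : Finset (ℕ × ℕ)) : IsAlternating (entryOff K n Z) where
  swap a b := by
    unfold entryOff
    simp only [or_comm (a := (b, a) ∈ Z)]
    split_ifs
    · exact neg_zero.symm
    · exact (isAlternating_genericEntry K n).swap _ _
  diag a := by
    unfold entryOff
    split_ifs
    · rfl
    · exact (isAlternating_genericEntry K n).diag _

theorem ExceedsRank.pfaffianOn_entryOff_mem (h : ExceedsRank n z i j V) {Z : Finset (ℕ × ℕ)}
    (hZ : ∀ e ∈ Z, e.1 ≠ e.2 ∧ e.1 % 2 = 1 ∧ e.2 % 2 = 1) :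
    pfaffianOn (entryOff K n Z) V ∈ IssIdeal K n z := by
  induction Z using Finset.induction_on generalizing V with
  | empty =>
    have hempty : entryOff K n ∅ = fun v w => genericEntry K n (v / 2) (w / 2) := by
      funext v w
      simp [entryOff]
    exact hempty ▸ h.pfaffianOn_untagged_mem
  | insert e Z _ ih =>
    obtain ⟨a, b⟩ := e
    obtain ⟨hab, ha, hb⟩ := hZ (a, b) (Finset.mem_insert_self _ _)
    replace ih {V : Finset ℕ} (h : ExceedsRank n z i j V) :=
      ih h fun e he => hZ e (Finset.mem_insert_of_mem he)
    have hagree : ∀ x y, (x, y) ≠ (a, b) → (x, y) ≠ (b, a) →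
        entryOff K n (insert (a, b) Z) x y = entryOff K n Z x y := by
      intro x y hxy hyx
      unfold entryOff
      grind
    by_cases hV : a ∈ V ∧ b ∈ V
    · rw [(isAlternating_entryOff Z).pfaffianOn_eq_sub_of_eq_off_pair (isAlternating_entryOff _)
        hV.1 (Finset.mem_erase.2 ⟨hab.symm, hV.2⟩) (by simp [entryOff]) hagree]
      exact sub_mem (ih h) (Ideal.mul_mem_left _ _ (ih ((h.erase_of_odd ha).erase_of_odd hb)))
    · rw [pfaffianOn_congr (M' := entryOff K n Z) fun x hx y hy => hagree x y (by grind) (by grind)]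
      exact ih h

theorem ExceedsRank.pfaffianOn_taggedEntry_mem (h : ExceedsRank n z i j V) :
    pfaffianOn (taggedEntry K n) V ∈ IssIdeal K n z := by
  set Z := (V ×ˢ V).filter fun e => e.1 ≠ e.2 ∧ e.1 % 2 = 1 ∧ e.2 % 2 = 1
  have htagged : ∀ v ∈ V, ∀ w ∈ V, taggedEntry K n v w = entryOff K n Z v w := by
    intro v hv w hw
    rcases eq_or_ne v w with rfl | hvw
    · simp [taggedEntry, entryOff, (isAlternating_genericEntry K n).diag]
    · unfold taggedEntry entryOff
      grind
  rw [pfaffianOn_congr htagged]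
  exact h.pfaffianOn_entryOff_mem fun e he => (Finset.mem_filter.1 he).2

theorem isSkewRegion_boxes (m : SSVar n →₀ ℕ) : IsSkewRegion n (boxes m) :=
  ⟨swap_mem_boxes, fst_ne_snd_of_mem_boxes, fst_mem_Icc_of_mem_boxes⟩

theorem exists_antichain_card_eq_rnk_add_one (hz : IsFPFInvolution z) {m : SSVar n →₀ ℕ}
    (h : ¬ IsStandard z (boxes m)) :
    ∃ i j, 1 ≤ j ∧ j ≤ i ∧ i ≤ n ∧ ∃ C ⊆ boxes m, IsAntichain (· ≤ ·) (C : Set (ℕ × ℕ)) ∧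
      (∀ c ∈ C, c ≤ (i, j)) ∧ C.card = rnk z i j + 1 := by
  obtain ⟨i, j, hji, hlt⟩ : ∃ i j, j ≤ i ∧ rnk z i j < antichainWidth (boxes m) (i, j) := by
    simp only [IsStandard] at h
    push Not at h
    obtain ⟨i, j, hlt⟩ := h
    rcases le_total j i with hji | hij
    · exact ⟨i, j, hji, hlt⟩
    · refine ⟨j, i, hij, ?_⟩
      rwa [rnk_comm hz, ← Prod.swap_prod_mk, antichainWidth_swap swap_mem_boxes]
  obtain ⟨C, hCm, hanti, hCle, hcard⟩ := exists_card_eq_antichainWidth (boxes m) (i, j)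
  have hrnk := rnk_mono z (min_le_left i n) (min_le_left j n)
  obtain ⟨C', hC'C, hcard'⟩ := Finset.exists_subset_card_eq
    (show rnk z (min i n) (min j n) + 1 ≤ C.card by omega)
  have hbounds : ∀ c ∈ C', 1 ≤ c.2 ∧ c.1 ≤ min i n ∧ c.2 ≤ min j n := by
    intro c hc
    have := Prod.mk_le_mk.1 (hCle c (hC'C hc))
    have := (isSkewRegion_boxes m).of_mem (hCm (hC'C hc))
    omega
  obtain ⟨c, hc⟩ : C'.Nonempty := Finset.card_pos.1 (by omega)
  have hcb := hbounds c hc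
  exact ⟨min i n, min j n, by omega, by omega, by omega, C', hC'C.trans hCm,
    hanti.subset (Finset.coe_subset.2 hC'C), fun c hc => Prod.mk_le_mk.2 (hbounds c hc).2, hcard'⟩

theorem exists_mem_IssIdeal_degree_eq (hz : IsFPFInvolution z) {m : SSVar n →₀ ℕ}
    (h : ¬ IsStandard z (boxes m)) :
    ∃ g ∈ IssIdeal K n z, g ≠ 0 ∧ (revlex n).degree g = m := by
  obtain ⟨i, j, hj, hji, hi, C, hCm, hanti, hCle, hcard⟩ :=
    exists_antichain_card_eq_rnk_add_one hz h
  have hC : IsAntichainIn (boxes m) 1 (i + 1) 1 (j + 1) C := ⟨hCm, hanti, fun c hc => by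
    have := Prod.mk_le_mk.1 (hCle c hc)
    have := (isSkewRegion_boxes m).of_mem (hCm hc)
    omega⟩
  obtain ⟨V, hV⟩ := hasLeadingWindows (K := K) (isSkewRegion_boxes m) (i + 1) (j + 1) (by omega)
    1 1 le_rfl C hC
  have hA := hV.mem_A
  have hB := hV.mem_B
  have hcardB := hV.le_card_B
  have hexceeds : ExceedsRank n z i j V := ⟨hj, hji, hi, by grind, by grind, by omega⟩
  set P := pfaffianOn (taggedEntry K n) V
  have hle : (revlex n).degree P ≤ m := fun v => by
    by_cases h0 : (revlex n).degree P v = 0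
    · exact h0.trans_le (Nat.zero_le _)
    · exact (hV.leading.degree_le_one v).trans
        (Nat.one_le_iff_ne_zero.2 (box_mem_boxes.1 (hV.leading.box_mem v h0)))
  have hmon : monomial (m - (revlex n).degree P) (1 : K) ≠ 0 := monomial_eq_zero.not.2 one_ne_zero
  refine ⟨monomial (m - (revlex n).degree P) 1 * P,
    Ideal.mul_mem_left _ _ hexceeds.pfaffianOn_taggedEntry_mem,
    mul_ne_zero hmon hV.leading.ne_zero, ?_⟩
  classical
  rw [MonomialOrder.degree_mul hmon hV.leading.ne_zero, MonomialOrder.degree_monomial,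
    if_neg one_ne_zero, tsub_add_cancel_of_le hle]

end Membership

/-! ### The monomial ideal `J^ss_z` -/

section Antidiagonal

open MvPolynomial

variable {n : ℕ} {A B : Finset (Fin n)} (h : A.card = B.card)

/-- The set `A ⊙ B` of pairs `(a_t, b_{r-t})`, with indices starting from `1`. -/
def antidiagonal (h : A.card = B.card) : Finset (ℕ × ℕ) :=
  Finset.univ.image fun t : Fin A.card =>
    ((A.orderEmbOfFin rfl t : ℕ) + 1, (B.orderEmbOfFin h.symm t.rev : ℕ) + 1)

theorem mem_antidiagonal {c : ℕ × ℕ} : c ∈ antidiagonal h ↔ ∃ t : Fin A.card,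
    ((A.orderEmbOfFin rfl t : ℕ) + 1, (B.orderEmbOfFin h.symm t.rev : ℕ) + 1) = c := by
  simp only [antidiagonal, Finset.mem_image, Finset.mem_univ, true_and]

theorem eq_of_antidiagonal_le {s t : Fin A.card}
    (hA : A.orderEmbOfFin rfl s ≤ A.orderEmbOfFin rfl t)
    (hB : B.orderEmbOfFin h.symm s.rev ≤ B.orderEmbOfFin h.symm t.rev) : s = t := by
  rw [OrderEmbedding.le_iff_le] at hA hB
  exact hA.antisymm (Fin.rev_le_rev.1 hB)

theorem isAntichain_antidiagonal : IsAntichain (· ≤ ·) (antidiagonal h : Set (ℕ × ℕ)) := by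
  intro c hc d hd hne hle
  obtain ⟨s, rfl⟩ := (mem_antidiagonal h).1 hc
  obtain ⟨t, rfl⟩ := (mem_antidiagonal h).1 hd
  have hle := Prod.mk_le_mk.1 hle
  exact hne (by rw [eq_of_antidiagonal_le h (Nat.succ_le_succ_iff.1 hle.1)
    (Nat.succ_le_succ_iff.1 hle.2)])

theorem card_antidiagonal : (antidiagonal h).card = A.card := by
  rw [antidiagonal, Finset.card_image_of_injective, Finset.card_univ, Fintype.card_fin]
  intro s t hst
  obtain ⟨hA, hB⟩ := Prod.ext_iff.1 hst
  exact eq_of_antidiagonal_le h (Nat.succ_injective hA).le (Nat.succ_injective hB).le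

theorem forall_orderEmbOfFin_iff {α : Type*} [LinearOrder α] {s : Finset α} {k : ℕ}
    (hs : s.card = k) {p : α → Prop} : (∀ t, p (s.orderEmbOfFin hs t)) ↔ ∀ a ∈ s, p a := by
  rw [← Set.forall_mem_range, Finset.range_orderEmbOfFin]
  rfl

theorem forall_mem_antidiagonal_le_iff {i j : ℕ} :
    (∀ c ∈ antidiagonal h, c ≤ (i, j)) ↔
      (∀ a ∈ A, (a : ℕ) + 1 ≤ i) ∧ ∀ b ∈ B, (b : ℕ) + 1 ≤ j := by
  simp only [antidiagonal, Finset.forall_mem_image, Prod.mk_le_mk, Finset.mem_univ, true_imp_iff,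
    forall_and]
  refine and_congr ?_ ?_
  · exact forall_orderEmbOfFin_iff rfl (p := fun a : Fin n => (a : ℕ) + 1 ≤ i)
  · rw [← forall_orderEmbOfFin_iff h.symm (p := fun b : Fin n => (b : ℕ) + 1 ≤ j),
      Fin.rev_surjective.forall]
    simp only [Fin.rev_rev]

theorem exists_rows_cols {C : Finset (ℕ × ℕ)} (hC : IsAntichain (· ≤ ·) (C : Set (ℕ × ℕ)))
    (hrect : ∀ c ∈ C, c.1 ∈ Set.Icc 1 n ∧ c.2 ∈ Set.Icc 1 n) :
    ∃ A B : Finset (Fin n), A.card = C.card ∧ B.card = C.card ∧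
      ∀ a ∈ A, ∃ b ∈ B, ((a : ℕ) + 1, (b : ℕ) + 1) ∈ C := by
  obtain ⟨A, hA⟩ := exists_image_succ_eq (n := n) (R := C.image Prod.fst)
    (Finset.forall_mem_image.2 fun c hc => (hrect c hc).1)
  obtain ⟨B, hB⟩ := exists_image_succ_eq (n := n) (R := C.image Prod.snd)
    (Finset.forall_mem_image.2 fun c hc => (hrect c hc).2)
  have hsucc : Function.Injective fun a : Fin n => (a : ℕ) + 1 := fun a b h =>
    Fin.ext (Nat.succ_injective h)
  refine ⟨A, B, ?_, ?_, fun a ha => ?_⟩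
  · rw [← Finset.card_image_of_injective A hsucc, hA,
      Finset.card_image_of_injOn (isAntichain_injOn_fst hC)]
  · rw [← Finset.card_image_of_injective B hsucc, hB,
      Finset.card_image_of_injOn (isAntichain_injOn_snd hC)]
  · obtain ⟨c, hc, hca⟩ := Finset.mem_image.1 (hA ▸ Finset.mem_image_of_mem _ ha)
    obtain ⟨b, hb, hcb⟩ := Finset.mem_image.1 (hB.symm ▸ Finset.mem_image_of_mem Prod.snd hc)
    exact ⟨b, hb, by rwa [← hca, hcb]⟩

theorem exists_antidiagonal_eq {C : Finset (ℕ × ℕ)} (hC : IsAntichain (· ≤ ·) (C : Set (ℕ × ℕ)))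
    (hrect : ∀ c ∈ C, c.1 ∈ Set.Icc 1 n ∧ c.2 ∈ Set.Icc 1 n) :
    ∃ (A B : Finset (Fin n)) (h : A.card = B.card), antidiagonal h = C := by
  obtain ⟨A, B, hAC, hBC, hpartner⟩ := exists_rows_cols hC hrect
  have h : A.card = B.card := hAC.trans hBC.symm
  choose f hfB hfC using fun t => hpartner _ (A.orderEmbOfFin_mem rfl t)
  have hf : (fun t : Fin A.card => f t.rev) = B.orderEmbOfFin h.symm := by
    refine Finset.orderEmbOfFin_unique _ (fun t => hfB _) fun s t hst => ?_
    have hlt : A.orderEmbOfFin rfl t.rev < A.orderEmbOfFin rfl s.rev :=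
      (A.orderEmbOfFin rfl).strictMono (Fin.rev_lt_rev.2 hst)
    by_contra hge
    have heq := hC.eq (hfC t.rev) (hfC s.rev)
      (Prod.mk_le_mk.2 ⟨Nat.succ_le_succ hlt.le, Nat.succ_le_succ (not_lt.1 hge)⟩)
    exact hlt.ne (Fin.ext (Nat.succ_injective (Prod.ext_iff.1 heq).1))
  refine ⟨A, B, h, Finset.eq_of_subset_of_card_le ?_ (by rw [card_antidiagonal, hAC])⟩
  refine Finset.image_subset_iff.2 fun t _ => ?_
  simpa only [← hf, Fin.rev_rev] using hfC t

open Classical in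
/-- The exponent vector of the monomial `u^ss_{AB}`, meaningful when `A ⊙ B` avoids the diagonal. -/
noncomputable def ussExponent (h : A.card = B.card) : SSVar n →₀ ℕ :=
  ∑ v with box v ∈ antidiagonal h ∨ (box v).swap ∈ antidiagonal h, Finsupp.single v 1

theorem ussExponent_le_one (v : SSVar n) : ussExponent h v ≤ 1 := by
  classical
  rw [ussExponent, Finsupp.finsetSum_apply]
  simp only [Finsupp.single_apply, Finset.sum_ite_eq']
  split_ifs <;> simp

theorem ussExponent_ne_zero_iff {v : SSVar n} :
    ussExponent h v ≠ 0 ↔ box v ∈ antidiagonal h ∨ (box v).swap ∈ antidiagonal h := by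
  classical
  rw [ussExponent, Finsupp.finsetSum_apply]
  simp [Finsupp.single_apply, or_iff_not_imp_left]

theorem ussMon_eq_ite [Decidable (∃ c ∈ antidiagonal h, c.1 = c.2)] (K : Type*) [CommRing K] :
    ussMon K A B = if ∃ c ∈ antidiagonal h, c.1 = c.2 then 0 else monomial (ussExponent h) 1 := by
  have hdiag : (∃ c ∈ antidiagonal h, c.1 = c.2) ↔
      ∃ t : Fin A.card, A.orderEmbOfFin rfl t = B.orderEmbOfFin h.symm t.rev := by
    simp [antidiagonal, Fin.ext_iff]
  rw [ussMon, dif_pos h]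
  simp only [hdiag]
  congr 1
  rw [ussExponent, monomial_sum_one]
  refine Finset.prod_congr (Finset.filter_congr fun v _ => ?_) fun v _ => rfl
  simp only [mem_antidiagonal, box, Prod.swap_prod_mk, Prod.mk.injEq, Nat.add_right_cancel_iff,
    Fin.ext_iff, exists_or]

theorem antidiagonal_subset_boxes (hdiag : ¬ ∃ c ∈ antidiagonal h, c.1 = c.2) :
    antidiagonal h ⊆ boxes (ussExponent h) := by
  intro c hc
  obtain ⟨t, rfl⟩ := (mem_antidiagonal h).1 hc
  set a := A.orderEmbOfFin rfl t
  set b := B.orderEmbOfFin h.symm t.rev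
  rcases lt_trichotomy b a with hlt | heq | hgt
  · exact box_mem_boxes (v := ⟨(a, b), hlt⟩).2 ((ussExponent_ne_zero_iff h).2 (Or.inl hc))
  · exact absurd ⟨_, hc, congrArg (· + 1) (congrArg Fin.val heq.symm)⟩ hdiag
  · exact swap_mem_boxes _ (box_mem_boxes (v := ⟨(b, a), hgt⟩).2
      ((ussExponent_ne_zero_iff h).2 (Or.inr hc)))

theorem ussExponent_le {m : SSVar n →₀ ℕ} (hm : antidiagonal h ⊆ boxes m) :
    ussExponent h ≤ m := by
  intro v
  by_cases hv : ussExponent h v = 0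
  · exact hv.trans_le (Nat.zero_le _)
  · refine (ussExponent_le_one h v).trans (Nat.one_le_iff_ne_zero.2 (box_mem_boxes.1 ?_))
    rcases (ussExponent_ne_zero_iff h).1 hv with hmem | hmem
    · exact hm hmem
    · exact swap_mem_boxes _ (hm hmem)

end Antidiagonal

section MonomialIdeal

open MvPolynomial

variable {K : Type*} [Field K] {n : ℕ} {z : Equiv.Perm ℕ}

theorem monomial_mem_JssIdeal (hz : IsFPFInvolution z) {m : SSVar n →₀ ℕ}
    (h : ¬ IsStandard z (boxes m)) : monomial m (1 : K) ∈ JssIdeal K n z := by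
  classical
  obtain ⟨i, j, hj, hji, hi, C, hCm, hanti, hCle, hcard⟩ :=
    exists_antichain_card_eq_rnk_add_one hz h
  obtain ⟨A, B, hAB, rfl⟩ := exists_antidiagonal_eq (n := n) hanti fun c hc =>
    ((isSkewRegion_boxes m).of_mem (hCm hc)).2
  obtain ⟨hA, hB⟩ := (forall_mem_antidiagonal_le_iff hAB).1 hCle
  rw [card_antidiagonal] at hcard
  have hgen : ussMon K A B ∈ JssIdeal K n z :=
    Ideal.subset_span ⟨i, j, A, B, hj, hji, hi, hA, hB, hcard, hAB ▸ hcard, rfl⟩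
  rw [ussMon_eq_ite hAB, if_neg fun ⟨c, hc, hcc⟩ => fst_ne_snd_of_mem_boxes c (hCm hc) hcc] at hgen
  rw [← tsub_add_cancel_of_le (ussExponent_le hAB hCm), ← one_mul (1 : K), ← monomial_mul]
  exact Ideal.mul_mem_left _ _ hgen

theorem JssIdeal_eq_span (hz : IsFPFInvolution z) :
    JssIdeal K n z =
      Ideal.span ((fun m => monomial m (1 : K)) '' {m | ¬ IsStandard z (boxes m)}) := by
  classical
  refine le_antisymm (Ideal.span_le.2 ?_)
    (Ideal.span_le.2 (Set.image_subset_iff.2 fun m => monomial_mem_JssIdeal hz))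
  rintro _ ⟨i, j, A, B, -, -, -, hA, hB, hcardA, hcardB, rfl⟩
  have hAB : A.card = B.card := hcardA.trans hcardB.symm
  rw [ussMon_eq_ite hAB]
  split_ifs with hdiag
  · exact zero_mem _
  · refine Ideal.subset_span ⟨ussExponent hAB, fun hstd => ?_, rfl⟩
    have hwidth := card_le_antichainWidth (antidiagonal_subset_boxes hAB hdiag)
      (isAntichain_antidiagonal hAB) ((forall_mem_antidiagonal_le_iff hAB).2 ⟨hA, hB⟩)
    rw [card_antidiagonal, hcardA] at hwidth
    exact (hwidth.trans (hstd i j)).not_gt (Nat.lt_succ_self _)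

theorem JssIdeal_eq_initIdeal (hz : IsFPFInvolution z) {I : Ideal (MvPolynomial (SSVar n) K)}
    (hI : ∀ m : SSVar n →₀ ℕ, ¬ IsStandard z (boxes m) ↔ ∃ f ∈ I, f ≠ 0 ∧ (revlex n).degree f = m) :
    JssIdeal K n z = initIdeal revlexLT I := by
  rw [JssIdeal_eq_span hz, initIdeal_revlexLT_eq_span]
  congr 1
  ext g
  simp only [Set.mem_image, Set.mem_ofPred_eq, hI]
  constructor
  · rintro ⟨m, ⟨f, hf, hf0, rfl⟩, rfl⟩
    exact ⟨f, hf, hf0, rfl⟩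
  · rintro ⟨f, hf, hf0, rfl⟩
    exact ⟨_, ⟨f, hf, hf0, rfl⟩, rfl⟩

end MonomialIdeal

/-! ### A parametrized subset of `X^ss_z` -/

section Parametrization

variable {R : Type*} [CommRing R] {z : Equiv.Perm ℕ} {g : ℕ → ℕ → R} {c : ℕ → R}

/-- The `(i, j)` entry of `g * D * gᵀ`, where `g` is lower triangular and the only nonzero entries
of `D` are the `c a` in the positions `(a, z a)`. -/
def paramEntry (z : Equiv.Perm ℕ) (g : ℕ → ℕ → R) (c : ℕ → R) (i j : ℕ) : R :=
  ∑ a ∈ Finset.Icc 1 i, c a * g i a * g j (z a)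

/-- The conditions on `g` and `c` under which `paramEntry z g c` is a skew-symmetric matrix
satisfying the rank conditions of `X^ss_z`. -/
structure IsParam (z : Equiv.Perm ℕ) (g : ℕ → ℕ → R) (c : ℕ → R) : Prop where
  lowerTriangular : ∀ i a, i < a → g i a = 0
  apply_eq_neg : ∀ a, 1 ≤ a → c (z a) = -c a

theorem map_paramEntry {S : Type*} [CommRing S] (φ : R →+* S) (z : Equiv.Perm ℕ) (g : ℕ → ℕ → R)
    (c : ℕ → R) (i j : ℕ) :
    φ (paramEntry z g c i j) = paramEntry z (fun i a => φ (g i a)) (fun a => φ (c a)) i j := by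
  simp only [paramEntry, map_sum, map_mul]

theorem IsParam.map {S : Type*} [CommRing S] (h : IsParam z g c) (φ : R →+* S) :
    IsParam z (fun i a => φ (g i a)) (fun a => φ (c a)) where
  lowerTriangular i a hia := by rw [h.lowerTriangular i a hia, map_zero]
  apply_eq_neg a ha := by rw [h.apply_eq_neg a ha, map_neg]

theorem IsParam.paramEntry_eq_sum (h : IsParam z g c) {i j : ℕ} {S : Finset ℕ}
    (hS : ∀ a ∈ S, 1 ≤ a) (hmem : ∀ a, 1 ≤ a → a ≤ i → z a ≤ j → a ∈ S) :
    paramEntry z g c i j = ∑ a ∈ S, c a * g i a * g j (z a) := by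
  classical
  have hsupport : ∀ a, 1 ≤ a → c a * g i a * g j (z a) ≠ 0 → a ≤ i ∧ z a ≤ j := by
    intro a _ hne
    by_contra! hlt
    rcases le_or_gt a i with hai | hai
    · exact hne (by rw [h.lowerTriangular j _ (hlt hai), mul_zero])
    · exact hne (by rw [h.lowerTriangular i a hai, mul_zero, zero_mul])
  rw [paramEntry, ← Finset.sum_filter_ne_zero, ← Finset.sum_filter_ne_zero (s := S)]
  refine Finset.sum_congr (Finset.ext fun a => ?_) fun _ _ => rfl
  simp only [Finset.mem_filter, Finset.mem_Icc]
  grind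

/-- The indices in `[N]` that `z` pairs within `[N]`. -/
def pairedIndices (z : Equiv.Perm ℕ) (N : ℕ) : Finset ℕ :=
  (Finset.Icc 1 N).filter fun a => z a ≤ N

theorem mem_pairedIndices {N a : ℕ} : a ∈ pairedIndices z N ↔ (1 ≤ a ∧ a ≤ N) ∧ z a ≤ N := by
  rw [pairedIndices, Finset.mem_filter, Finset.mem_Icc]

theorem apply_mem_pairedIndices (hz : IsFPFInvolution z) {N a : ℕ} (ha : a ∈ pairedIndices z N) :
    z a ∈ pairedIndices z N := by
  obtain ⟨⟨h1, haN⟩, hzaN⟩ := mem_pairedIndices.1 ha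
  exact mem_pairedIndices.2 ⟨⟨hz.one_le_apply h1, hzaN⟩, (hz.apply_apply a).le.trans haN⟩

theorem IsParam.paramEntry_eq_sum_pairedIndices (h : IsParam z g c) {i j N : ℕ} (hi : i ≤ N)
    (hj : j ≤ N) : paramEntry z g c i j = ∑ a ∈ pairedIndices z N, c a * g i a * g j (z a) :=
  h.paramEntry_eq_sum (fun _ ha => (mem_pairedIndices.1 ha).1.1) fun _ h1 hai hzaj =>
    mem_pairedIndices.2 ⟨⟨h1, hai.trans hi⟩, hzaj.trans hj⟩

theorem IsParam.isAlternating_paramEntry (h : IsParam z g c) (hz : IsFPFInvolution z) :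
    IsAlternating (paramEntry z g c) where
  swap i j := by
    rw [h.paramEntry_eq_sum_pairedIndices (le_max_left i j) (le_max_right i j),
      h.paramEntry_eq_sum_pairedIndices (le_max_right i j) (le_max_left i j),
      ← Finset.sum_neg_distrib]
    refine Finset.sum_nbij' z z (fun a ha => apply_mem_pairedIndices hz ha)
      (fun a ha => apply_mem_pairedIndices hz ha) (fun a _ => hz.apply_apply a)
      (fun a _ => hz.apply_apply a) fun a ha => ?_
    rw [h.apply_eq_neg a (mem_pairedIndices.1 ha).1.1, hz.apply_apply]
    ring
  diag i := by
    rw [h.paramEntry_eq_sum_pairedIndices le_rfl le_rfl]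
    refine Finset.sum_involution (fun a _ => z a) (fun a ha => ?_)
      (fun a ha _ => hz.ne_self a (mem_pairedIndices.1 ha).1.1)
      (fun a ha => apply_mem_pairedIndices hz ha) fun a _ => hz.apply_apply a
    rw [h.apply_eq_neg a (mem_pairedIndices.1 ha).1.1, hz.apply_apply]
    ring

end Parametrization

section Vanishing

open MvPolynomial

variable {K : Type*} [Field K] {n : ℕ} {z : Equiv.Perm ℕ}

theorem IsParam.rank_paramEntry_le {g : ℕ → ℕ → K} {c : ℕ → K} (h : IsParam z g c)
    (hz : IsFPFInvolution z) (i j : ℕ) :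
    (Matrix.of fun (s : Fin i) (t : Fin j) => paramEntry z g c (s + 1) (t + 1)).rank ≤
      rnk z i j := by
  set T := (Finset.Icc 1 i).filter fun a => z a ∈ Finset.Icc 1 j with hT
  have hfactor : (Matrix.of fun (s : Fin i) (t : Fin j) => paramEntry z g c (s + 1) (t + 1)) =
      (Matrix.of fun (s : Fin i) (a : T) => c a * g (s + 1) a) *
        Matrix.of fun (a : T) (t : Fin j) => g (t + 1) (z a) := by
    ext s t
    simp only [Matrix.mul_apply, Matrix.of_apply]
    rw [Finset.sum_coe_sort T fun a => c a * g (s + 1) a * g (t + 1) (z a)]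
    refine h.paramEntry_eq_sum (fun a ha => (Finset.mem_Icc.1 (Finset.mem_filter.1 ha).1).1)
      fun a ha has hat => ?_
    rw [hT, Finset.mem_filter, Finset.mem_Icc, Finset.mem_Icc]
    exact ⟨⟨ha, has.trans s.2⟩, hz.one_le_apply ha, hat.trans t.2⟩
  rw [hfactor]
  calc _ ≤ _ := Matrix.rank_mul_le_left _ _
    _ ≤ Fintype.card T := Matrix.rank_le_card_width _
    _ = rnk z i j := Fintype.card_coe T

theorem IsParam.paramEntry_mem_Xss {g : ℕ → ℕ → K} {c : ℕ → K} (h : IsParam z g c)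
    (hz : IsFPFInvolution z) :
    (Matrix.of fun i j : Fin n => paramEntry z g c (i + 1) (j + 1)) ∈ Xss K n z :=
  ⟨⟨Matrix.ext fun _ _ => (h.isAlternating_paramEntry hz).swap _ _,
    fun _ => (h.isAlternating_paramEntry hz).diag _⟩,
    fun i j _ _ _ _ => h.rank_paramEntry_le hz i j⟩

theorem isAlternating_of_mem_MatSS {A : Matrix (Fin n) (Fin n) K} (hA : A ∈ MatSS K n) :
    IsAlternating fun a b => A a b :=
  ⟨fun a b => congrFun (congrFun hA.1 b) a, hA.2⟩

theorem eval_Uss {A : Matrix (Fin n) (Fin n) K} (hA : A ∈ MatSS K n) (a b : Fin n) :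
    eval (fun v : SSVar n => A v.1.1 v.1.2) (Uss K n a b) = A a b := by
  have hswap := (isAlternating_of_mem_MatSS hA).swap a b
  simp only [Uss, Matrix.of_apply]
  rcases lt_trichotomy b a with hba | rfl | hab
  · rw [dif_pos hba, eval_X]
  · rw [dif_neg (lt_irrefl b), dif_neg (lt_irrefl b), map_zero, hA.2]
  · rw [dif_neg hab.not_gt, dif_pos hab, map_neg, eval_X, hswap]

theorem IsAlternating.pfaffianOn_eq_zero_of_not_linearIndepOn {ι : Type*} [LinearOrder ι]
    {M : ι → ι → K} (hM : IsAlternating M) {V W : Finset ι} (hWV : W ⊆ V)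
    (hW : ¬ LinearIndepOn K (fun l (y : V) => M y l) (W : Set ι)) : pfaffianOn M V = 0 := by
  rw [linearIndepOn_finset_iff] at hW
  push Not at hW
  obtain ⟨c, hc, k, hkW, hck⟩ := hW
  have hrel : ∀ y ∈ V, ∑ l ∈ V, (if l ∈ W then c l else 0) * M l y = 0 := by
    intro y hy
    have hcy := congrFun hc ⟨y, hy⟩
    simp only [Finset.sum_apply, Pi.smul_apply, smul_eq_mul, Pi.zero_apply, hM.swap y, mul_neg,
      Finset.sum_neg_distrib, neg_eq_zero] at hcy
    simpa only [ite_mul, zero_mul, Finset.sum_ite_mem, Finset.inter_eq_right.2 hWV] using hcy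
  have hpf := hM.mul_pfaffianOn_eq_zero _ hrel (hWV hkW)
  rw [if_pos hkW] at hpf
  exact (mul_eq_zero.1 hpf).resolve_left hck

theorem card_le_rank_of_linearIndepOn {A : Matrix (Fin n) (Fin n) K} {i j : ℕ} (hi : i ≤ n)
    (hj : j ≤ n) {V W : Finset (Fin n)} (hV : ∀ a ∈ V, (a : ℕ) + 1 ≤ i)
    (hW : ∀ b ∈ W, (b : ℕ) + 1 ≤ j)
    (hind : LinearIndepOn K (fun b (a : V) => A a b) (W : Set (Fin n))) :
    W.card ≤ (A.submatrix (Fin.castLE hi) (Fin.castLE hj)).rank := by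
  set B := (A.submatrix (Fin.castLE hi) (Fin.castLE hj)).submatrix
    (fun a : V => (⟨a, hV a a.2⟩ : Fin i)) (fun b : W => (⟨b, hW b b.2⟩ : Fin j))
  have hB : B.rank = W.card := by
    rw [← Matrix.rank_transpose, LinearIndependent.rank_matrix (M := B.transpose) hind,
      Fintype.card_coe]
  exact hB.symm.trans_le (Matrix.rank_submatrix_le _ _ _)

theorem IssIdeal_le_IXss (z : Equiv.Perm ℕ) : IssIdeal K n z ≤ IXss K n z := by
  refine Ideal.span_le.2 ?_
  rintro _ ⟨R, -, -, ⟨i, j, hj, hji, hi, hR, hcard⟩, rfl⟩ A ⟨hss, hrank⟩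
  have hA := isAlternating_of_mem_MatSS hss
  have heval : eval (fun v : SSVar n => A v.1.1 v.1.2) (pfUss K R) =
      pfaffianOn (fun a b => A a b) R := by
    rw [pfUss, Pfaffian_submatrix_orderEmbOfFin _ Uss_eq_neg_swap, map_pfaffianOn]
    simp only [eval_Uss hss]
  set W := R.filter fun a : Fin n => (a : ℕ) + 1 ≤ j
  refine heval.trans
    (hA.pfaffianOn_eq_zero_of_not_linearIndepOn (W := W) (Finset.filter_subset _ R) fun hind => ?_)
  have hcard_le := card_le_rank_of_linearIndepOn hi (hji.trans hi) hR
    (fun b hb => (Finset.mem_filter.1 hb).2) hind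
  exact hcard.not_ge (hcard_le.trans (hrank i j hi _ (hj.trans hji) hj))

/-- `f` vanishes at all the matrices parametrized by `paramEntry z`. -/
def VanishesOnParam (z : Equiv.Perm ℕ) (f : MvPolynomial (SSVar n) K) : Prop :=
  ∀ g c, IsParam z g c → eval (fun v => paramEntry z g c (box v).1 (box v).2) f = 0

theorem vanishesOnParam_of_mem_IXss (hz : IsFPFInvolution z) {f : MvPolynomial (SSVar n) K}
    (hf : f ∈ IXss K n z) : VanishesOnParam z f := by
  intro g c h
  exact hf (Matrix.of fun i j : Fin n => paramEntry z g c (i + 1) (j + 1)) (h.paramEntry_mem_Xss hz)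

theorem eval_polynomial_path_eq_zero [Infinite K] {σ : Type*} {f : MvPolynomial σ K}
    (P : σ → Polynomial K) {q : Polynomial K} (hq : q ≠ 0)
    (h : ∀ t, q.eval t ≠ 0 → eval (fun v => (P v).eval t) f = 0) (t : K) :
    eval (fun v => (P v).eval t) f = 0 := by
  have heval : ∀ t, (aeval P f).eval t = eval (fun v => (P v).eval t) f := by
    intro t
    rw [← Polynomial.coe_evalRingHom, map_aeval, coe_eval₂Hom, eval, coe_eval₂Hom]
    congr 1
    ext
    simp
  have hprod : q * aeval P f = 0 := by
    refine Polynomial.funext fun t => ?_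
    rw [Polynomial.eval_mul, Polynomial.eval_zero, heval, mul_eq_zero]
    exact or_iff_not_imp_left.2 (h t)
  rw [← heval, (mul_eq_zero.1 hprod).resolve_left hq, Polynomial.eval_zero]

end Vanishing

/-! ### Degenerating the parametrization along a raising swap -/

section Degeneration

variable {K : Type*} [Field K] {n : ℕ} {z : Equiv.Perm ℕ} {p r : ℕ}

/-- The triangular matrix of a family of parameters for `z` which degenerates, as `t → 0`, to the
parameters `g`, `c` for `conjSwap z p r`; its coefficients are `degenerateCoeff`. -/
def degenerateMatrix (z : Equiv.Perm ℕ) (p r : ℕ) (g : ℕ → ℕ → K) (c : ℕ → K) (t : K)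
    (i a : ℕ) : K :=
  if a = p then t * c p * g i p - c (z p) * g i r
  else if a = z p then g i (z p) + t⁻¹ * g i (z r)
  else g i a

/-- The coefficients accompanying `degenerateMatrix`. -/
def degenerateCoeff (z : Equiv.Perm ℕ) (p r : ℕ) (c : ℕ → K) (t : K) (a : ℕ) : K :=
  if a = p then 1
  else if a = z p then -1
  else if a = r then c (z p) * t⁻¹
  else if a = z r then -(c (z p) * t⁻¹)
  else c a

namespace IsRaisingSwap

variable {g : ℕ → ℕ → K} {c : ℕ → K}

theorem isParam_degenerate (h : IsRaisingSwap z p r) (hgc : IsParam (conjSwap z p r) g c) (t : K) :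
    IsParam z (degenerateMatrix z p r g c t) (degenerateCoeff z p r c t) where
  lowerTriangular i a hia := by
    have h1 := h.lt
    have h2 := h.apply_lt_apply
    simp only [degenerateMatrix]
    split_ifs with hap hazp
    · rw [hgc.lowerTriangular i p (by omega), hgc.lowerTriangular i r (by omega)]
      ring
    · rw [hgc.lowerTriangular i (z p) (by omega), hgc.lowerTriangular i (z r) (by omega)]
      ring
    · exact hgc.lowerTriangular i a hia
  apply_eq_neg a ha := by
    have hinv := h.isFPF.apply_apply
    have h1 := h.apply_lt
    have h2 := h.lt
    have h3 := h.apply_lt_apply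
    have h4 := h.apply_ne_left
    have h5 := h.apply_ne_right
    have hoff := fun hp hzp hr hzr => h.conjSwap_of_ne (a := a) hp hzp hr hzr
    have hskew := hgc.apply_eq_neg a ha
    simp only [degenerateCoeff]
    grind

theorem paramEntry_degenerate (h : IsRaisingSwap z p r) (hgc : IsParam (conjSwap z p r) g c) {t : K}
    (ht : t ≠ 0) (i j : ℕ) :
    paramEntry z (degenerateMatrix z p r g c t) (degenerateCoeff z p r c t) i j =
      paramEntry (conjSwap z p r) g c i j +
        t * (c p * (g i p * g j (z p) - g i (z p) * g j p)) := by
  have h1 := h.one_le_apply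
  have h2 := h.apply_lt
  have h3 := h.lt
  have h4 := h.apply_lt_apply
  have h5 := h.apply_ne_left
  have h6 := h.apply_ne_right
  have hcr : c r = -c (z p) := by rw [← h.conjSwap_apply_left]; exact hgc.apply_eq_neg _ h1
  have hczr : c (z r) = -c p := by rw [← h.conjSwap_left]; exact hgc.apply_eq_neg _ (by omega)
  set S := Finset.Icc 1 (i + r + z r) with hS
  have hone : ∀ a ∈ S, 1 ≤ a := fun a ha => (Finset.mem_Icc.1 ha).1
  have hmem : ∀ a, 1 ≤ a → a ≤ i → a ∈ S := fun a h1 h2 => Finset.mem_Icc.2 (by omega)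
  have hquad : {p, z p, r, z r} ⊆ S := by
    intro a; simp only [hS, Finset.mem_insert, Finset.mem_singleton, Finset.mem_Icc]; omega
  have hrest : ∀ a ∈ S \ {p, z p, r, z r}, degenerateCoeff z p r c t a *
      degenerateMatrix z p r g c t i a * degenerateMatrix z p r g c t j (z a) =
        c a * g i a * g j (conjSwap z p r a) := by
    intro a ha
    have hinv := h.isFPF.apply_apply
    simp only [Finset.mem_sdiff, Finset.mem_insert, Finset.mem_singleton, not_or] at ha
    have hoff := h.conjSwap_of_ne ha.2.1 ha.2.2.1 ha.2.2.2.1 ha.2.2.2.2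
    simp only [degenerateCoeff, degenerateMatrix]
    grind
  rw [hgc.paramEntry_eq_sum hone fun a h1 h2 _ => hmem a h1 h2,
    (h.isParam_degenerate hgc t).paramEntry_eq_sum hone fun a h1 h2 _ => hmem a h1 h2,
    h.sum_eq_sum_sdiff _ hquad, h.sum_eq_sum_sdiff _ hquad, Finset.sum_congr rfl hrest]
  simp only [h.isFPF.apply_apply, h.conjSwap_left, h.conjSwap_right, h.conjSwap_apply_left,
    h.conjSwap_apply_right, hcr, hczr, degenerateCoeff, degenerateMatrix, if_true, if_neg h2.ne,
    if_neg h3.ne', if_neg (h2.trans h3).ne', if_neg h5, if_neg h4.ne', if_neg h6]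
  field_simp
  ring

theorem vanishesOnParam_conjSwap [Infinite K] (h : IsRaisingSwap z p r)
    {f : MvPolynomial (SSVar n) K} (hf : VanishesOnParam z f) :
    VanishesOnParam (conjSwap z p r) f := by
  intro g c hgc
  have hpath := eval_polynomial_path_eq_zero (f := f) (fun v : SSVar n =>
    Polynomial.C (paramEntry (conjSwap z p r) g c (box v).1 (box v).2) + Polynomial.X *
      Polynomial.C (c p * (g (box v).1 p * g (box v).2 (z p) - g (box v).1 (z p) * g (box v).2 p)))
    Polynomial.X_ne_zero (fun t ht => ?_) 0
  · simpa only [Polynomial.eval_add, Polynomial.eval_mul, Polynomial.eval_C, Polynomial.eval_X,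
      zero_mul, add_zero] using hpath
  · rw [Polynomial.eval_X] at ht
    simpa only [Polynomial.eval_add, Polynomial.eval_mul, Polynomial.eval_C, Polynomial.eval_X,
      h.paramEntry_degenerate hgc ht] using hf _ _ (h.isParam_degenerate hgc t)

end IsRaisingSwap
end Degeneration

section CancelCorner

open Polynomial

variable {K : Type*} [Field K] {n : ℕ} {z : Equiv.Perm ℕ} {p : ℕ}

theorem IsCorner.one_le_apply (h : IsCorner z p) : 1 ≤ z p :=
  h.isFPF.one_le_apply (Nat.one_le_of_lt h.apply_lt)

theorem IsCorner.eq_of_le (h : IsCorner z p) {a : ℕ} (ha : 1 ≤ a) (hap : a ≤ p)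
    (hzap : z a ≤ z p) : a = p := by
  refine Finset.card_le_one.1 h.rnk_eq_one.le a ?_ p ?_ <;>
    rw [Finset.mem_filter, Finset.mem_Icc, Finset.mem_Icc]
  · exact ⟨⟨ha, hap⟩, h.isFPF.one_le_apply ha, hzap⟩
  · exact ⟨⟨ha.trans hap, le_rfl⟩, h.one_le_apply, le_rfl⟩

/-- The perturbation of `g` by a variable in the diagonal positions `p` and `z p`. -/
noncomputable def perturbMatrix (z : Equiv.Perm ℕ) (p : ℕ) (g : ℕ → ℕ → K) (i a : ℕ) : K[X] :=
  C (g i a) + if i = a ∧ (a = p ∨ a = z p) then X else 0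

/-- The perturbation of `c` by a variable in position `p` and its negative in position `z p`. -/
noncomputable def perturbCoeff (z : Equiv.Perm ℕ) (p : ℕ) (c : ℕ → K) (a : ℕ) : K[X] :=
  C (c a) + if a = p then X else if a = z p then -X else 0

namespace IsCorner

variable {g : ℕ → ℕ → K} {c : ℕ → K}

theorem isParam_perturb (h : IsCorner z p) (hgc : IsParam z g c) :
    IsParam z (perturbMatrix z p g) (perturbCoeff z p c) where
  lowerTriangular i a hia := by
    rw [perturbMatrix, hgc.lowerTriangular i a hia, if_neg fun hi => hia.ne hi.1, C_0, add_zero]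
  apply_eq_neg a ha := by
    have hinv := h.isFPF.apply_apply
    have hne := h.apply_lt
    simp only [perturbCoeff, hgc.apply_eq_neg a ha, C_neg]
    grind

theorem paramEntry_perturb (h : IsCorner z p) (hgc : IsParam z g c) :
    paramEntry z (perturbMatrix z p g) (perturbCoeff z p c) p (z p) =
      (X + C (c p)) * (X + C (g p p)) * (X + C (g (z p) (z p))) := by
  rw [(h.isParam_perturb hgc).paramEntry_eq_sum (S := {p})]
  · simp only [Finset.sum_singleton, perturbMatrix, perturbCoeff, if_true, true_or, or_true,
      and_true, add_comm X]
  · exact fun a ha => Finset.mem_singleton.1 ha ▸ Nat.one_le_of_lt h.apply_lt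
  · exact fun a ha hap hzap => Finset.mem_singleton.2 (h.eq_of_le ha hap hzap)

theorem vanishesOnParam_of_X_mul [Infinite K] (h : IsCorner z p) (hp : p ≤ n)
    {f : MvPolynomial (SSVar n) K}
    (hf : VanishesOnParam z (MvPolynomial.X (ssvar p (z p) hp h.one_le_apply h.apply_lt) * f)) :
    VanishesOnParam z f := by
  intro g c hgc
  have hentry : ∀ t i j, (paramEntry z (perturbMatrix z p g) (perturbCoeff z p c) i j).eval t =
      paramEntry z (fun i a => (perturbMatrix z p g i a).eval t)
        (fun a => (perturbCoeff z p c a).eval t) i j := fun t =>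
    map_paramEntry (evalRingHom t) z _ _
  have hpath := eval_polynomial_path_eq_zero (f := f) (fun v : SSVar n =>
    paramEntry z (perturbMatrix z p g) (perturbCoeff z p c) (box v).1 (box v).2)
    (q := paramEntry z (perturbMatrix z p g) (perturbCoeff z p c) p (z p)) ?_ (fun t ht => ?_) 0
  · have hmatrix : ∀ i a, (perturbMatrix z p g i a).eval 0 = g i a := by
      intro i a; rw [perturbMatrix]; split_ifs <;> simp
    have hcoeff : ∀ a, (perturbCoeff z p c a).eval 0 = c a := by
      intro a; rw [perturbCoeff]; split_ifs <;> simp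
    simpa only [hentry, hmatrix, hcoeff] using hpath
  · rw [h.paramEntry_perturb hgc]
    exact mul_ne_zero (mul_ne_zero (X_add_C_ne_zero _) (X_add_C_ne_zero _)) (X_add_C_ne_zero _)
  · have hzero := hf _ _ ((h.isParam_perturb hgc).map (evalRingHom t))
    rw [map_mul, MvPolynomial.eval_X, box_ssvar hp h.one_le_apply h.apply_lt] at hzero
    simp only [coe_evalRingHom, ← hentry] at hzero
    exact (mul_eq_zero.1 hzero).resolve_left ht

end IsCorner
end CancelCorner

/-! ### Leading monomials of polynomials vanishing on the parametrization -/

section Standard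

variable {n : ℕ} {z : Equiv.Perm ℕ}

theorem boxes_mono {m m' : SSVar n →₀ ℕ} (h : m ≤ m') : boxes m ⊆ boxes m' := by
  intro c hc
  obtain ⟨v, hv, hvc⟩ := mem_boxes.1 hc
  have := h v
  exact mem_boxes.2 ⟨v, by omega, hvc⟩

theorem isLowerSet_isStandard_boxes (z : Equiv.Perm ℕ) (n : ℕ) :
    IsLowerSet {m : SSVar n →₀ ℕ | IsStandard z (boxes m)} := fun _ _ hle hstd i j =>
  (antichainWidth_mono (boxes_mono hle) (i, j)).trans (hstd i j)

theorem IsStandard.exists_le_of_mem {D : Finset (ℕ × ℕ)} (h : IsStandard z D) {c : ℕ × ℕ}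
    (hc : c ∈ D) : ∃ a, 1 ≤ a ∧ a ≤ c.1 ∧ z a ≤ c.2 := by
  have hwidth : ({c} : Finset (ℕ × ℕ)).card ≤ antichainWidth D c :=
    card_le_antichainWidth (Finset.singleton_subset_iff.2 hc)
      (by simpa only [Finset.coe_singleton] using Set.subsingleton_singleton.isAntichain _)
      fun d hd => (Finset.mem_singleton.1 hd).le
  obtain ⟨a, ha⟩ := Finset.card_pos.1 (hwidth.trans (h c.1 c.2))
  rw [Finset.mem_filter, Finset.mem_Icc, Finset.mem_Icc] at ha
  exact ⟨a, ha.1.1, ha.1.2, ha.2.2⟩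

theorem IsCorner.antichainWidth_eq_zero {p : ℕ} (h : IsCorner z p) {D : Finset (ℕ × ℕ)}
    (hD : IsStandard z D) (hp : (p, z p) ∉ D) : antichainWidth D (p, z p) = 0 := by
  obtain ⟨C, hCD, -, hCle, hcard⟩ := exists_card_eq_antichainWidth D (p, z p)
  rw [← hcard, Finset.card_eq_zero, Finset.eq_empty_iff_forall_notMem]
  intro c hc
  obtain ⟨a, ha, hac, hzac⟩ := hD.exists_le_of_mem (hCD hc)
  obtain ⟨hcp, hczp⟩ := Prod.le_def.1 (hCle c hc)
  obtain rfl := h.eq_of_le ha (hac.trans hcp) (hzac.trans hczp)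
  exact hp (Prod.ext (hcp.antisymm hac) (hczp.antisymm hzac) ▸ hCD hc)

/-- The sum of the values of the rank function of `z` on `[n] × [n]`, on which the induction over
raising swaps runs. -/
def rankSum (n : ℕ) (z : Equiv.Perm ℕ) : ℕ :=
  ∑ c ∈ Finset.Icc 1 n ×ˢ Finset.Icc 1 n, rnk z c.1 c.2

theorem IsRaisingSwap.rankSum_conjSwap_lt {p r : ℕ} (h : IsRaisingSwap z p r) (hp : p ≤ n) :
    rankSum n (conjSwap z p r) < rankSum n z := by
  have hzp := h.one_le_apply
  have hlt := h.apply_lt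
  have hpr := h.lt
  have hzpr := h.apply_lt_apply
  refine Finset.sum_lt_sum (fun c _ => ?_) ⟨(p, z p), ?_, ?_⟩
  · rw [h.rnk_eq_conjSwap_add c.1 c.2]
    omega
  · simp only [Finset.mem_product, Finset.mem_Icc]
    omega
  · change rnk (conjSwap z p r) p (z p) < rnk z p (z p)
    rw [h.rnk_eq_conjSwap_add p (z p), if_pos (by omega)]
    omega

end Standard

section LeadingMonomial

open MvPolynomial

variable {K : Type*} [Field K] {n : ℕ} {z : Equiv.Perm ℕ} {p r : ℕ}
  {f : MvPolynomial (SSVar n) K}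

theorem IsParam.paramEntry_eq_zero {g : ℕ → ℕ → K} {c : ℕ → K} (h : IsParam z g c)
    (hz : IsFPFInvolution z) {i j : ℕ} (hij : rnk z i j = 0) : paramEntry z g c i j = 0 := by
  rw [h.paramEntry_eq_sum (S := ∅) (by simp), Finset.sum_empty]
  intro a ha hai hzaj
  rw [rnk, Finset.card_eq_zero] at hij
  rw [← hij, Finset.mem_filter, Finset.mem_Icc, Finset.mem_Icc]
  exact ⟨⟨ha, hai⟩, hz.one_le_apply ha, hzaj⟩

theorem VanishesOnParam.of_X_mul_add (hz : IsFPFInvolution z) {v : SSVar n}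
    (hv : rnk z (box v).1 (box v).2 = 0) {f₁ f₀ : MvPolynomial (SSVar n) K}
    (hf : VanishesOnParam z (X v * f₁ + f₀)) : VanishesOnParam z f₀ := by
  intro g c hgc
  have hzero := hf g c hgc
  rwa [map_add, map_mul, eval_X, hgc.paramEntry_eq_zero hz hv, zero_mul, zero_add] at hzero

theorem IsCorner.rnk_conjSwap_eq_zero (h : IsCorner z p) (hr : IsRaisingSwap z p r) :
    rnk (conjSwap z p r) p (z p) = 0 := by
  have hrnk := hr.rnk_eq_conjSwap_add p (z p)
  rw [h.rnk_eq_one, if_pos ⟨⟨le_rfl, hr.lt⟩, le_rfl, hr.apply_lt_apply⟩] at hrnk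
  omega

theorem VanishesOnParam.eq_zero_of_forall_support_eq_zero (hf : VanishesOnParam z f)
    (hsupp : ∀ m ∈ f.support, m = 0) : f = 0 := by
  have hconst : f = C (f.coeff 0) :=
    totalDegree_eq_zero_iff_eq_C.1 ((totalDegree_eq_zero_iff _ _).2 fun m hm v => by
      rw [hsupp m hm, Finsupp.zero_apply])
  have hzero := hf 0 0 ⟨fun _ _ _ => rfl, fun _ _ => neg_zero.symm⟩
  rw [hconst, eval_C] at hzero
  rw [hconst, hzero, C_0]

theorem mem_support_and_eq_zero_of_mem_support_modMonomial {σ R : Type*} [CommSemiring R]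
    {f : MvPolynomial σ R} {v : σ} {m : σ →₀ ℕ}
    (hm : m ∈ (f.modMonomial (Finsupp.single v 1)).support) : m ∈ f.support ∧ m v = 0 := by
  rw [mem_support_iff] at hm
  have hle : ¬ Finsupp.single v 1 ≤ m := fun hle => hm (coeff_modMonomial_of_le f hle)
  rw [coeff_modMonomial_of_not_le f hle] at hm
  rw [Finsupp.single_le_iff] at hle
  exact ⟨mem_support_iff.2 hm, by omega⟩

/-- The part of `f` not divisible by the variable of the corner degenerates to a nonzero polynomial
vanishing on the parametrization of a raising swap of `z`, while its leading monomial stays standard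
there. -/
theorem IsCorner.modMonomial_eq_zero [Infinite K] (h : IsCorner z p) (hp : p ≤ n)
    (hswap : ∀ r, IsRaisingSwap z p r → ∀ g : MvPolynomial (SSVar n) K, g ≠ 0 →
      VanishesOnParam (conjSwap z p r) g →
        ¬ IsStandard (conjSwap z p r) (boxes ((revlex n).degree g)))
    (hf : VanishesOnParam z f) (hstd : ∀ m ∈ f.support, IsStandard z (boxes m)) :
    f.modMonomial (Finsupp.single (ssvar p (z p) hp h.one_le_apply h.apply_lt) 1) = 0 := by
  set u := ssvar p (z p) hp h.one_le_apply h.apply_lt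
  have hu : box u = (p, z p) := box_ssvar hp h.one_le_apply h.apply_lt
  by_contra hne
  obtain ⟨hm, hmu⟩ := mem_support_and_eq_zero_of_mem_support_modMonomial
    ((revlex n).degree_mem_support hne)
  have hwidth := h.antichainWidth_eq_zero (hstd _ hm) (by
    rw [← hu, box_mem_boxes]
    exact not_not.2 hmu)
  obtain ⟨r, hr, hrstd⟩ := h.exists_isRaisingSwap swap_mem_boxes fst_ne_snd_of_mem_boxes
    (hstd _ hm) hwidth
  refine hswap r hr _ hne ?_ hrstd
  refine VanishesOnParam.of_X_mul_add hr.isFPF_conjSwap (v := u) ?_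
    (f₁ := f.divMonomial (Finsupp.single u 1)) ?_
  · rw [hu]
    exact h.rnk_conjSwap_eq_zero hr
  · rw [divMonomial_add_modMonomial_single]
    exact hr.vanishesOnParam_conjSwap hf

theorem VanishesOnParam.eq_zero_of_isStandard [Infinite K] (hz : IsFPFInvolution z)
    (hswap : ∀ p ≤ n, ∀ r, IsRaisingSwap z p r → ∀ g : MvPolynomial (SSVar n) K, g ≠ 0 →
      VanishesOnParam (conjSwap z p r) g →
        ¬ IsStandard (conjSwap z p r) (boxes ((revlex n).degree g)))
    (hf : VanishesOnParam z f) (hstd : ∀ m ∈ f.support, IsStandard z (boxes m)) : f = 0 := by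
  by_cases hpair : ∃ a, 1 ≤ a ∧ a ≤ n ∧ z a ≤ n
  · obtain ⟨p, hp, hcorner⟩ := exists_isCorner hz hpair
    induction hd : f.totalDegree using Nat.strong_induction_on generalizing f with
    | _ d ih =>
      have hsplit := divMonomial_add_modMonomial_single f
        (ssvar p (z p) hp hcorner.one_le_apply hcorner.apply_lt)
      rw [hcorner.modMonomial_eq_zero hp (hswap p hp) hf hstd, add_zero] at hsplit
      set u := ssvar p (z p) hp hcorner.one_le_apply hcorner.apply_lt
      set f₁ := f.divMonomial (Finsupp.single u 1)
      by_contra hne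
      have hf₁ : f₁ ≠ 0 := by
        intro h
        rw [h, mul_zero] at hsplit
        exact hne hsplit.symm
      refine hf₁ (ih f₁.totalDegree ?_ ?_ (fun m hm => ?_) rfl)
      · rw [← hd, ← hsplit, totalDegree_mul_of_isDomain (X_ne_zero u) hf₁, totalDegree_X]
        omega
      · exact hcorner.vanishesOnParam_of_X_mul hp (by rwa [hsplit])
      · refine isLowerSet_isStandard_boxes z n (le_add_self : m ≤ Finsupp.single u 1 + m) ?_
        refine hstd _ ?_
        rwa [mem_support_iff, ← coeff_divMonomial, ← mem_support_iff]
  · refine hf.eq_zero_of_forall_support_eq_zero fun m hm => Finsupp.ext fun v => ?_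
    by_contra hv
    obtain ⟨a, ha, hav, hzav⟩ := (hstd m hm).exists_le_of_mem (box_mem_boxes.2 hv)
    have hbounds := box_bounds v
    exact hpair ⟨a, ha, by omega, by omega⟩

theorem VanishesOnParam.not_isStandard_degree [Infinite K] (hz : IsFPFInvolution z) (hne : f ≠ 0)
    (hf : VanishesOnParam z f) : ¬ IsStandard z (boxes ((revlex n).degree f)) := by
  induction hN : rankSum n z using Nat.strong_induction_on generalizing z f with
  | _ N ih =>
    intro hstd
    obtain ⟨g, hg, hgI, hgstd⟩ := exists_sub_mem_and_support_subset (revlex n)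
      (isLowerSet_isStandard_boxes z n)
      (fun m hm => exists_mem_IssIdeal_degree_eq (K := K) hz hm) hne hstd
    have hgvan : VanishesOnParam z g := fun a c hac => by
      have hdiff := vanishesOnParam_of_mem_IXss hz (IssIdeal_le_IXss z hgI) a c hac
      rwa [map_sub, hf a c hac, zero_sub, neg_eq_zero] at hdiff
    exact hg (hgvan.eq_zero_of_isStandard hz
      (fun p hp r hr g hg hgvan => ih _ (hN ▸ hr.rankSum_conjSwap_lt hp) hr.isFPF_conjSwap hg
        hgvan rfl) fun m hm => hgstd hm)

theorem not_isStandard_iff_exists_degree_eq [Infinite K] (hz : IsFPFInvolution z)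
    {I : Ideal (MvPolynomial (SSVar n) K)} (hle : IssIdeal K n z ≤ I) (hI : I ≤ IXss K n z)
    (m : SSVar n →₀ ℕ) :
    ¬ IsStandard z (boxes m) ↔ ∃ f ∈ I, f ≠ 0 ∧ (revlex n).degree f = m := by
  constructor
  · intro hm
    obtain ⟨f, hf, hdeg⟩ := exists_mem_IssIdeal_degree_eq (K := K) hz hm
    exact ⟨f, hle hf, hdeg⟩
  · rintro ⟨f, hf, hne, rfl⟩
    exact (vanishesOnParam_of_mem_IXss hz (hI hf)).not_isStandard_degree hz hne

end LeadingMonomial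

theorem statement6_general (K : Type*) [Field K] [Infinite K] (n : ℕ) (z : Equiv.Perm ℕ)
    (hz : IsFPFInvolution z) :
    JssIdeal K n z = initIdeal revlexLT (IssIdeal K n z) ∧
      JssIdeal K n z = initIdeal revlexLT (IXss K n z) :=
  ⟨JssIdeal_eq_initIdeal hz
      (not_isStandard_iff_exists_degree_eq hz le_rfl (IssIdeal_le_IXss z)),
    JssIdeal_eq_initIdeal hz
      (not_isStandard_iff_exists_degree_eq hz (IssIdeal_le_IXss z) le_rfl)⟩

/-- For `z ∈ FPF_n(I_n)`, with respect to the reverse lexicographic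
term order on `R_n`: `J^ss_z = init(I^ss_z) = init(I(X^ss_z))`. -/
theorem statement6 (K : Type*) [Field K] [IsAlgClosed K] (n : ℕ) (hn : 1 ≤ n)
    (z : Equiv.Perm ℕ) (hz : z ∈ FPFIn n) :
    JssIdeal K n z = initIdeal revlexLT (IssIdeal K n z) ∧
      JssIdeal K n z = initIdeal revlexLT (IXss K n z) :=
  statement6_general K n z (isFPFInvolution_of_mem_FPFIn hz)

end Paper
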